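/- 16·∫₀^∞ I₀(t)[K₀(t)]⁵ t dt = (4π^{5/2}/√3)·[ (√3/64)·(Γ(1/3)/√π)⁹·₄F₃(1/6,1/3,1/3,1/2; 2/3,5/6,5/6 | 1) − (16/3)·(√π/Γ(1/3))⁹·₄F₃(1/2,2/3,2/3,5/6; 7/6,7/6,4/3 | 1) ]. -/

import Mathlib

open Real MeasureTheory Set

/-- Modified Bessel function `I₀(t) = (1/π)∫₀^π exp(t cos θ) dθ`. -/
noncomputable def I0 (t : ℝ) : ℝ := (1 / π) * ∫ θ in (0:ℝ)..π, exp (t * cos θ)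

/-- Modified Bessel function `K₀(t) = ∫₀^∞ exp(−t cosh u) du`. -/
noncomputable def K0 (t : ℝ) : ℝ := ∫ u in Ioi (0:ℝ), exp (-(t * Real.cosh u))

/-- Rising factorial `(a)ₙ = a(a+1)⋯(a+n−1)`. -/
noncomputable def ris (a : ℝ) (n : ℕ) : ℝ := ∏ k ∈ Finset.range n, (a + k)

/-- Generalized hypergeometric series `ₚF_q(a; b | x)`. -/
noncomputable def pFq (a b : List ℝ) (x : ℝ) : ℝ :=
  ∑' n : ℕ, ((a.map fun p => ris p n).prod / (b.map fun q => ris q n).prod) * x ^ n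
    / (n.factorial : ℝ)

/-!
The functions `K₀²` and `I₀K₀` are Laplace transforms of `2 cosh u cosh v` and `2 cosh u sin φ`.
Shifting the `v`-contour by `iπ/2` shows that the analytic continuation of `K₀² + iπ I₀K₀` to the
positive imaginary axis is a Laplace transform with the kernel `2 cosh u sinh v`, hence real.
Turning the ray of integration of `∫ (K₀² + iπ I₀K₀)³ t dt` by a right angle therefore shows that
this integral is real, and its vanishing imaginary part is the sum rule
`3 ∫ I₀K₀⁵ t dt = π² ∫ (I₀K₀)³ t dt`.

Since `I₀(t)K₀(t) = (2 / π) ∫₀^{π/2} K₀(2 t sin θ) dθ`, writing each of the three factors `K₀` as a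
Gaussian mixture makes the integral over `t` elementary. Rational changes of variable turn what is
left into `∑ cₙ E[(1 - V)ⁿ]`, with `cₙ` the coefficients of `₂F₁(1/2, 1/2; 1)` and `V = X Y³` for
Beta variables `X`, `Y`. Comparing moments, `V` has the law of a product of two other Beta
variables, and the sum can be rearranged into `∑ cₘ' E[(1 - W)ᵐ]`, with `cₘ'` the coefficients of
`₂F₁(1/6, 1/3; 5/6)` and `W` again a product of two Beta variables. The connection formula expands
`₂F₁(1/6, 1/3; 5/6 | 1 - w)` at `w = 0`, and the moments of `W` turn its two terms into the two
`₄F₃` series.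
-/

open Filter Topology
open Complex (I)
open ENNReal (ofReal)
open ProbabilityTheory (beta beta_pos lintegral_betaPDF lintegral_betaPDF_eq_one)

/-! ### Moving a horizontal line of integration -/

section HorizontalShift

variable {E : Type*} [NormedAddCommGroup E] [NormedSpace ℂ E] {F : ℂ → E} {a b : ℝ} {g : ℝ → ℝ}

theorem integrable_horizontal_of_norm_le (hF : ∀ z : ℂ, z.im = a → DifferentiableAt ℂ F z)
    (hg : Integrable g) (hFg : ∀ s : ℝ, ‖F (s + a * I)‖ ≤ g s) :
    Integrable fun s : ℝ ↦ F (s + a * I) := by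
  have hcont : Continuous fun s : ℝ ↦ F (s + a * I) := continuous_iff_continuousAt.2 fun s ↦
    ContinuousAt.comp (f := fun s : ℝ ↦ (s + a * I : ℂ)) (hF _ (by simp)).continuousAt
      (by fun_prop)
  exact hg.mono' hcont.aestronglyMeasurable (.of_forall hFg)

theorem tendsto_vertical_integral_of_norm_le {l : Filter ℝ} (hg : Tendsto g l (𝓝 0))
    (hFg : ∀ᶠ s : ℝ in l, ∀ ψ ∈ uIcc a b, ‖F (s + ψ * I)‖ ≤ g s) :
    Tendsto (fun T : ℝ ↦ ∫ y in a..b, F (T + y * I)) l (𝓝 0) := by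
  have hlim : Tendsto (fun T ↦ g T * |b - a|) l (𝓝 0) := by simpa using hg.mul_const |b - a|
  exact squeeze_zero_norm' (hFg.mono fun T hT ↦ intervalIntegral.norm_integral_le_of_norm_le_const
    fun y hy ↦ hT y (uIoc_subset_uIcc hy)) hlim

theorem integral_horizontal_eq_of_norm_le [CompleteSpace E]
    (hF : ∀ z : ℂ, z.im ∈ uIcc a b → DifferentiableAt ℂ F z) (hg : Integrable g)
    (hg_zero : Tendsto g (cocompact ℝ) (𝓝 0))
    (hFg : ∀ s : ℝ, ∀ ψ ∈ uIcc a b, ‖F (s + ψ * I)‖ ≤ g s) :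
    ∫ s : ℝ, F (s + a * I) = ∫ s : ℝ, F (s + b * I) := by
  have hrect (T : ℝ) :
      (∫ s in (-T)..T, F (s + a * I)) - ∫ s in (-T)..T, F (s + b * I) =
        I • (∫ y in a..b, F ((-T : ℝ) + y * I)) - I • ∫ y in a..b, F (T + y * I) := by
    have h := Complex.integral_boundary_rect_eq_zero_of_differentiableOn F ⟨-T, a⟩ ⟨T, b⟩
      fun z hz ↦ (hF z (Complex.mem_reProdIm.1 hz).2).differentiableWithinAt
    rwa [sub_eq_zero, ← eq_sub_iff_add_eq] at h
  have hline {ψ : ℝ} (hψ : ψ ∈ uIcc a b) :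
      Tendsto (fun T : ℝ ↦ ∫ s in (-T)..T, F (s + ψ * I)) atTop (𝓝 (∫ s : ℝ, F (s + ψ * I))) :=
    intervalIntegral_tendsto_integral
      (integrable_horizontal_of_norm_le (fun z hz ↦ hF z (hz ▸ hψ)) hg fun s ↦ hFg s ψ hψ)
      tendsto_neg_atTop_atBot tendsto_id
  have hright := tendsto_vertical_integral_of_norm_le (hg_zero.mono_left atTop_le_cocompact)
    (.of_forall hFg)
  have hleft := (tendsto_vertical_integral_of_norm_le (hg_zero.mono_left atBot_le_cocompact)
    (.of_forall hFg)).comp tendsto_neg_atTop_atBot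
  have hsides := (hleft.const_smul I).sub (hright.const_smul I)
  rw [smul_zero, sub_zero] at hsides
  exact sub_eq_zero.1 <| tendsto_nhds_unique ((hline left_mem_uIcc).sub (hline right_mem_uIcc))
    (hsides.congr fun T ↦ (hrect T).symm)

end HorizontalShift

/-! ### Elementary estimates for hyperbolic and trigonometric functions -/

theorem exp_abs_div_two_le_cosh (u : ℝ) : exp |u| / 2 ≤ cosh u := by
  rw [← cosh_abs, cosh_eq]
  linarith [exp_pos (-|u|)]

theorem tendsto_cosh_cocompact : Tendsto cosh (cocompact ℝ) atTop :=
  tendsto_atTop_mono exp_abs_div_two_le_cosh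
    ((tendsto_exp_atTop.comp tendsto_norm_cocompact_atTop).atTop_div_const two_pos)

theorem integrable_exp_neg_mul_abs {p : ℝ} (hp : 0 < p) :
    Integrable fun u : ℝ ↦ exp (-p * |u|) := by
  rw [← integrableOn_univ, ← Iic_union_Ioi (a := (0 : ℝ))]
  refine IntegrableOn.union ?_ ?_
  · refine (integrableOn_exp_mul_Iic hp 0).congr_fun (fun u hu ↦ ?_) measurableSet_Iic
    simp only [abs_of_nonpos (mem_Iic.1 hu), neg_mul_neg]
  · refine (exp_neg_integrableOn_Ioi 0 hp).congr_fun (fun u hu ↦ ?_) measurableSet_Ioi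
    simp only [abs_of_pos (mem_Ioi.1 hu)]

theorem cosh_rpow_neg_le {p : ℝ} (hp : 0 ≤ p) (u : ℝ) :
    cosh u ^ (-p) ≤ 2 ^ p * exp (-p * |u|) :=
  calc cosh u ^ (-p) ≤ (exp |u| / 2) ^ (-p) :=
        rpow_le_rpow_of_nonpos (by positivity) (exp_abs_div_two_le_cosh u) (neg_nonpos.2 hp)
    _ = 2 ^ p * exp (-p * |u|) := by
        rw [div_rpow (exp_pos _).le zero_le_two, ← exp_mul, rpow_neg zero_le_two, div_inv_eq_mul,
          mul_comm, mul_comm |u|]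

theorem continuous_cosh_rpow (p : ℝ) : Continuous fun u ↦ cosh u ^ p :=
  continuous_cosh.rpow_const fun u ↦ .inl (cosh_pos u).ne'

theorem integrable_cosh_rpow_neg {p : ℝ} (hp : 0 < p) : Integrable fun u ↦ cosh u ^ (-p) := by
  refine ((integrable_exp_neg_mul_abs hp).const_mul (2 ^ p)).mono'
    (continuous_cosh_rpow _).aestronglyMeasurable (.of_forall fun u ↦ ?_)
  rw [norm_of_nonneg (rpow_nonneg (cosh_pos u).le _)]
  exact cosh_rpow_neg_le hp.le u

theorem exp_neg_le_rpow_neg {w p : ℝ} (hw : 0 < w) (hp₀ : 0 ≤ p) (hp₁ : p ≤ 1) :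
    exp (-w) ≤ w ^ (-p) := by
  rw [rpow_def_of_pos hw, exp_le_exp]
  have hlog : log w ≤ w := (log_le_sub_one_of_pos hw).trans (by linarith)
  rcases le_total (log w) 0 with _ | _ <;> nlinarith

theorem integrable_exp_neg_mul_cosh {c : ℝ} (hc : 0 < c) :
    Integrable fun u ↦ exp (-(c * cosh u)) := by
  refine ((integrable_cosh_rpow_neg one_pos).const_mul (c ^ (-1 : ℝ))).mono' (by fun_prop)
    (.of_forall fun u ↦ ?_)
  have hu := cosh_pos u
  rw [norm_of_nonneg (exp_pos _).le, ← mul_rpow hc.le hu.le]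
  exact exp_neg_le_rpow_neg (mul_pos hc hu) zero_le_one le_rfl

theorem tendsto_exp_neg_mul_cosh_cocompact {c : ℝ} (hc : 0 < c) :
    Tendsto (fun u ↦ exp (-(c * cosh u))) (cocompact ℝ) (𝓝 0) :=
  tendsto_exp_neg_atTop_nhds_zero.comp (tendsto_cosh_cocompact.const_mul_atTop hc)

theorem re_cosh_add_mul_I (s ψ : ℝ) : (Complex.cosh (s + ψ * I)).re = cosh s * cos ψ := by
  rw [Complex.cosh_add, Complex.cosh_mul_I, Complex.sinh_mul_I, ← Complex.ofReal_cosh,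
    ← Complex.ofReal_sinh, ← Complex.ofReal_cos, ← Complex.ofReal_sin]
  simp [-Complex.ofReal_cos, -Complex.ofReal_sin]

theorem intervalIntegrable_sin_rpow_neg_pi_div_two {p : ℝ} (hp₀ : 0 ≤ p) (hp₁ : p < 1) :
    IntervalIntegrable (fun θ ↦ sin θ ^ (-p)) volume 0 (π / 2) := by
  have hpow : IntervalIntegrable (fun θ : ℝ ↦ θ ^ (-p)) volume 0 (π / 2) :=
    intervalIntegral.intervalIntegrable_rpow' (by linarith)
  rw [intervalIntegrable_iff_integrableOn_Ioo_of_le (by positivity)] at hpow ⊢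
  refine (hpow.const_mul ((2 / π) ^ (-p))).mono'
    (Measurable.aestronglyMeasurable (by fun_prop)) ?_
  filter_upwards [ae_restrict_mem measurableSet_Ioo] with θ ⟨hθ₀, hθ₁⟩
  have hsin : 0 < sin θ := sin_pos_of_pos_of_lt_pi hθ₀ (by linarith)
  rw [norm_of_nonneg (by positivity), ← mul_rpow (by positivity) hθ₀.le]
  exact rpow_le_rpow_of_nonpos (by positivity) (mul_le_sin hθ₀.le hθ₁.le) (by linarith)

theorem intervalIntegrable_reflect {f : ℝ → ℝ} {a : ℝ} (hf : ∀ x, f (a - x) = f x)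
    (hi : IntervalIntegrable f volume 0 (a / 2)) : IntervalIntegrable f volume (a / 2) a := by
  have h := (hi.comp_sub_left a).symm
  simp only [hf] at h
  convert h using 1 <;> ring

theorem intervalIntegrable_sin_rpow_neg {p : ℝ} (hp₀ : 0 ≤ p) (hp₁ : p < 1) :
    IntervalIntegrable (fun θ ↦ sin θ ^ (-p)) volume 0 π :=
  have h := intervalIntegrable_sin_rpow_neg_pi_div_two hp₀ hp₁
  h.trans (intervalIntegrable_reflect (fun θ ↦ by rw [sin_pi_sub]) h)

theorem integral_eq_two_mul_integral_half {f : ℝ → ℝ} {a : ℝ} (hf : ∀ x, f (a - x) = f x)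
    (hi : IntervalIntegrable f volume 0 (a / 2)) :
    ∫ x in 0..a, f x = 2 * ∫ x in 0..a / 2, f x := by
  have hreflect : ∫ x in a / 2..a, f x = ∫ x in 0..a / 2, f x := by
    have h := intervalIntegral.integral_comp_sub_left (a := 0) (b := a / 2) f a
    simpa only [hf, sub_half, sub_zero] using h.symm
  rw [← intervalIntegral.integral_add_adjacent_intervals hi (intervalIntegrable_reflect hf hi),
    hreflect, two_mul]

/-! ### The product `I₀ K₀` as an integral of `K₀` -/

theorem integral_exp_neg_mul_cosh (ρ : ℝ) : ∫ u, exp (-(ρ * cosh u)) = 2 * K0 ρ := by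
  simpa only [cosh_abs, K0] using integral_comp_abs (f := fun u ↦ exp (-(ρ * cosh u)))

theorem integral_exp_neg_mul_cosh_add_mul_I {ρ α : ℝ} (hρ : 0 < ρ) (hα : |α| < π / 2) :
    ∫ u : ℝ, Complex.exp (-(ρ * Complex.cosh (u + α * I))) = 2 * K0 ρ := by
  have hcos : 0 < cos α := cos_pos_of_mem_Ioo (abs_lt.1 hα)
  have hbound : ∀ s : ℝ, ∀ ψ ∈ uIcc 0 α,
      ‖Complex.exp (-(ρ * Complex.cosh (s + ψ * I)))‖ ≤ exp (-((ρ * cos α) * cosh s)) := by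
    intro s ψ hψ
    have habs : |ψ| ≤ |α| := by simpa using abs_sub_left_of_mem_uIcc hψ
    have hcos_le : cos α ≤ cos ψ := by
      rw [← cos_abs α, ← cos_abs ψ]
      exact cos_le_cos_of_nonneg_of_le_pi (abs_nonneg ψ) (by linarith [pi_pos]) habs
    rw [Complex.norm_exp, Complex.neg_re, Complex.re_ofReal_mul, re_cosh_add_mul_I, exp_le_exp,
      neg_le_neg_iff, mul_assoc, mul_comm (cosh s)]
    have := cosh_pos s
    gcongr
  calc ∫ u : ℝ, Complex.exp (-(ρ * Complex.cosh (u + α * I)))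
      = ∫ u : ℝ, Complex.exp (-(ρ * Complex.cosh (u + (0 : ℝ) * I))) :=
        (integral_horizontal_eq_of_norm_le (F := fun z ↦ Complex.exp (-(ρ * Complex.cosh z)))
          (fun z _ ↦ by fun_prop) (integrable_exp_neg_mul_cosh (mul_pos hρ hcos))
          (tendsto_exp_neg_mul_cosh_cocompact (mul_pos hρ hcos)) hbound).symm
    _ = ∫ u : ℝ, ((exp (-(ρ * cosh u)) : ℝ) : ℂ) := by simp
    _ = 2 * K0 ρ := by
        rw [integral_complex_ofReal, integral_exp_neg_mul_cosh, Complex.ofReal_mul,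
          Complex.ofReal_ofNat]

theorem integral_exp_mul_cos (t : ℝ) : ∫ φ in 0..2 * π, exp (t * cos φ) = 2 * π * I0 t := by
  rw [integral_eq_two_mul_integral_half (fun φ ↦ by rw [cos_two_pi_sub])
    (Continuous.intervalIntegrable (by fun_prop) _ _), I0, mul_div_cancel_left₀ π two_ne_zero]
  field_simp

theorem integral_exp_mul_cos_add_mul_I (t u : ℝ) :
    ∫ φ in 0..2 * π, Complex.exp (t * Complex.cos (φ + u * I)) = 2 * π * I0 t := by
  have hperiodic (y : ℝ) : Complex.cos (2 * π + y * I) = Complex.cos (y * I) := by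
    rw [add_comm, Complex.cos_add_two_pi]
  have hreal : ∫ φ in 0..2 * π, Complex.exp (t * Complex.cos φ) = 2 * π * I0 t := by
    have h := congrArg Complex.ofReal (integral_exp_mul_cos t)
    rw [← intervalIntegral.integral_ofReal] at h
    simpa using h
  have hrect := Complex.integral_boundary_rect_eq_zero_of_differentiableOn
    (fun z ↦ Complex.exp (t * Complex.cos z)) ⟨0, 0⟩ ⟨2 * π, u⟩ (by fun_prop)
  simp only [Complex.ofReal_mul, Complex.ofReal_ofNat, Complex.ofReal_zero, zero_mul, add_zero,
    zero_add, hperiodic, add_sub_cancel_right] at hrect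
  rw [← hreal, sub_eq_zero.1 hrect]

theorem exp_neg_mul_cosh_mul_exp_mul_cos (t φ u : ℝ) :
    Complex.exp (-(t * Complex.cosh u)) * Complex.exp (t * Complex.cos (2 * φ + u * I)) =
      Complex.exp (-((2 * t * sin φ : ℝ) * Complex.cosh (u + (π / 2 - φ : ℝ) * I))) := by
  rw [← Complex.exp_add, Complex.cos_add, Complex.cosh_add, Complex.cos_mul_I, Complex.sin_mul_I,
    Complex.cosh_mul_I, Complex.sinh_mul_I, Complex.cos_two_mul, Complex.sin_two_mul]
  push_cast
  rw [Complex.cos_pi_div_two_sub, Complex.sin_pi_div_two_sub]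
  congr 1
  linear_combination (2 * t * Complex.cosh u) * Complex.cos_sq_add_sin_sq φ

theorem integrable_exp_neg_mul_sin_mul_cosh {t : ℝ} (ht : 0 < t) :
    Integrable (Function.uncurry fun u φ : ℝ ↦
        Complex.exp (-((2 * t * sin φ : ℝ) * Complex.cosh (u + (π / 2 - φ : ℝ) * I))))
      (volume.prod (volume.restrict (Ioo 0 π))) := by
  have hsin := (intervalIntegrable_iff_integrableOn_Ioo_of_le pi_pos.le).1
    (intervalIntegrable_sin_rpow_neg (p := 1 / 2) (by norm_num) (by norm_num))
  have hdom := ((integrable_cosh_rpow_neg (p := 1 / 4) (by norm_num)).mul_prod hsin).const_mul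
    ((2 * t) ^ (-(1 / 4) : ℝ))
  refine hdom.mono' (Continuous.aestronglyMeasurable (by unfold Function.uncurry; fun_prop)) ?_
  filter_upwards [Measure.quasiMeasurePreserving_snd.ae (ae_restrict_mem measurableSet_Ioo)]
    with ⟨u, φ⟩ hφ
  have hs : 0 < sin φ := sin_pos_of_mem_Ioo hφ
  have hc := cosh_pos u
  simp only [Function.uncurry_apply_pair]
  rw [Complex.norm_exp, Complex.neg_re, Complex.re_ofReal_mul, re_cosh_add_mul_I,
    cos_pi_div_two_sub]
  calc exp (-(2 * t * sin φ * (cosh u * sin φ)))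
      ≤ (2 * t * sin φ * (cosh u * sin φ)) ^ (-(1 / 4) : ℝ) :=
        exp_neg_le_rpow_neg (by positivity) (by norm_num) (by norm_num)
    _ = (2 * t * (cosh u * sin φ ^ (2 : ℝ))) ^ (-(1 / 4) : ℝ) := by
        rw [rpow_two]; ring_nf
    _ = (2 * t) ^ (-(1 / 4) : ℝ) * (cosh u ^ (-(1 / 4) : ℝ) * sin φ ^ (-(1 / 2) : ℝ)) := by
        rw [mul_rpow (by positivity) (by positivity), mul_rpow hc.le (by positivity),
          ← rpow_mul hs.le]
        norm_num

theorem integral_exp_neg_mul_sin_mul_cosh (t u : ℝ) :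
    ∫ φ in Ioo 0 π, Complex.exp (-((2 * t * sin φ : ℝ) * Complex.cosh (u + (π / 2 - φ : ℝ) * I))) =
      ((π * I0 t * exp (-(t * cosh u)) : ℝ) : ℂ) := by
  have hscale := intervalIntegral.integral_comp_mul_left (a := 0) (b := π) (c := 2)
    (fun φ : ℝ ↦ Complex.exp (t * Complex.cos (φ + u * I))) two_ne_zero
  simp only [Complex.ofReal_mul, Complex.ofReal_ofNat] at hscale
  simp_rw [← exp_neg_mul_cosh_mul_exp_mul_cos]
  rw [← integral_Ioc_eq_integral_Ioo, ← intervalIntegral.integral_of_le pi_pos.le,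
    intervalIntegral.integral_const_mul, hscale, mul_zero, integral_exp_mul_cos_add_mul_I,
    Complex.real_smul]
  push_cast
  ring

theorem ae_integral_exp_neg_mul_sin_mul_cosh {t : ℝ} (ht : 0 < t) :
    ∀ᵐ φ ∂volume.restrict (Ioo 0 π),
      ∫ u : ℝ, Complex.exp (-((2 * t * sin φ : ℝ) * Complex.cosh (u + (π / 2 - φ : ℝ) * I))) =
        ((2 * K0 (2 * t * sin φ) : ℝ) : ℂ) := by
  filter_upwards [ae_restrict_mem measurableSet_Ioo] with φ hφ
  have hs : 0 < sin φ := sin_pos_of_mem_Ioo hφ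
  rw [integral_exp_neg_mul_cosh_add_mul_I (by positivity)
    (abs_lt.2 ⟨by linarith [hφ.2], by linarith [hφ.1]⟩), Complex.ofReal_mul, Complex.ofReal_ofNat]

theorem integrableOn_K0_mul_sin_pi {t : ℝ} (ht : 0 < t) :
    IntegrableOn (fun θ ↦ K0 (2 * t * sin θ)) (Ioo 0 π) := by
  have h := ((integrable_exp_neg_mul_sin_mul_cosh ht).integral_prod_right.congr
    (ae_integral_exp_neg_mul_sin_mul_cosh ht)).re.const_mul (1 / 2)
  simpa [IntegrableOn] using h

theorem integrableOn_K0_mul_sin {t : ℝ} (ht : 0 < t) :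
    IntegrableOn (fun θ ↦ K0 (2 * t * sin θ)) (Ioo 0 (π / 2)) :=
  (integrableOn_K0_mul_sin_pi ht).mono_set (Ioo_subset_Ioo_right (by linarith [pi_pos]))

theorem integral_K0_mul_sin_pi {t : ℝ} (ht : 0 < t) :
    ∫ θ in Ioo 0 π, K0 (2 * t * sin θ) = π * (I0 t * K0 t) := by
  have hswap := integral_integral_swap (integrable_exp_neg_mul_sin_mul_cosh ht)
  rw [integral_congr_ae (ae_integral_exp_neg_mul_sin_mul_cosh ht)] at hswap
  simp_rw [integral_exp_neg_mul_sin_mul_cosh] at hswap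
  rw [integral_complex_ofReal, integral_complex_ofReal, Complex.ofReal_inj, integral_const_mul,
    integral_const_mul, integral_exp_neg_mul_cosh] at hswap
  linarith

theorem integral_K0_mul_sin {t : ℝ} (ht : 0 < t) :
    ∫ θ in Ioo 0 (π / 2), K0 (2 * t * sin θ) = π / 2 * (I0 t * K0 t) := by
  have hInt : IntervalIntegrable (fun θ ↦ K0 (2 * t * sin θ)) volume 0 (π / 2) :=
    (intervalIntegrable_iff_integrableOn_Ioo_of_le (by positivity)).2 (integrableOn_K0_mul_sin ht)
  have hfold := integral_eq_two_mul_integral_half (fun θ ↦ by rw [sin_pi_sub]) hInt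
  rw [intervalIntegral.integral_of_le pi_pos.le, intervalIntegral.integral_of_le (by positivity),
    integral_Ioc_eq_integral_Ioo, integral_Ioc_eq_integral_Ioo, integral_K0_mul_sin_pi ht] at hfold
  linarith

/-! ### Laplace transforms of variables with finite negative moments -/

/-- Polynomial decay `‖H z‖ ≤ C (re z)⁻ᵖ` in the right half-plane, for every exponent `0 < p < 1`
(with `C` depending on `p`): exponents near `0` control `H` at the origin and exponents near `1`
control it at infinity. -/
def HasRpowDecay (H : ℂ → ℂ) : Prop :=
  ∀ p ∈ Ioo (0 : ℝ) 1, ∃ C, 0 ≤ C ∧ ∀ z : ℂ, 0 < z.re → ‖H z‖ ≤ C * z.re ^ (-p)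

theorem HasRpowDecay.add {H₁ H₂ : ℂ → ℂ} (h₁ : HasRpowDecay H₁) (h₂ : HasRpowDecay H₂) :
    HasRpowDecay fun z ↦ H₁ z + H₂ z := by
  intro p hp
  obtain ⟨C₁, hC₁, hH₁⟩ := h₁ p hp
  obtain ⟨C₂, hC₂, hH₂⟩ := h₂ p hp
  refine ⟨C₁ + C₂, by positivity, fun z hz ↦ ?_⟩
  rw [add_mul]
  exact (norm_add_le _ _).trans (add_le_add (hH₁ z hz) (hH₂ z hz))

theorem HasRpowDecay.const_mul {H : ℂ → ℂ} (h : HasRpowDecay H) (c : ℂ) :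
    HasRpowDecay fun z ↦ c * H z := by
  intro p hp
  obtain ⟨C, hC, hH⟩ := h p hp
  refine ⟨‖c‖ * C, by positivity, fun z hz ↦ ?_⟩
  rw [norm_mul, mul_assoc]
  gcongr
  exact hH z hz

/-- An almost everywhere positive random variable whose moments of order `-p`, `0 < p < 1`, are
finite; `μ` need not be finite. -/
structure HasNegMoments {Ω : Type*} [MeasurableSpace Ω] (X : Ω → ℝ) (μ : Measure Ω) : Prop where
  measurable : Measurable X
  pos : ∀ᵐ ω ∂μ, 0 < X ω
  integrable_rpow_neg : ∀ p ∈ Ioo (0 : ℝ) 1, Integrable (fun ω ↦ X ω ^ (-p)) μ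

namespace HasNegMoments

variable {Ω : Type*} [MeasurableSpace Ω] {X : Ω → ℝ} {μ : Measure Ω}

theorem ae_norm_exp_le (h : HasNegMoments X μ) {p : ℝ} (hp : p ∈ Ioo (0 : ℝ) 1) {z : ℂ}
    (hz : 0 < z.re) : ∀ᵐ ω ∂μ, ‖Complex.exp (-(z * X ω))‖ ≤ X ω ^ (-p) * z.re ^ (-p) := by
  filter_upwards [h.pos] with ω hω
  rw [Complex.norm_exp, Complex.neg_re, Complex.re_mul_ofReal, mul_comm (X ω ^ (-p)),
    ← mul_rpow hz.le hω.le]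
  exact exp_neg_le_rpow_neg (by positivity) hp.1.le hp.2.le

theorem integrable_exp (h : HasNegMoments X μ) {z : ℂ} (hz : 0 < z.re) :
    Integrable (fun ω ↦ Complex.exp (-(z * X ω))) μ := by
  have hhalf : (1 / 2 : ℝ) ∈ Ioo 0 1 := by norm_num
  have hX := h.measurable
  exact ((h.integrable_rpow_neg _ hhalf).mul_const _).mono'
    (Measurable.aestronglyMeasurable (by fun_prop)) (h.ae_norm_exp_le hhalf hz)

theorem integrable_exp_ofReal (h : HasNegMoments X μ) {t : ℝ} (ht : 0 < t) :
    Integrable (fun ω ↦ exp (-(t * X ω))) μ := by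
  simpa [← Complex.ofReal_mul, ← Complex.ofReal_neg, Complex.exp_ofReal_re] using
    (h.integrable_exp (z := t) (by simpa)).re

theorem hasRpowDecay_laplace (h : HasNegMoments X μ) :
    HasRpowDecay fun z ↦ ∫ ω, Complex.exp (-(z * X ω)) ∂μ := by
  refine fun p hp ↦ ⟨∫ ω, X ω ^ (-p) ∂μ,
    integral_nonneg_of_ae (h.pos.mono fun ω hω ↦ rpow_nonneg hω.le _), fun z hz ↦ ?_⟩
  rw [← integral_mul_const]
  exact norm_integral_le_of_norm_le ((h.integrable_rpow_neg p hp).mul_const _)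
    (h.ae_norm_exp_le hp hz)

theorem differentiableAt_laplace (h : HasNegMoments X μ) {z : ℂ} (hz : 0 < z.re) :
    DifferentiableAt ℂ (fun z ↦ ∫ ω, Complex.exp (-(z * X ω)) ∂μ) z := by
  have hmgf : (fun z ↦ ∫ ω, Complex.exp (-(z * X ω)) ∂μ) =
      ProbabilityTheory.complexMGF X μ ∘ Neg.neg := by
    funext z
    simp [ProbabilityTheory.complexMGF]
  have hsub : Iio 0 ⊆ ProbabilityTheory.integrableExpSet X μ := fun x hx ↦ by
    simpa [ProbabilityTheory.integrableExpSet] using h.integrable_exp_ofReal (neg_pos.2 hx)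
  have hmem : (-z).re ∈ interior (ProbabilityTheory.integrableExpSet X μ) :=
    interior_maximal hsub isOpen_Iio (by simpa using hz)
  have hnhds := (isOpen_interior.preimage Complex.continuous_re).mem_nhds hmem
  rw [hmgf]
  exact ((ProbabilityTheory.differentiableOn_complexMGF _ hmem).differentiableAt hnhds).comp z
    differentiableAt_id.neg

end HasNegMoments

theorem exp_div_four_le_sinh {u : ℝ} (hu : 1 ≤ u) : exp u / 4 ≤ sinh u := by
  rw [sinh_eq]
  have hneg : exp (-u) ≤ 1 := exp_le_one_iff.2 (by linarith)
  linarith [add_one_le_exp u]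

theorem integrableOn_sinh_rpow_neg {p : ℝ} (hp₀ : 0 < p) (hp₁ : p < 1) :
    IntegrableOn (fun u ↦ sinh u ^ (-p)) (Ioi 0) := by
  have hmeas : Measurable fun u : ℝ ↦ sinh u ^ (-p) := by fun_prop
  have hnear : IntegrableOn (fun u : ℝ ↦ u ^ (-p)) (Ioc 0 1) :=
    (intervalIntegrable_iff_integrableOn_Ioc_of_le zero_le_one).1
      (intervalIntegral.intervalIntegrable_rpow' (by linarith))
  have hfar := (exp_neg_integrableOn_Ioi 1 hp₀).const_mul (4 ^ p)
  rw [← Ioc_union_Ioi_eq_Ioi (zero_le_one' ℝ)]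
  refine IntegrableOn.union (hnear.mono' hmeas.aestronglyMeasurable ?_)
    (hfar.mono' hmeas.aestronglyMeasurable ?_)
  · filter_upwards [ae_restrict_mem measurableSet_Ioc] with u ⟨hu, _⟩
    rw [norm_of_nonneg (rpow_nonneg (sinh_nonneg_iff.2 hu.le) _)]
    exact rpow_le_rpow_of_nonpos hu (self_le_sinh_iff.2 hu.le) (by linarith)
  · filter_upwards [ae_restrict_mem measurableSet_Ioi] with u (hu : 1 < u)
    rw [norm_of_nonneg (rpow_nonneg (sinh_nonneg_iff.2 (by linarith)) _)]
    calc sinh u ^ (-p) ≤ (exp u / 4) ^ (-p) :=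
          rpow_le_rpow_of_nonpos (by positivity) (exp_div_four_le_sinh hu.le) (by linarith)
      _ = 4 ^ p * exp (-p * u) := by
          rw [div_rpow (exp_pos _).le zero_le_four, ← exp_mul, rpow_neg zero_le_four,
            div_inv_eq_mul, mul_comm, mul_comm u]

theorem hasNegMoments_cosh_mul {S : Set ℝ} (hS : MeasurableSet S) {f : ℝ → ℝ} (hf : Measurable f)
    (hpos : ∀ x ∈ S, 0 < f x)
    (hInt : ∀ p ∈ Ioo (0 : ℝ) 1, IntegrableOn (fun x ↦ f x ^ (-p)) S) :
    HasNegMoments (fun ω : ℝ × ℝ ↦ 2 * cosh ω.1 * f ω.2)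
      ((volume.restrict (Ioi 0)).prod (volume.restrict S)) := by
  have hae : ∀ᵐ ω ∂((volume.restrict (Ioi (0 : ℝ))).prod (volume.restrict S)), 0 < f ω.2 :=
    Measure.quasiMeasurePreserving_snd.ae ((ae_restrict_mem hS).mono hpos)
  refine ⟨by fun_prop, ?_, fun p hp ↦ ?_⟩
  · filter_upwards [hae] with ω hω
    have := cosh_pos ω.1
    positivity
  · have hprod := (((integrable_cosh_rpow_neg hp.1).integrableOn (s := Ioi 0)).mul_prod
      (hInt p hp)).const_mul (2 ^ (-p))
    refine hprod.congr ?_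
    filter_upwards [hae] with ω hω
    have := cosh_pos ω.1
    rw [mul_rpow (by positivity) hω.le, mul_rpow zero_le_two this.le, mul_assoc]

/-- The Laplace transform of `(u, x) ↦ 2 cosh u · f x` on `(0, ∞) × S`; the products of Bessel
functions needed here have this form with `f` one of `cosh`, `sinh`, `sin`. -/
noncomputable def coshLaplace (f : ℝ → ℝ) (S : Set ℝ) (z : ℂ) : ℂ :=
  ∫ ω, Complex.exp (-(z * (2 * cosh ω.1 * f ω.2 : ℝ)))
    ∂((volume.restrict (Ioi 0)).prod (volume.restrict S))

theorem coshLaplace_ofReal (f : ℝ → ℝ) (S : Set ℝ) (t : ℝ) :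
    coshLaplace f S t = ((∫ ω, exp (-(t * (2 * cosh ω.1 * f ω.2)))
      ∂((volume.restrict (Ioi 0)).prod (volume.restrict S)) : ℝ) : ℂ) := by
  rw [coshLaplace, ← integral_complex_ofReal]
  push_cast
  rfl

theorem hasNegMoments_cosh_mul_cosh : HasNegMoments (fun ω : ℝ × ℝ ↦ 2 * cosh ω.1 * cosh ω.2)
    ((volume.restrict (Ioi 0)).prod (volume.restrict (Ioi 0))) :=
  hasNegMoments_cosh_mul measurableSet_Ioi measurable_cosh (fun x _ ↦ cosh_pos x)
    fun _ hp ↦ (integrable_cosh_rpow_neg hp.1).integrableOn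

theorem hasNegMoments_cosh_mul_sinh : HasNegMoments (fun ω : ℝ × ℝ ↦ 2 * cosh ω.1 * sinh ω.2)
    ((volume.restrict (Ioi 0)).prod (volume.restrict (Ioi 0))) :=
  hasNegMoments_cosh_mul measurableSet_Ioi measurable_sinh (fun _ hx ↦ sinh_pos_iff.2 hx)
    fun _ hp ↦ integrableOn_sinh_rpow_neg hp.1 hp.2

theorem hasNegMoments_cosh_mul_sin : HasNegMoments (fun ω : ℝ × ℝ ↦ 2 * cosh ω.1 * sin ω.2)
    ((volume.restrict (Ioi 0)).prod (volume.restrict (Ioo 0 (π / 2)))) :=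
  hasNegMoments_cosh_mul measurableSet_Ioo measurable_sin
    (fun _ hx ↦ sin_pos_of_pos_of_lt_pi hx.1 (by linarith [hx.2, pi_pos])) fun _ hp ↦
    (intervalIntegrable_iff_integrableOn_Ioo_of_le (by positivity)).1
      (intervalIntegrable_sin_rpow_neg_pi_div_two hp.1.le hp.2)

/-! ### The function `K₀² + iπ I₀K₀` and its quarter turn -/

theorem integrable_exp_neg_mul_cosh_mul_cosh {c : ℝ} (hc : 0 < c) :
    Integrable fun ω : ℝ × ℝ ↦ exp (-(c * (cosh ω.1 * cosh ω.2))) := by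
  have hcosh := integrable_cosh_rpow_neg one_pos
  refine ((hcosh.mul_prod hcosh).const_mul (c ^ (-1 : ℝ))).mono'
    (Continuous.aestronglyMeasurable (by fun_prop)) (.of_forall fun ω ↦ ?_)
  have h₁ := cosh_pos ω.1
  have h₂ := cosh_pos ω.2
  rw [norm_of_nonneg (exp_pos _).le, ← mul_rpow h₁.le h₂.le, ← mul_rpow hc.le (by positivity)]
  exact exp_neg_le_rpow_neg (by positivity) zero_le_one le_rfl

theorem two_mul_cosh_sub_mul_cosh (x q : ℝ) :
    2 * (cosh (x - q) * cosh q) = cosh x + cosh (x - 2 * q) := by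
  have hadd := cosh_add (x - q) q
  have hsub := cosh_sub (x - q) q
  rw [sub_add_cancel] at hadd
  rw [show x - q - q = x - 2 * q by ring] at hsub
  linarith

theorem integral_exp_neg_mul_cosh_sub_two_mul (t x : ℝ) :
    ∫ q, exp (-(t * cosh (x - 2 * q))) = K0 t := by
  rw [Measure.integral_comp_mul_left (fun q ↦ exp (-(t * cosh (x - q)))) 2,
    integral_sub_left_eq_self (fun q ↦ exp (-(t * cosh q))) volume x, integral_exp_neg_mul_cosh]
  simp

theorem integral_integral_exp_neg_mul_cosh_mul_cosh {t : ℝ} (ht : 0 < t) :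
    ∫ q, ∫ x, exp (-(2 * t * (cosh x * cosh q))) = 2 * K0 t ^ 2 := by
  have hInt : Integrable (fun ω : ℝ × ℝ ↦ exp (-(2 * t * (cosh (ω.2 - ω.1) * cosh ω.1)))) := by
    simp_rw [mul_comm (cosh (_ - _))]
    exact (measurePreserving_prod_sub (volume : Measure ℝ) volume).integrable_comp_of_integrable
      (integrable_exp_neg_mul_cosh_mul_cosh (c := 2 * t) (by positivity))
  calc ∫ q, ∫ x, exp (-(2 * t * (cosh x * cosh q)))
      = ∫ q, ∫ x, exp (-(2 * t * (cosh (x - q) * cosh q))) := by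
        congr 1 with q
        exact (integral_sub_right_eq_self (fun x ↦ exp (-(2 * t * (cosh x * cosh q)))) q).symm
    _ = ∫ x, ∫ q, exp (-(2 * t * (cosh (x - q) * cosh q))) := integral_integral_swap hInt
    _ = ∫ x, ∫ q, exp (-(t * cosh x)) * exp (-(t * cosh (x - 2 * q))) := by
        congr! 4 with x q
        rw [← exp_add]
        congr 1
        linear_combination -t * two_mul_cosh_sub_mul_cosh x q
    _ = 2 * K0 t ^ 2 := by
        simp_rw [integral_const_mul, integral_exp_neg_mul_cosh_sub_two_mul, integral_mul_const,
          integral_exp_neg_mul_cosh]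
        ring

theorem two_mul_coshLaplace_cosh_ofReal {t : ℝ} (ht : 0 < t) :
    2 * coshLaplace cosh (Ioi 0) t = (K0 t ^ 2 : ℝ) := by
  have hhalf (q : ℝ) : ∫ x, exp (-(2 * t * (cosh x * cosh q))) =
      2 * ∫ x in Ioi 0, exp (-(t * (2 * cosh x * cosh q))) := by
    rw [← integral_comp_abs (f := fun x ↦ exp (-(t * (2 * cosh x * cosh q))))]
    congr! 3 with x
    rw [cosh_abs]
    ring
  have hhalf' : ∫ q, ∫ x in Ioi 0, exp (-(t * (2 * cosh x * cosh q))) =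
      2 * ∫ q in Ioi 0, ∫ x in Ioi 0, exp (-(t * (2 * cosh x * cosh q))) := by
    rw [← integral_comp_abs (f := fun q ↦ ∫ x in Ioi 0, exp (-(t * (2 * cosh x * cosh q))))]
    simp only [cosh_abs]
  have hK := integral_integral_exp_neg_mul_cosh_mul_cosh ht
  simp_rw [hhalf] at hK
  rw [integral_const_mul, hhalf'] at hK
  rw [coshLaplace_ofReal,
    integral_prod_symm _ (hasNegMoments_cosh_mul_cosh.integrable_exp_ofReal ht)]
  norm_cast
  linarith

theorem two_mul_coshLaplace_sin_ofReal {t : ℝ} (ht : 0 < t) :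
    2 * coshLaplace sin (Ioo 0 (π / 2)) t = (π * (I0 t * K0 t) : ℝ) := by
  have hK : ∫ θ in Ioo 0 (π / 2), ∫ u in Ioi 0, exp (-(t * (2 * cosh u * sin θ))) =
      π / 2 * (I0 t * K0 t) := by
    rw [← integral_K0_mul_sin ht]
    congr! 2 with θ
    rw [K0]
    congr! 4
    ring
  rw [coshLaplace_ofReal,
    integral_prod_symm _ (hasNegMoments_cosh_mul_sin.integrable_exp_ofReal ht), hK]
  push_cast
  ring

section QuarterTurn

variable {z : ℂ}

theorem sinh_add_mul_I (s ψ : ℝ) :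
    Complex.sinh (s + ψ * I) = (sinh s * cos ψ : ℝ) + (cosh s * sin ψ : ℝ) * I := by
  rw [Complex.sinh_add, Complex.cosh_mul_I, Complex.sinh_mul_I]
  push_cast
  ring

theorem norm_exp_I_mul_sinh_le {m s ψ : ℝ} (hre : m ≤ z.re) (him : m ≤ z.im) (hm : 0 ≤ m)
    (hs : 0 ≤ s) (hψ : ψ ∈ Icc 0 (π / 2)) :
    ‖Complex.exp (I * z * Complex.sinh (s + ψ * I))‖ ≤ exp (-(m * s)) := by
  have hsin : 0 ≤ sin ψ := sin_nonneg_of_nonneg_of_le_pi hψ.1 (by linarith [hψ.2, pi_pos])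
  have hcos : 0 ≤ cos ψ := cos_nonneg_of_neg_pi_div_two_le_of_le (by linarith [hψ.1, pi_pos]) hψ.2
  have hone : 1 ≤ cos ψ + sin ψ := by nlinarith [sin_sq_add_cos_sq ψ]
  have hsinh : s ≤ sinh s := self_le_sinh_iff.2 hs
  have hcosh : s ≤ cosh s := hsinh.trans (sinh_lt_cosh s).le
  rw [Complex.norm_exp, sinh_add_mul_I, exp_le_exp]
  calc (I * z * ((sinh s * cos ψ : ℝ) + (cosh s * sin ψ : ℝ) * I)).re
      = -(z.im * sinh s * cos ψ + z.re * cosh s * sin ψ) := by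
        simp only [Complex.mul_re, Complex.mul_im, Complex.add_re, Complex.add_im,
          Complex.ofReal_re, Complex.ofReal_im, Complex.I_re, Complex.I_im]
        ring
    _ ≤ -(m * s * cos ψ + m * s * sin ψ) := by gcongr <;> linarith
    _ ≤ -(m * s) := by nlinarith [mul_nonneg hm hs]

theorem integral_exp_I_mul_sinh_boundary_rect (z : ℂ) (T : ℝ) :
    (∫ s in 0..T, Complex.exp (I * z * sinh s)) - (∫ s in 0..T, Complex.exp (-(z * cosh s))) =
      I * (∫ θ in 0..π / 2, Complex.exp (-(z * sin θ))) -
        I * ∫ θ in 0..π / 2, Complex.exp (I * z * Complex.sinh (T + θ * I)) := by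
  have hrect := Complex.integral_boundary_rect_eq_zero_of_differentiableOn
    (fun w ↦ Complex.exp (I * z * Complex.sinh w)) ⟨0, 0⟩ ⟨T, π / 2⟩ (by fun_prop)
  have hbottom (s : ℝ) : I * z * Complex.sinh (s + (0 : ℝ) * I) = I * z * sinh s := by simp
  have htop (s : ℝ) : I * z * Complex.sinh (s + (π / 2 : ℝ) * I) = -(z * cosh s) := by
    rw [sinh_add_mul_I, cos_pi_div_two, sin_pi_div_two]
    push_cast
    linear_combination z * Complex.cosh s * Complex.I_mul_I
  have hleft (θ : ℝ) : I * z * Complex.sinh ((0 : ℝ) + θ * I) = -(z * sin θ) := by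
    rw [sinh_add_mul_I, sinh_zero, cosh_zero]
    push_cast
    linear_combination z * Complex.sin θ * Complex.I_mul_I
  simp only [hbottom, htop, hleft, smul_eq_mul] at hrect
  linear_combination hrect

theorem integrableOn_exp_I_mul_sinh (him : 0 < z.im) :
    IntegrableOn (fun u : ℝ ↦ Complex.exp (I * z * sinh u)) (Ioi 0) := by
  refine (exp_neg_integrableOn_Ioi 0 him).mono' (Continuous.aestronglyMeasurable (by fun_prop)) ?_
  filter_upwards [ae_restrict_mem measurableSet_Ioi] with u (hu : 0 < u)
  rw [Complex.norm_exp, Complex.re_mul_ofReal, Complex.I_mul_re, exp_le_exp]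
  nlinarith [self_le_sinh_iff.2 hu.le]

theorem integrableOn_exp_neg_mul_cosh (hre : 0 < z.re) :
    IntegrableOn (fun u : ℝ ↦ Complex.exp (-(z * cosh u))) (Ioi 0) := by
  refine ((integrable_exp_neg_mul_cosh hre).mono' (Continuous.aestronglyMeasurable (by fun_prop))
    (.of_forall fun u ↦ ?_)).integrableOn
  rw [Complex.norm_exp, Complex.neg_re, Complex.re_mul_ofReal]

theorem integral_exp_I_mul_sinh (hre : 0 < z.re) (him : 0 < z.im) :
    ∫ u : ℝ in Ioi 0, Complex.exp (I * z * sinh u) =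
      (∫ u : ℝ in Ioi 0, Complex.exp (-(z * cosh u))) +
        I * ∫ θ : ℝ in Ioo 0 (π / 2), Complex.exp (-(z * sin θ)) := by
  have hm : 0 < min z.re z.im := lt_min hre him
  have hside : Tendsto (fun T : ℝ ↦ ∫ θ in 0..π / 2,
      Complex.exp (I * z * Complex.sinh (T + θ * I))) atTop (𝓝 0) := by
    refine tendsto_vertical_integral_of_norm_le
      (F := fun w ↦ Complex.exp (I * z * Complex.sinh w))
      (tendsto_exp_neg_atTop_nhds_zero.comp (tendsto_id.const_mul_atTop hm)) ?_
    filter_upwards [eventually_ge_atTop 0] with T hT ψ hψ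
    rw [uIcc_of_le (by positivity)] at hψ
    exact norm_exp_I_mul_sinh_le (min_le_left _ _) (min_le_right _ _) hm.le hT hψ
  have hsinh := intervalIntegral_tendsto_integral_Ioi 0 (integrableOn_exp_I_mul_sinh him) tendsto_id
  have hcosh := intervalIntegral_tendsto_integral_Ioi 0 (integrableOn_exp_neg_mul_cosh hre)
    tendsto_id
  have hlim := tendsto_nhds_unique (hsinh.sub hcosh)
    (((hside.const_mul I).const_sub _).congr
      fun T ↦ (integral_exp_I_mul_sinh_boundary_rect z T).symm)
  rw [intervalIntegral.integral_of_le (by positivity), integral_Ioc_eq_integral_Ioo] at hlim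
  linear_combination hlim

theorem coshLaplace_sinh_neg_I_mul (hre : 0 < z.re) (him : 0 < z.im) :
    coshLaplace sinh (Ioi 0) (-I * z) =
      coshLaplace cosh (Ioi 0) z + I * coshLaplace sin (Ioo 0 (π / 2)) z := by
  have hsinh := hasNegMoments_cosh_mul_sinh.integrable_exp (z := -I * z) (by simpa using him)
  have hcosh := hasNegMoments_cosh_mul_cosh.integrable_exp hre
  have hsin := hasNegMoments_cosh_mul_sin.integrable_exp hre
  rw [coshLaplace, coshLaplace, coshLaplace, integral_prod _ hsinh, integral_prod _ hcosh,
    integral_prod _ hsin, ← integral_const_mul,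
    ← integral_add hcosh.integral_prod_left (hsin.integral_prod_left.const_mul I)]
  congr 1 with v
  have := cosh_pos v
  have hquarter := integral_exp_I_mul_sinh (z := (2 * cosh v : ℝ) * z)
    (by rw [Complex.re_ofReal_mul]; positivity) (by rw [Complex.im_ofReal_mul]; positivity)
  push_cast at hquarter ⊢
  convert hquarter using 6 <;> ring_nf

end QuarterTurn

/-- The analytic continuation of `K₀² + iπ I₀K₀` from the positive half-line to the right
half-plane. -/
noncomputable def besselSq (z : ℂ) : ℂ :=
  2 * coshLaplace cosh (Ioi 0) z + 2 * I * coshLaplace sin (Ioo 0 (π / 2)) z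

/-- The analytic continuation of `z ↦ besselSq (I * z)` to the right half-plane; unlike `besselSq`
it is real on the positive half-line. -/
noncomputable def besselSqRotated (z : ℂ) : ℂ :=
  2 * coshLaplace sinh (Ioi 0) z

theorem besselSq_eq_besselSqRotated {z : ℂ} (hre : 0 < z.re) (him : 0 < z.im) :
    besselSq z = besselSqRotated (-I * z) := by
  rw [besselSqRotated, coshLaplace_sinh_neg_I_mul hre him, besselSq]
  ring

theorem besselSq_ofReal {t : ℝ} (ht : 0 < t) :
    besselSq t = (K0 t ^ 2 : ℝ) + (π * (I0 t * K0 t) : ℝ) * I := by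
  rw [besselSq, two_mul_coshLaplace_cosh_ofReal ht, mul_right_comm,
    two_mul_coshLaplace_sin_ofReal ht]

theorem besselSqRotated_ofReal_im (t : ℝ) : (besselSqRotated t).im = 0 := by
  simp [besselSqRotated, coshLaplace_ofReal]

theorem differentiableAt_besselSq {z : ℂ} (hz : 0 < z.re) : DifferentiableAt ℂ besselSq z :=
  ((hasNegMoments_cosh_mul_cosh.differentiableAt_laplace hz).const_mul 2).add
    ((hasNegMoments_cosh_mul_sin.differentiableAt_laplace hz).const_mul (2 * I))

theorem differentiableAt_besselSqRotated {z : ℂ} (hz : 0 < z.re) :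
    DifferentiableAt ℂ besselSqRotated z :=
  (hasNegMoments_cosh_mul_sinh.differentiableAt_laplace hz).const_mul 2

theorem hasRpowDecay_besselSq : HasRpowDecay besselSq :=
  (hasNegMoments_cosh_mul_cosh.hasRpowDecay_laplace.const_mul 2).add
    (hasNegMoments_cosh_mul_sin.hasRpowDecay_laplace.const_mul (2 * I))

theorem hasRpowDecay_besselSqRotated : HasRpowDecay besselSqRotated :=
  hasNegMoments_cosh_mul_sinh.hasRpowDecay_laplace.const_mul 2

/-! ### The sum rule `3 ∫ I₀K₀⁵ t dt = π² ∫ (I₀K₀)³ t dt` -/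

section ExpSubstitution

variable {E : Type*} [NormedAddCommGroup E] [NormedSpace ℝ E] (f : ℝ → E)

theorem integrableOn_Ioi_iff_integrable_exp_smul :
    IntegrableOn f (Ioi 0) ↔ Integrable fun s ↦ exp s • f (exp s) := by
  have h := integrableOn_image_iff_integrableOn_abs_deriv_smul MeasurableSet.univ
    (fun x _ ↦ (hasDerivAt_exp x).hasDerivWithinAt) exp_injective.injOn f
  simpa only [image_univ, range_exp, integrableOn_univ, abs_exp] using h

theorem integral_Ioi_eq_integral_exp_smul : ∫ t in Ioi 0, f t = ∫ s, exp s • f (exp s) := by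
  have h := integral_image_eq_integral_abs_deriv_smul MeasurableSet.univ
    (fun x _ ↦ (hasDerivAt_exp x).hasDerivWithinAt) exp_injective.injOn f
  simpa only [image_univ, range_exp, setIntegral_univ, abs_exp] using h

end ExpSubstitution

theorem one_half_le_cos {ψ : ℝ} (hψ : |ψ| ≤ π / 3) : 1 / 2 ≤ cos ψ := by
  rw [← cos_abs, ← cos_pi_div_three]
  exact cos_le_cos_of_nonneg_of_le_pi (abs_nonneg ψ) (by linarith [pi_pos]) hψ

theorem exp_div_two_le_re_exp {ψ : ℝ} (hψ : |ψ| ≤ π / 3) (s : ℝ) :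
    exp s / 2 ≤ (Complex.exp (s + ψ * I)).re := by
  simp only [Complex.exp_re, Complex.add_re, Complex.add_im, Complex.re_ofReal_mul,
    Complex.im_ofReal_mul, Complex.ofReal_re, Complex.ofReal_im, Complex.I_re, Complex.I_im,
    mul_zero, add_zero, zero_add, mul_one]
  nlinarith [exp_pos s, one_half_le_cos hψ]

namespace HasRpowDecay

variable {H : ℂ → ℂ}

theorem exists_norm_pow_three_mul_exp_le_exp (h : HasRpowDecay H) {p : ℝ}
    (hp : p ∈ Ioo (0 : ℝ) 1) :
    ∃ C, 0 ≤ C ∧ ∀ (s : ℝ) (z : ℂ), exp s / 2 ≤ z.re →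
      ‖H z‖ ^ 3 * exp (2 * s) ≤ C * exp ((2 - 3 * p) * s) := by
  obtain ⟨C, hC, hH⟩ := h p hp
  refine ⟨(C * 2 ^ p) ^ 3, by positivity, fun s z hz ↦ ?_⟩
  have hre : 0 < z.re := (by positivity : 0 < exp s / 2).trans_le hz
  have hnorm : ‖H z‖ ≤ C * 2 ^ p * exp (-p * s) :=
    calc ‖H z‖ ≤ C * z.re ^ (-p) := hH z hre
      _ ≤ C * (exp s / 2) ^ (-p) := by
          gcongr ?_ * ?_
          exact rpow_le_rpow_of_nonpos (by positivity) hz (by linarith [hp.1])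
      _ = C * 2 ^ p * exp (-p * s) := by
          rw [div_rpow (exp_pos _).le zero_le_two, ← exp_mul, rpow_neg zero_le_two, div_inv_eq_mul,
            mul_comm s, mul_comm (exp _), mul_assoc]
  calc ‖H z‖ ^ 3 * exp (2 * s) ≤ (C * 2 ^ p * exp (-p * s)) ^ 3 * exp (2 * s) := by gcongr
    _ = (C * 2 ^ p) ^ 3 * exp ((2 - 3 * p) * s) := by
        rw [mul_pow, ← exp_nat_mul, mul_assoc, ← exp_add]
        congr 2
        push_cast
        ring

theorem exists_norm_pow_three_mul_exp_le_exp_abs (h : HasRpowDecay H) :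
    ∃ C, ∀ (s : ℝ) (z : ℂ), exp s / 2 ≤ z.re →
      ‖H z‖ ^ 3 * exp (2 * s) ≤ C * exp (-(1 / 4) * |s|) := by
  obtain ⟨C₁, hC₁, h₁⟩ := h.exists_norm_pow_three_mul_exp_le_exp (p := 1 / 2) (by norm_num)
  obtain ⟨C₂, hC₂, h₂⟩ := h.exists_norm_pow_three_mul_exp_le_exp (p := 3 / 4) (by norm_num)
  refine ⟨max C₁ C₂, fun s z hz ↦ ?_⟩
  rcases le_total s 0 with hs | hs
  · exact (h₁ s z hz).trans <| mul_le_mul (le_max_left _ _)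
      (exp_le_exp.2 (by rw [abs_of_nonpos hs]; linarith)) (exp_pos _).le
      (hC₁.trans (le_max_left _ _))
  · exact (h₂ s z hz).trans <| mul_le_mul (le_max_right _ _)
      (exp_le_exp.2 (by rw [abs_of_nonneg hs]; linarith)) (exp_pos _).le
      (hC₂.trans (le_max_right _ _))

theorem exists_norm_log_integrand_le (h : HasRpowDecay H) :
    ∃ C, ∀ s ψ : ℝ, |ψ| ≤ π / 3 → ‖H (Complex.exp (s + ψ * I)) ^ 3 *
      Complex.exp (2 * (s + ψ * I))‖ ≤ C * exp (-(1 / 4) * |s|) := by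
  obtain ⟨C, hC⟩ := h.exists_norm_pow_three_mul_exp_le_exp_abs
  refine ⟨C, fun s ψ hψ ↦ ?_⟩
  rw [norm_mul, norm_pow, Complex.norm_exp, show (2 * (s + ψ * I)).re = 2 * s by simp]
  exact hC s _ (exp_div_two_le_re_exp hψ s)

theorem differentiableAt_log_integrand (hd : ∀ z : ℂ, 0 < z.re → DifferentiableAt ℂ H z) {z : ℂ}
    (hz : |z.im| ≤ π / 3) :
    DifferentiableAt ℂ (fun ζ ↦ H (Complex.exp ζ) ^ 3 * Complex.exp (2 * ζ)) z := by
  have hre := exp_div_two_le_re_exp hz z.re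
  rw [Complex.re_add_im] at hre
  have hHexp : DifferentiableAt ℂ (fun ζ ↦ H (Complex.exp ζ)) z :=
    (hd _ ((by positivity : 0 < exp z.re / 2).trans_le hre)).comp z (by fun_prop)
  exact (hHexp.pow 3).mul (by fun_prop)

theorem integrable_log_integrand (h : HasRpowDecay H)
    (hd : ∀ z : ℂ, 0 < z.re → DifferentiableAt ℂ H z) :
    Integrable fun s : ℝ ↦ H (exp s : ℝ) ^ 3 * Complex.exp (2 * s) := by
  obtain ⟨C, hC⟩ := h.exists_norm_log_integrand_le
  have hInt := integrable_horizontal_of_norm_le (a := 0)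
    (F := fun ζ ↦ H (Complex.exp ζ) ^ 3 * Complex.exp (2 * ζ))
    (fun z hz ↦ differentiableAt_log_integrand hd (by rw [hz, abs_zero]; positivity))
    ((integrable_exp_neg_mul_abs (p := 1 / 4) (by norm_num)).const_mul C)
    (fun s ↦ hC s 0 (by rw [abs_zero]; positivity))
  simpa using hInt

theorem integral_log_integrand_rotate (h : HasRpowDecay H)
    (hd : ∀ z : ℂ, 0 < z.re → DifferentiableAt ℂ H z) {a : ℝ} (ha : |a| ≤ π / 3) :
    ∫ s : ℝ, H (Complex.exp (s + a * I)) ^ 3 * Complex.exp (2 * (s + a * I)) =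
      ∫ s : ℝ, H (exp s : ℝ) ^ 3 * Complex.exp (2 * s) := by
  obtain ⟨C, hC⟩ := h.exists_norm_log_integrand_le
  have habs {ψ : ℝ} (hψ : ψ ∈ uIcc a 0) : |ψ| ≤ π / 3 := by
    simpa using (abs_sub_right_of_mem_uIcc hψ).trans (by simpa using ha)
  have hzero : Tendsto (fun s : ℝ ↦ C * exp (-(1 / 4) * |s|)) (cocompact ℝ) (𝓝 0) := by
    simpa [Function.comp_def] using (tendsto_exp_neg_atTop_nhds_zero.comp
      ((tendsto_norm_cocompact_atTop (E := ℝ)).const_mul_atTop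
        (by norm_num : (0 : ℝ) < 1 / 4))).const_mul C
  have hshift := integral_horizontal_eq_of_norm_le
    (F := fun ζ ↦ H (Complex.exp ζ) ^ 3 * Complex.exp (2 * ζ))
    (fun z hz ↦ differentiableAt_log_integrand hd (habs hz))
    ((integrable_exp_neg_mul_abs (p := 1 / 4) (by norm_num)).const_mul C) hzero
    (fun s ψ hψ ↦ hC s ψ (habs hψ))
  simpa using hshift

end HasRpowDecay

theorem besselSq_exp_add_pi_div_four (s : ℝ) :
    besselSq (Complex.exp (s + (π / 4 : ℝ) * I)) =
      besselSqRotated (Complex.exp (s + (-(π / 4) : ℝ) * I)) := by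
  have hpos : 0 < exp s * (√2 / 2) := by positivity
  rw [besselSq_eq_besselSqRotated]
  · congr 1
    rw [← Complex.exp_neg_pi_div_two_mul_I, ← Complex.exp_add]
    congr 1
    push_cast
    ring
  · rw [Complex.exp_re]
    simpa using hpos
  · rw [Complex.exp_im]
    simpa using hpos

theorem integral_besselSq_pow_three_exp :
    ∫ s : ℝ, besselSq (exp s : ℝ) ^ 3 * Complex.exp (2 * s) =
      -∫ s : ℝ, besselSqRotated (exp s : ℝ) ^ 3 * Complex.exp (2 * s) := by
  have hangle : |π / 4| ≤ π / 3 := by rw [abs_of_pos (by positivity)]; linarith [pi_pos]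
  rw [← hasRpowDecay_besselSq.integral_log_integrand_rotate
      (fun _ ↦ differentiableAt_besselSq) hangle,
    ← hasRpowDecay_besselSqRotated.integral_log_integrand_rotate
      (fun _ ↦ differentiableAt_besselSqRotated) ((abs_neg (π / 4)).trans_le hangle),
    ← integral_neg]
  congr 1 with s
  rw [besselSq_exp_add_pi_div_four, ← mul_neg]
  congr 1
  rw [← Complex.exp_add_pi_mul_I]
  congr 1
  push_cast
  ring

theorem exp_smul_besselSq_pow_three (s : ℝ) :
    exp s • (besselSq (exp s) ^ 3 * exp s) = besselSq (exp s : ℝ) ^ 3 * Complex.exp (2 * s) := by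
  rw [Complex.real_smul, two_mul, Complex.exp_add]
  push_cast
  ring

theorem integrableOn_besselSq_pow_three :
    IntegrableOn (fun t : ℝ ↦ besselSq t ^ 3 * t) (Ioi 0) := by
  rw [integrableOn_Ioi_iff_integrable_exp_smul]
  simpa only [exp_smul_besselSq_pow_three] using
    hasRpowDecay_besselSq.integrable_log_integrand fun _ ↦ differentiableAt_besselSq

theorem integral_besselSq_pow_three_im : (∫ t : ℝ in Ioi 0, besselSq t ^ 3 * t).im = 0 := by
  rw [integral_Ioi_eq_integral_exp_smul]
  simp only [exp_smul_besselSq_pow_three]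
  rw [integral_besselSq_pow_three_exp, Complex.neg_im, neg_eq_zero]
  have hreal (s : ℝ) : besselSqRotated (exp s : ℝ) ^ 3 * Complex.exp (2 * s) =
      (((besselSqRotated (exp s : ℝ)).re ^ 3 * exp (2 * s) : ℝ) : ℂ) := by
    push_cast
    congr 2
    exact Complex.ext (by simp) (by simpa using besselSqRotated_ofReal_im (exp s))
  simp_rw [hreal, integral_complex_ofReal, Complex.ofReal_im]

theorem K0_nonneg (t : ℝ) : 0 ≤ K0 t :=
  integral_nonneg fun _ ↦ (exp_pos _).le

theorem I0_nonneg (t : ℝ) : 0 ≤ I0 t :=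
  mul_nonneg (by positivity)
    (intervalIntegral.integral_nonneg pi_pos.le fun _ _ ↦ (exp_pos _).le)

theorem measurable_K0 : Measurable K0 :=
  (StronglyMeasurable.integral_prod_right (f := fun t u ↦ exp (-(t * cosh u)))
    (Continuous.stronglyMeasurable (by fun_prop))).measurable

theorem measurable_I0 : Measurable I0 := by
  unfold I0
  simp_rw [intervalIntegral.integral_of_le pi_pos.le]
  exact ((StronglyMeasurable.integral_prod_right (f := fun t u ↦ exp (t * cos u))
    (Continuous.stronglyMeasurable (by fun_prop))).measurable).const_mul _

theorem im_besselSq_pow_three {t : ℝ} (ht : 0 < t) :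
    (besselSq t ^ 3 * t).im =
      3 * π * (I0 t * K0 t ^ 5 * t) - π ^ 3 * ((I0 t * K0 t) ^ 3 * t) := by
  have him (a b : ℝ) : ((a + b * I) ^ 3).im = 3 * a ^ 2 * b - b ^ 3 := by
    simp [pow_succ]
    ring
  rw [Complex.im_mul_ofReal, besselSq_ofReal ht, him]
  ring

theorem sq_K0_le_norm_besselSq {t : ℝ} (ht : 0 < t) : K0 t ^ 2 ≤ ‖besselSq t‖ := by
  simpa [besselSq_ofReal ht, ← Complex.ofReal_pow] using Complex.re_le_norm (besselSq t)

theorem pi_mul_I0_mul_K0_le_norm_besselSq {t : ℝ} (ht : 0 < t) :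
    π * (I0 t * K0 t) ≤ ‖besselSq t‖ := by
  simpa [besselSq_ofReal ht, ← Complex.ofReal_pow] using
    (le_abs_self _).trans (Complex.abs_im_le_norm (besselSq t))

theorem integrableOn_I0_mul_K0_pow_five_mul :
    IntegrableOn (fun t ↦ I0 t * K0 t ^ 5 * t) (Ioi 0) := by
  have := measurable_K0
  have := measurable_I0
  refine (integrableOn_besselSq_pow_three.norm.const_mul π⁻¹).mono'
    (Measurable.aestronglyMeasurable (by fun_prop)) ?_
  filter_upwards [ae_restrict_mem measurableSet_Ioi] with t (ht : 0 < t)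
  have := I0_nonneg t
  have := K0_nonneg t
  rw [norm_of_nonneg (by positivity), norm_mul, norm_pow, Complex.norm_of_nonneg ht.le]
  calc I0 t * K0 t ^ 5 * t = π⁻¹ * (K0 t ^ 2 * K0 t ^ 2 * (π * (I0 t * K0 t)) * t) := by
        field_simp
    _ ≤ π⁻¹ * (‖besselSq t‖ * ‖besselSq t‖ * ‖besselSq t‖ * t) := by
        gcongr
        exacts [sq_K0_le_norm_besselSq ht, sq_K0_le_norm_besselSq ht,
          pi_mul_I0_mul_K0_le_norm_besselSq ht]
    _ = π⁻¹ * (‖besselSq t‖ ^ 3 * t) := by ring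

theorem integrableOn_I0_mul_K0_pow_three_mul :
    IntegrableOn (fun t ↦ (I0 t * K0 t) ^ 3 * t) (Ioi 0) := by
  have := measurable_K0
  have := measurable_I0
  refine (integrableOn_besselSq_pow_three.norm.const_mul (π⁻¹ ^ 3)).mono'
    (Measurable.aestronglyMeasurable (by fun_prop)) ?_
  filter_upwards [ae_restrict_mem measurableSet_Ioi] with t (ht : 0 < t)
  have := I0_nonneg t
  have := K0_nonneg t
  rw [norm_of_nonneg (by positivity), norm_mul, norm_pow, Complex.norm_of_nonneg ht.le]
  calc (I0 t * K0 t) ^ 3 * t = π⁻¹ ^ 3 * ((π * (I0 t * K0 t)) ^ 3 * t) := by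
        field_simp
    _ ≤ π⁻¹ ^ 3 * (‖besselSq t‖ ^ 3 * t) := by
        gcongr
        exact pi_mul_I0_mul_K0_le_norm_besselSq ht

theorem three_mul_integral_I0_mul_K0_pow_five_mul :
    3 * ∫ t in Ioi 0, I0 t * K0 t ^ 5 * t = π ^ 2 * ∫ t in Ioi 0, (I0 t * K0 t) ^ 3 * t := by
  have him : ∫ t : ℝ in Ioi 0, (besselSq t ^ 3 * t).im = 0 :=
    (integral_im integrableOn_besselSq_pow_three).trans integral_besselSq_pow_three_im
  rw [setIntegral_congr_fun measurableSet_Ioi fun t ht ↦ im_besselSq_pow_three ht,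
    integral_sub (integrableOn_I0_mul_K0_pow_five_mul.const_mul _)
      (integrableOn_I0_mul_K0_pow_three_mul.const_mul _),
    integral_const_mul, integral_const_mul] at him
  apply mul_left_cancel₀ pi_ne_zero
  linear_combination him

/-! ### Iterated Lebesgue integrals and changes of variable -/

section IteratedLIntegral

variable {α β γ δ : Type*} [MeasurableSpace α] [MeasurableSpace β] [MeasurableSpace γ]
  [MeasurableSpace δ] {μ : Measure α} {ν : Measure β} {ξ : Measure γ} {η : Measure δ}

theorem lintegral_mul_lintegral_mul_lintegral {f : α → ENNReal} {g : β → ENNReal}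
    {h : γ → ENNReal} (hf : Measurable f) (hg : Measurable g) (hh : Measurable h) :
    (∫⁻ a, f a ∂μ) * (∫⁻ b, g b ∂ν) * (∫⁻ c, h c ∂ξ) =
      ∫⁻ a, ∫⁻ b, ∫⁻ c, f a * g b * h c ∂ξ ∂ν ∂μ := by
  simp_rw [lintegral_const_mul _ hh, lintegral_mul_const _ (hg.const_mul _),
    lintegral_const_mul _ hg, lintegral_mul_const _ (hf.mul_const _), lintegral_mul_const _ hf]

theorem lintegral_lintegral_add_left [SFinite ν] {f : α → β → ENNReal}
    (hf : Measurable fun p : α × β ↦ f p.1 p.2) (g : α → β → ENNReal) :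
    ∫⁻ a, ∫⁻ b, f a b + g a b ∂ν ∂μ =
      ∫⁻ a, ∫⁻ b, f a b ∂ν ∂μ + ∫⁻ a, ∫⁻ b, g a b ∂ν ∂μ := by
  rw [← lintegral_add_left hf.lintegral_prod_right']
  exact lintegral_congr fun a ↦ lintegral_add_left hf.of_uncurry_left _

variable [SFinite μ] [SFinite ν] [SFinite ξ]

theorem lintegral₃_rotate {F : α → β → γ → ENNReal}
    (hF : Measurable fun p : α × β × γ ↦ F p.1 p.2.1 p.2.2) :
    ∫⁻ a, ∫⁻ b, ∫⁻ c, F a b c ∂ξ ∂ν ∂μ = ∫⁻ b, ∫⁻ c, ∫⁻ a, F a b c ∂μ ∂ξ ∂ν := by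
  rw [lintegral_lintegral_swap]
  · refine lintegral_congr fun b ↦ lintegral_lintegral_swap (Measurable.aemeasurable ?_)
    exact hF.comp (by fun_prop : Measurable fun p : α × γ ↦ (p.1, b, p.2))
  · refine (Measurable.lintegral_prod_right' (f := fun p : (α × β) × γ ↦ F p.1.1 p.1.2 p.2)
      ?_).aemeasurable
    exact hF.comp (by fun_prop : Measurable fun p : (α × β) × γ ↦ (p.1.1, p.1.2, p.2))

variable [SFinite η]

theorem lintegral₄_rotate {F : α → β → γ → δ → ENNReal}
    (hF : Measurable fun p : α × β × γ × δ ↦ F p.1 p.2.1 p.2.2.1 p.2.2.2) :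
    ∫⁻ a, ∫⁻ b, ∫⁻ c, ∫⁻ d, F a b c d ∂η ∂ξ ∂ν ∂μ =
      ∫⁻ b, ∫⁻ c, ∫⁻ d, ∫⁻ a, F a b c d ∂μ ∂η ∂ξ ∂ν := by
  rw [lintegral₃_rotate]
  · refine lintegral_congr fun b ↦ lintegral_congr fun c ↦
      lintegral_lintegral_swap (Measurable.aemeasurable ?_)
    exact hF.comp (by fun_prop : Measurable fun p : α × δ ↦ (p.1, b, c, p.2))
  · refine Measurable.lintegral_prod_right'
      (f := fun p : (α × β × γ) × δ ↦ F p.1.1 p.1.2.1 p.1.2.2 p.2) ?_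
    exact hF.comp (by fun_prop : Measurable fun p : (α × β × γ) × δ ↦
      (p.1.1, p.1.2.1, p.1.2.2, p.2))

theorem lintegral₄_swap_pairs {F : α → β → γ → δ → ENNReal}
    (hF : Measurable fun p : α × β × γ × δ ↦ F p.1 p.2.1 p.2.2.1 p.2.2.2) :
    ∫⁻ a, ∫⁻ b, ∫⁻ c, ∫⁻ d, F a b c d ∂η ∂ξ ∂ν ∂μ =
      ∫⁻ c, ∫⁻ d, ∫⁻ b, ∫⁻ a, F a b c d ∂μ ∂ν ∂η ∂ξ := by
  have hrotate (a : α) : ∫⁻ b, ∫⁻ c, ∫⁻ d, F a b c d ∂η ∂ξ ∂ν =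
      ∫⁻ c, ∫⁻ d, ∫⁻ b, F a b c d ∂ν ∂η ∂ξ :=
    lintegral₃_rotate (hF.comp (by fun_prop : Measurable fun p : β × γ × δ ↦ (a, p)))
  simp_rw [hrotate]
  exact lintegral₄_rotate (hF.comp
    (by fun_prop : Measurable fun p : α × γ × δ × β ↦ (p.1, p.2.2.2, p.2.1, p.2.2.1)))

end IteratedLIntegral

theorem ofReal_mul_lintegral_ofReal {α : Type*} [MeasurableSpace α] {μ : Measure α} {c : ℝ}
    (hc : 0 ≤ c) (f : α → ℝ) : ofReal c * ∫⁻ x, ofReal (f x) ∂μ = ∫⁻ x, ofReal (c * f x) ∂μ := by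
  rw [← lintegral_const_mul' _ _ ENNReal.ofReal_ne_top]
  simp_rw [← ENNReal.ofReal_mul hc]

theorem ofReal_mul_lintegral_lintegral_ofReal {α β : Type*} [MeasurableSpace α] [MeasurableSpace β]
    {μ : Measure α} {ν : Measure β} {c : ℝ} (hc : 0 ≤ c) (f : α → β → ℝ) :
    ofReal c * ∫⁻ x, ∫⁻ y, ofReal (f x y) ∂ν ∂μ = ∫⁻ x, ∫⁻ y, ofReal (c * f x y) ∂ν ∂μ := by
  rw [← lintegral_const_mul' _ _ ENNReal.ofReal_ne_top]
  simp_rw [ofReal_mul_lintegral_ofReal hc]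

theorem setLIntegral_setLIntegral_congr_fun {α β : Type*} [MeasurableSpace α] [MeasurableSpace β]
    {μ : Measure α} {ν : Measure β} {s : Set α} {t : Set β} (hs : MeasurableSet s)
    (ht : MeasurableSet t) {f g : α → β → ENNReal} (h : ∀ x ∈ s, ∀ y ∈ t, f x y = g x y) :
    ∫⁻ x in s, ∫⁻ y in t, f x y ∂ν ∂μ = ∫⁻ x in s, ∫⁻ y in t, g x y ∂ν ∂μ :=
  setLIntegral_congr_fun hs fun x hx ↦ setLIntegral_congr_fun ht (h x hx)

section ChangeOfVariables

variable {s t : Set ℝ} {φ φ' ψ : ℝ → ℝ}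

theorem setLIntegral_eq_of_invOn (hs : MeasurableSet s) (hφ : MapsTo φ s t) (hψ : MapsTo ψ t s)
    (hinv : InvOn ψ φ s t) (hd : ∀ x ∈ s, HasDerivAt φ (φ' x) x) (g : ℝ → ENNReal) :
    ∫⁻ y in t, g y = ∫⁻ x in s, ofReal |φ' x| * g (φ x) := by
  have hbij := hinv.bijOn hφ hψ
  rw [← hbij.image_eq]
  exact lintegral_image_eq_lintegral_abs_deriv_mul hs
    (fun x hx ↦ (hd x hx).hasDerivWithinAt) hbij.injOn g

theorem setLIntegral_ofReal_eq_of_invOn (hs : MeasurableSet s) (hφ : MapsTo φ s t)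
    (hψ : MapsTo ψ t s) (hinv : InvOn ψ φ s t) (hd : ∀ x ∈ s, HasDerivAt φ (φ' x) x)
    (g : ℝ → ℝ) : ∫⁻ y in t, ofReal (g y) = ∫⁻ x in s, ofReal (|φ' x| * g (φ x)) := by
  simp_rw [setLIntegral_eq_of_invOn hs hφ hψ hinv hd, ENNReal.ofReal_mul (abs_nonneg _)]

end ChangeOfVariables

theorem setLIntegral_Ioi_eq_mul_left {c : ℝ} (hc : 0 < c) (g : ℝ → ENNReal) :
    ∫⁻ x in Ioi 0, g x = ∫⁻ x in Ioi 0, ofReal c * g (c * x) := by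
  have h := setLIntegral_eq_of_invOn (φ := (c * ·)) (φ' := fun _ ↦ c) (ψ := (c⁻¹ * ·))
    measurableSet_Ioi (fun x hx ↦ mul_pos hc hx) (fun x hx ↦ mul_pos (inv_pos.2 hc) hx)
    ⟨fun x _ ↦ inv_mul_cancel_left₀ hc.ne' x, fun x _ ↦ mul_inv_cancel_left₀ hc.ne' x⟩
    (fun x _ ↦ by simpa using (hasDerivAt_id x).const_mul c) g
  rwa [abs_of_pos hc] at h

theorem setLIntegral_Ioi_ofReal_eq_mul_left {c : ℝ} (hc : 0 < c) (g : ℝ → ℝ) :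
    ∫⁻ x in Ioi 0, ofReal (g x) = ∫⁻ x in Ioi 0, ofReal (c * g (c * x)) := by
  rw [setLIntegral_Ioi_eq_mul_left hc]
  simp_rw [ENNReal.ofReal_mul hc.le]

theorem setLIntegral_Ioi_ofReal_eq_exp (g : ℝ → ℝ) :
    ∫⁻ x in Ioi 0, ofReal (g x) = ∫⁻ u, ofReal (exp u * g (exp u)) := by
  have h := setLIntegral_ofReal_eq_of_invOn (φ := exp) (φ' := exp) (ψ := log) MeasurableSet.univ
    (t := Ioi 0) (fun x _ ↦ exp_pos x) (fun _ _ ↦ mem_univ _)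
    ⟨fun x _ ↦ log_exp x, fun y hy ↦ exp_log hy⟩ (fun x _ ↦ hasDerivAt_exp x) g
  simpa only [abs_exp, Measure.restrict_univ] using h

theorem setLIntegral_Ioo_zero_pi_div_two_eq_arctan (g : ℝ → ENNReal) :
    ∫⁻ θ in Ioo 0 (π / 2), g θ = ∫⁻ z in Ioi 0, ofReal (1 / (1 + z ^ 2)) * g (arctan z) := by
  have h := setLIntegral_eq_of_invOn (s := Ioi 0) (t := Ioo 0 (π / 2)) (φ := arctan)
    (φ' := fun z ↦ 1 / (1 + z ^ 2)) (ψ := tan) measurableSet_Ioi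
    (fun x hx ↦ ⟨arctan_pos.2 hx, arctan_lt_pi_div_two x⟩)
    (fun x hx ↦ tan_pos_of_pos_of_lt_pi_div_two hx.1 hx.2)
    ⟨fun x _ ↦ tan_arctan x, fun x hx ↦ arctan_tan (by linarith [hx.1, pi_pos]) hx.2⟩
    (fun x _ ↦ hasDerivAt_arctan x) g
  have habs (z : ℝ) : |1 / (1 + z ^ 2)| = 1 / (1 + z ^ 2) := abs_of_pos (by positivity)
  simpa only [habs] using h

theorem lintegral_exp_neg_mul {A : ℝ} (hA : 0 < A) :
    ∫⁻ t in Ioi 0, ofReal (exp (-(A * t))) = ofReal (1 / A) := by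
  have hInt : IntegrableOn (fun t ↦ exp (-(A * t))) (Ioi 0) := by
    simpa only [neg_mul] using exp_neg_integrableOn_Ioi 0 hA
  rw [← ofReal_integral_eq_lintegral_ofReal hInt (Eventually.of_forall fun _ ↦ (exp_pos _).le)]
  simpa only [neg_mul, mul_zero, neg_zero, exp_zero, neg_div_neg_eq] using
    congrArg ofReal (integral_exp_mul_Ioi (neg_lt_zero.2 hA) 0)

theorem lintegral_mul_exp_neg_mul_sq {A : ℝ} (hA : 0 < A) :
    ∫⁻ t in Ioi 0, ofReal (t * exp (-(A * t ^ 2))) = ofReal (1 / (2 * A)) := by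
  have hInt : IntegrableOn (fun t ↦ t * exp (-(A * t ^ 2))) (Ioi 0) := by
    simpa only [neg_mul] using (integrable_mul_exp_neg_mul_sq hA).integrableOn
  have hvalue : ∫ t in Ioi 0, t * exp (-(A * t ^ 2)) = 1 / (2 * A) := by
    have h := integral_rpow_mul_exp_neg_mul_rpow (p := 2) (q := 1) two_pos (by norm_num) hA
    norm_num [rpow_neg_one] at h
    rw [h]
    ring
  rw [← hvalue, ofReal_integral_eq_lintegral_ofReal hInt]
  filter_upwards [ae_restrict_mem measurableSet_Ioi] with t (ht : 0 < t)
  positivity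

theorem lintegral_inv_add_mul_sq {A B : ℝ} (hA : 0 < A) (hB : 0 < B) :
    ∫⁻ w in Ioi 0, ofReal (1 / (A + B * w ^ 2)) = ofReal (π / 2 / √(A * B)) := by
  have hunit : ∫⁻ w in Ioi (0 : ℝ), ofReal (1 + w ^ 2)⁻¹ = ofReal (π / 2) := by
    rw [← ofReal_integral_eq_lintegral_ofReal integrable_inv_one_add_sq.integrableOn
      (Eventually.of_forall fun _ ↦ by positivity), integral_Ioi_inv_one_add_sq, arctan_zero,
      sub_zero]
  have hsq : √(A / B) ^ 2 = A / B := sq_sqrt (by positivity)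
  rw [setLIntegral_Ioi_ofReal_eq_mul_left (c := √(A / B)) (by positivity),
    div_eq_inv_mul (π / 2), ENNReal.ofReal_mul (by positivity), ← hunit,
    ofReal_mul_lintegral_ofReal (by positivity)]
  congr 1 with w
  congr 1
  rw [mul_pow, hsq, sqrt_div hA.le, sqrt_mul hA.le]
  have := sqrt_pos.2 hA
  have := sqrt_pos.2 hB
  field_simp
  rw [sq_sqrt hA.le]

/-! ### The cubic moment as an integral over the unit square -/

/-- `4 sin² θ` as a function of `z = tan θ`. -/
noncomputable def fourSinSq (z : ℝ) : ℝ := 4 * z ^ 2 / (1 + z ^ 2)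

theorem fourSinSq_pos {z : ℝ} (hz : 0 < z) : 0 < fourSinSq z := by
  unfold fourSinSq
  positivity

@[fun_prop]
theorem measurable_fourSinSq : Measurable fourSinSq := by
  unfold fourSinSq
  fun_prop

/-- The Laplace transform `∫₀^{π/2} exp (-4 α sin² θ) dθ`, written in the variable `z = tan θ` and
with values in `[0, ∞]` so that the order of integration can be changed freely. -/
noncomputable def sinSqLaplace (α : ℝ) : ENNReal :=
  ∫⁻ z in Ioi 0, ofReal (1 / (1 + z ^ 2) * exp (-(α * fourSinSq z)))

@[fun_prop]
theorem measurable_sinSqLaplace : Measurable sinSqLaplace :=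
  Measurable.lintegral_prod_right'
    (f := fun p : ℝ × ℝ ↦ ofReal (1 / (1 + p.2 ^ 2) * exp (-(p.1 * fourSinSq p.2)))) (by fun_prop)

/-- The weight in Schwinger's representation `(2 / π) K₀(t c) = ∫₀^∞ w(t, a) exp (-a c²) da`. -/
noncomputable def schwingerWeight (t a : ℝ) : ℝ := 1 / (π * a) * exp (-(t ^ 2 / (4 * a)))

@[fun_prop]
theorem measurable_schwingerWeight : Measurable fun p : ℝ × ℝ ↦ schwingerWeight p.1 p.2 := by
  unfold schwingerWeight
  fun_prop

theorem schwingerWeight_pos (t : ℝ) {a : ℝ} (ha : 0 < a) : 0 < schwingerWeight t a := by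
  unfold schwingerWeight
  positivity

theorem lintegral_schwingerWeight_mul_exp {t c : ℝ} (ht : 0 < t) (hc : 0 < c) :
    ∫⁻ a in Ioi 0, ofReal (schwingerWeight t a * exp (-(a * c ^ 2))) =
      ofReal (2 / π * K0 (t * c)) := by
  have hInt := (integrable_exp_neg_mul_cosh (mul_pos ht hc)).const_mul (1 / π)
  rw [setLIntegral_Ioi_ofReal_eq_mul_left (c := t / (2 * c)) (by positivity),
    setLIntegral_Ioi_ofReal_eq_exp, show 2 / π * K0 (t * c) = 1 / π * (2 * K0 (t * c)) by ring,
    ← integral_exp_neg_mul_cosh, ← integral_const_mul,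
    ofReal_integral_eq_lintegral_ofReal hInt (Eventually.of_forall fun _ ↦ by positivity)]
  congr 1 with u
  congr 1
  have hexp : exp (-(t * c * cosh u)) = exp (-(t ^ 2 / (4 * (t / (2 * c) * exp u)))) *
      exp (-(t / (2 * c) * exp u * c ^ 2)) := by
    rw [← exp_add, cosh_eq, exp_neg u]
    congr 1
    field_simp
    ring
  rw [hexp, schwingerWeight]
  field_simp

theorem ofReal_I0_mul_K0 {t : ℝ} (ht : 0 < t) :
    ofReal (I0 t * K0 t) = ∫⁻ a in Ioi 0, ofReal (schwingerWeight t a) * sinSqLaplace a := by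
  have hIK : I0 t * K0 t = ∫ θ in Ioo 0 (π / 2), 2 / π * K0 (2 * t * sin θ) := by
    rw [integral_const_mul, integral_K0_mul_sin ht]
    field_simp
  have hz {z : ℝ} (hz : 0 < z) :
      ofReal (1 / (1 + z ^ 2)) * ofReal (2 / π * K0 (2 * t * sin (arctan z))) =
        ∫⁻ a in Ioi 0, ofReal (schwingerWeight t a) *
          ofReal (1 / (1 + z ^ 2) * exp (-(a * fourSinSq z))) := by
    have hsin : (2 * sin (arctan z)) ^ 2 = fourSinSq z := by
      rw [sin_arctan, fourSinSq, mul_pow, div_pow, sq_sqrt (by positivity)]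
      ring
    have hsin_pos : 0 < 2 * sin (arctan z) := by
      rw [sin_arctan]
      positivity
    rw [show 2 * t * sin (arctan z) = t * (2 * sin (arctan z)) by ring,
      ← lintegral_schwingerWeight_mul_exp ht hsin_pos, ofReal_mul_lintegral_ofReal (by positivity),
      hsin]
    refine setLIntegral_congr_fun measurableSet_Ioi fun a ha ↦ ?_
    rw [← ENNReal.ofReal_mul (schwingerWeight_pos t ha).le, mul_left_comm]
  rw [hIK, ofReal_integral_eq_lintegral_ofReal ((integrableOn_K0_mul_sin ht).const_mul _)
      (Eventually.of_forall fun _ ↦ mul_nonneg (by positivity) (K0_nonneg _)),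
    setLIntegral_Ioo_zero_pi_div_two_eq_arctan,
    setLIntegral_congr_fun measurableSet_Ioi fun z ↦ hz,
    lintegral_lintegral_swap (Measurable.aemeasurable (by unfold Function.uncurry; fun_prop))]
  congr 1 with a
  rw [sinSqLaplace, lintegral_const_mul' _ _ ENNReal.ofReal_ne_top]

theorem lintegral_mul_schwingerWeight_pow_three {a b c : ℝ} (ha : 0 < a) (hb : 0 < b) (hc : 0 < c) :
    ∫⁻ t in Ioi 0, ofReal (t * (schwingerWeight t a * schwingerWeight t b * schwingerWeight t c)) =
      ofReal (2 / π ^ 3 * (1 / (a * b + b * c + c * a))) := by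
  have hprod (t : ℝ) : t * (schwingerWeight t a * schwingerWeight t b * schwingerWeight t c) =
      1 / (π ^ 3 * (a * b * c)) * (t * exp (-((1 / a + 1 / b + 1 / c) / 4 * t ^ 2))) := by
    have hexp : exp (-((1 / a + 1 / b + 1 / c) / 4 * t ^ 2)) =
        exp (-(t ^ 2 / (4 * a))) * exp (-(t ^ 2 / (4 * b))) * exp (-(t ^ 2 / (4 * c))) := by
      rw [← exp_add, ← exp_add]
      congr 1
      field_simp
      ring
    rw [hexp]
    unfold schwingerWeight
    field_simp
  simp_rw [hprod]
  rw [← ofReal_mul_lintegral_ofReal (by positivity), lintegral_mul_exp_neg_mul_sq (by positivity),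
    ← ENNReal.ofReal_mul (by positivity)]
  congr 1
  field_simp
  ring

theorem lintegral_I0_mul_K0_pow_three_eq_sinSqLaplace :
    ∫⁻ t in Ioi 0, ofReal ((I0 t * K0 t) ^ 3 * t) =
      ∫⁻ a in Ioi 0, ∫⁻ b in Ioi 0, ∫⁻ c in Ioi 0,
        ofReal (2 / π ^ 3 * (1 / (a * b + b * c + c * a))) *
          (sinSqLaplace a * sinSqLaplace b * sinSqLaplace c) := by
  have hcube {t : ℝ} (ht : 0 < t) : ofReal ((I0 t * K0 t) ^ 3 * t) =
      ∫⁻ a in Ioi 0, ∫⁻ b in Ioi 0, ∫⁻ c in Ioi 0, ofReal t * (ofReal (schwingerWeight t a) *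
        sinSqLaplace a * (ofReal (schwingerWeight t b) * sinSqLaplace b) *
          (ofReal (schwingerWeight t c) * sinSqLaplace c)) := by
    have hmeas : Measurable fun a ↦ ofReal (schwingerWeight t a) * sinSqLaplace a := by fun_prop
    have hexpand := lintegral_mul_lintegral_mul_lintegral (μ := volume.restrict (Ioi 0))
      (ν := volume.restrict (Ioi 0)) (ξ := volume.restrict (Ioi 0)) hmeas hmeas hmeas
    simp_rw [lintegral_const_mul' _ _ ENNReal.ofReal_ne_top, ← hexpand, ← ofReal_I0_mul_K0 ht]
    rw [mul_comm, ENNReal.ofReal_mul ht.le,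
      ENNReal.ofReal_pow (mul_nonneg (I0_nonneg t) (K0_nonneg t)), pow_three']
  rw [setLIntegral_congr_fun measurableSet_Ioi fun t ↦ hcube, lintegral₄_rotate (by fun_prop)]
  refine setLIntegral_congr_fun measurableSet_Ioi fun a ha ↦
    setLIntegral_setLIntegral_congr_fun measurableSet_Ioi measurableSet_Ioi fun b hb c hc ↦ ?_
  rw [← lintegral_mul_schwingerWeight_pow_three ha hb hc, ← lintegral_mul_const _ (by fun_prop)]
  refine setLIntegral_congr_fun measurableSet_Ioi fun t (ht : 0 < t) ↦ ?_
  have hwa := (schwingerWeight_pos t ha).le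
  have hwb := (schwingerWeight_pos t hb).le
  simp only [ENNReal.ofReal_mul ht.le, ENNReal.ofReal_mul (mul_nonneg hwa hwb),
    ENNReal.ofReal_mul hwa]
  ring

theorem lintegral_I0_mul_K0_pow_three_eq_scaled :
    ∫⁻ t in Ioi 0, ofReal ((I0 t * K0 t) ^ 3 * t) =
      ∫⁻ x in Ioi 0, ∫⁻ y in Ioi 0, ofReal (2 / π ^ 3 * (1 / (x + x * y + y))) *
        ∫⁻ a in Ioi 0, sinSqLaplace a * sinSqLaplace (a * x) * sinSqLaplace (a * y) := by
  have hscale {a : ℝ} (ha : 0 < a) :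
      ∫⁻ b in Ioi 0, ∫⁻ c in Ioi 0, ofReal (2 / π ^ 3 * (1 / (a * b + b * c + c * a))) *
          (sinSqLaplace a * sinSqLaplace b * sinSqLaplace c) =
        ∫⁻ x in Ioi 0, ∫⁻ y in Ioi 0, ofReal (2 / π ^ 3 * (1 / (x + x * y + y))) *
          (sinSqLaplace a * sinSqLaplace (a * x) * sinSqLaplace (a * y)) := by
    rw [setLIntegral_Ioi_eq_mul_left ha]
    refine setLIntegral_congr_fun measurableSet_Ioi fun x (hx : 0 < x) ↦ ?_
    rw [setLIntegral_Ioi_eq_mul_left ha, ← lintegral_const_mul' _ _ ENNReal.ofReal_ne_top]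
    refine setLIntegral_congr_fun measurableSet_Ioi fun y (hy : 0 < y) ↦ ?_
    have hker : 2 / π ^ 3 * (1 / (x + x * y + y)) = a * (a * (2 / π ^ 3 *
        (1 / (a * (a * x) + a * x * (a * y) + a * y * a)))) := by
      field_simp
    rw [hker, ENNReal.ofReal_mul ha.le, ENNReal.ofReal_mul ha.le]
    ring
  rw [lintegral_I0_mul_K0_pow_three_eq_sinSqLaplace,
    setLIntegral_congr_fun measurableSet_Ioi fun a ↦ hscale, lintegral₃_rotate (by fun_prop)]
  simp_rw [lintegral_const_mul' _ _ ENNReal.ofReal_ne_top]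

theorem sinSqLaplace_mul_mul (a b c : ℝ) :
    sinSqLaplace a * sinSqLaplace b * sinSqLaplace c =
      ∫⁻ v in Ioi 0, ∫⁻ z in Ioi 0, ∫⁻ w in Ioi 0,
        ofReal (1 / (1 + v ^ 2) * (1 / (1 + z ^ 2)) * (1 / (1 + w ^ 2)) *
          exp (-(a * fourSinSq v + b * fourSinSq z + c * fourSinSq w))) := by
  unfold sinSqLaplace
  rw [lintegral_mul_lintegral_mul_lintegral (by fun_prop) (by fun_prop) (by fun_prop)]
  refine lintegral_congr fun v ↦ lintegral_congr fun z ↦ lintegral_congr fun w ↦ ?_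
  rw [← ENNReal.ofReal_mul (by positivity), ← ENNReal.ofReal_mul (by positivity), neg_add, neg_add,
    exp_add, exp_add]
  congr 1
  ring

theorem lintegral_inv_one_add_sq_mul_inv_add_fourSinSq {ρ : ℝ} (hρ : 0 < ρ) :
    ∫⁻ v in Ioi 0, ofReal (1 / (1 + v ^ 2) * (1 / (fourSinSq v + ρ))) =
      ofReal (π / 2 / √(ρ * (ρ + 4))) := by
  rw [← lintegral_inv_add_mul_sq hρ (by positivity)]
  refine setLIntegral_congr_fun measurableSet_Ioi fun v _ ↦ ?_
  have : 0 < ρ + (ρ + 4) * v ^ 2 := by positivity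
  congr 1
  unfold fourSinSq
  field_simp
  ring

theorem lintegral_sinSqLaplace_mul_mul {x y : ℝ} (hx : 0 < x) (hy : 0 < y) :
    ∫⁻ a in Ioi 0, sinSqLaplace a * sinSqLaplace (a * x) * sinSqLaplace (a * y) =
      ∫⁻ z in Ioi 0, ∫⁻ w in Ioi 0, ofReal (1 / (1 + z ^ 2) * (1 / (1 + w ^ 2)) *
        (π / 2 / √((x * fourSinSq z + y * fourSinSq w) *
          (x * fourSinSq z + y * fourSinSq w + 4)))) := by
  simp_rw [sinSqLaplace_mul_mul]
  rw [lintegral₄_rotate (by fun_prop), lintegral₃_rotate]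
  · refine setLIntegral_setLIntegral_congr_fun measurableSet_Ioi measurableSet_Ioi
      fun z hz w hw ↦ ?_
    have := fourSinSq_pos hz
    have := fourSinSq_pos hw
    rw [ENNReal.ofReal_mul (by positivity),
      ← lintegral_inv_one_add_sq_mul_inv_add_fourSinSq (by positivity),
      ofReal_mul_lintegral_ofReal (by positivity)]
    refine setLIntegral_congr_fun measurableSet_Ioi fun v hv ↦ ?_
    have := fourSinSq_pos hv
    rw [← mul_assoc, ENNReal.ofReal_mul (by positivity), ← lintegral_exp_neg_mul (by positivity),
      ofReal_mul_lintegral_ofReal (by positivity)]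
    congr 1 with a
    ring_nf
  · exact Measurable.lintegral_prod_right' (f := fun p : (ℝ × ℝ × ℝ) × ℝ ↦
      ofReal (1 / (1 + p.1.1 ^ 2) * (1 / (1 + p.1.2.1 ^ 2)) * (1 / (1 + p.1.2.2 ^ 2)) *
        exp (-(p.2 * fourSinSq p.1.1 + p.2 * x * fourSinSq p.1.2.1 +
          p.2 * y * fourSinSq p.1.2.2)))) (by fun_prop)

theorem lintegral_inv_mul_inv_sqrt_eq {R S : ℝ} (hR : 0 < R) (hS : 0 < S) :
    ∫⁻ y in Ioi 0, ∫⁻ x in Ioi 0, ofReal (1 / (x + x * y + y) *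
        (1 / √((x * S + y * R) * (x * S + y * R + 4)))) =
      ∫⁻ k in Ioi 0, ∫⁻ r in Ioi 0, ofReal (1 / (r * k + (k + R) * (k + S)) *
        (1 / √(r * (r + 4)))) := by
  have hxk {y : ℝ} (hy : 0 < y) :
      ∫⁻ x in Ioi 0, ofReal (1 / (x + x * y + y) *
          (1 / √((x * S + y * R) * (x * S + y * R + 4)))) =
        ∫⁻ k in Ioi 0, ofReal (1 / (k + S + y * k) *
          (1 / √(y * (k + R) * (y * (k + R) + 4)))) := by
    rw [setLIntegral_Ioi_ofReal_eq_mul_left (c := y / S) (by positivity)]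
    refine setLIntegral_congr_fun measurableSet_Ioi fun k (hk : 0 < k) ↦ ?_
    rw [show y / S * k * S + y * R = y * (k + R) by field_simp, ← mul_assoc]
    congr 2
    field_simp
    ring
  rw [setLIntegral_congr_fun measurableSet_Ioi fun y ↦ hxk,
    lintegral_lintegral_swap (Measurable.aemeasurable (by unfold Function.uncurry; fun_prop))]
  refine setLIntegral_congr_fun measurableSet_Ioi fun k (hk : 0 < k) ↦ ?_
  rw [setLIntegral_Ioi_ofReal_eq_mul_left (c := 1 / (k + R)) (by positivity)]
  refine setLIntegral_congr_fun measurableSet_Ioi fun r (hr : 0 < r) ↦ ?_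
  rw [show 1 / (k + R) * r * (k + R) = r by field_simp, ← mul_assoc]
  congr 2
  field_simp
  ring

theorem lintegral_I0_mul_K0_pow_three_eq_lintegral₄ :
    ∫⁻ t in Ioi 0, ofReal ((I0 t * K0 t) ^ 3 * t) =
      ∫⁻ z in Ioi 0, ∫⁻ w in Ioi 0, ∫⁻ k in Ioi 0, ∫⁻ r in Ioi 0,
        ofReal (1 / π ^ 2 * (1 / (1 + z ^ 2) * (1 / (1 + w ^ 2))) *
          (1 / (r * k + (k + fourSinSq w) * (k + fourSinSq z)) * (1 / √(r * (r + 4))))) := by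
  have hxy : ∫⁻ t in Ioi 0, ofReal ((I0 t * K0 t) ^ 3 * t) =
      ∫⁻ x in Ioi 0, ∫⁻ y in Ioi 0, ∫⁻ z in Ioi 0, ∫⁻ w in Ioi 0,
        ofReal (1 / π ^ 2 * (1 / (1 + z ^ 2) * (1 / (1 + w ^ 2))) *
          (1 / (x + x * y + y) * (1 / √((x * fourSinSq z + y * fourSinSq w) *
            (x * fourSinSq z + y * fourSinSq w + 4))))) := by
    rw [lintegral_I0_mul_K0_pow_three_eq_scaled]
    refine setLIntegral_setLIntegral_congr_fun measurableSet_Ioi measurableSet_Ioi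
      fun x (hx : 0 < x) y (hy : 0 < y) ↦ ?_
    rw [lintegral_sinSqLaplace_mul_mul hx hy,
      ofReal_mul_lintegral_lintegral_ofReal (by positivity)]
    congr! 5 with z w
    field_simp
  rw [hxy, lintegral₄_swap_pairs (by fun_prop)]
  refine setLIntegral_setLIntegral_congr_fun measurableSet_Ioi measurableSet_Ioi fun z hz w hw ↦ ?_
  rw [← ofReal_mul_lintegral_lintegral_ofReal (by positivity),
    lintegral_inv_mul_inv_sqrt_eq (fourSinSq_pos hw) (fourSinSq_pos hz),
    ofReal_mul_lintegral_lintegral_ofReal (by positivity)]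

theorem lintegral_inv_add_mul_fourSinSq {k r : ℝ} (hk : 0 < k) (hr : 0 < r) :
    ∫⁻ w in Ioi 0, ∫⁻ z in Ioi 0, ofReal (1 / (1 + z ^ 2) * (1 / (1 + w ^ 2)) *
        (1 / (r * k + (k + fourSinSq w) * (k + fourSinSq z)))) =
      ∫⁻ w in Ioi 0, ofReal (π / 2 * (1 / (1 + w ^ 2)) * (1 / (k + r + 4) *
        (1 / √(k * (k + 16 * r * (w ^ 2 / (1 + w ^ 2)) / (k + r + 4) ^ 2))))) := by
  set l := √((k + r) / (k + r + 4))
  have hl : 0 < l := by positivity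
  have hl2 : l ^ 2 = (k + r) / (k + r + 4) := sq_sqrt (by positivity)
  rw [setLIntegral_Ioi_eq_mul_left hl]
  refine setLIntegral_congr_fun measurableSet_Ioi fun w (hw : 0 < w) ↦ ?_
  set B := k + 16 * r * (w ^ 2 / (1 + w ^ 2)) / (k + r + 4) ^ 2 with hB
  have hB_pos : 0 < B := by positivity
  have hsqrt : √(k * (1 + w ^ 2) * ((1 + w ^ 2) * B)) = (1 + w ^ 2) * √(k * B) := by
    rw [show k * (1 + w ^ 2) * ((1 + w ^ 2) * B) = (1 + w ^ 2) ^ 2 * (k * B) by ring,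
      sqrt_mul (by positivity), sqrt_sq (by positivity)]
  rw [show π / 2 * (1 / (1 + w ^ 2)) * (1 / (k + r + 4) * (1 / √(k * B))) =
      1 / (k + r + 4) * (π / 2 / √(k * (1 + w ^ 2) * ((1 + w ^ 2) * B))) by
        rw [hsqrt]; field_simp,
    ENNReal.ofReal_mul (by positivity), ← lintegral_inv_add_mul_sq (by positivity) (by positivity),
    ofReal_mul_lintegral_ofReal hl.le, ofReal_mul_lintegral_ofReal (by positivity),
    setLIntegral_Ioi_ofReal_eq_mul_left hl]
  refine setLIntegral_congr_fun measurableSet_Ioi fun z (hz : 0 < z) ↦ ?_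
  rw [fourSinSq, fourSinSq, ← mul_assoc l l, ← sq, mul_pow, mul_pow, hl2, hB]
  congr 1
  field_simp
  ring

theorem lintegral_I0_mul_K0_pow_three_eq_lintegral₃ :
    ∫⁻ t in Ioi 0, ofReal ((I0 t * K0 t) ^ 3 * t) =
      ∫⁻ w in Ioi 0, ∫⁻ k in Ioi 0, ∫⁻ r in Ioi 0,
        ofReal (1 / (2 * π) * (1 / (1 + w ^ 2)) * (1 / √(r * (r + 4)) * (1 / (k + r + 4)) *
          (1 / √(k * (k + 16 * r * (w ^ 2 / (1 + w ^ 2)) / (k + r + 4) ^ 2))))) := by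
  have hkr : ∫⁻ t in Ioi 0, ofReal ((I0 t * K0 t) ^ 3 * t) =
      ∫⁻ k in Ioi 0, ∫⁻ r in Ioi 0, ∫⁻ w in Ioi 0,
        ofReal (1 / (2 * π) * (1 / (1 + w ^ 2)) * (1 / √(r * (r + 4)) * (1 / (k + r + 4)) *
          (1 / √(k * (k + 16 * r * (w ^ 2 / (1 + w ^ 2)) / (k + r + 4) ^ 2))))) := by
    rw [lintegral_I0_mul_K0_pow_three_eq_lintegral₄, lintegral₄_swap_pairs (by fun_prop)]
    refine setLIntegral_setLIntegral_congr_fun measurableSet_Ioi measurableSet_Ioi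
      fun k (hk : 0 < k) r (hr : 0 < r) ↦ ?_
    have hpos : 0 ≤ 1 / π ^ 2 * (1 / √(r * (r + 4))) := by positivity
    have h := congrArg (ofReal (1 / π ^ 2 * (1 / √(r * (r + 4)))) * ·)
      (lintegral_inv_add_mul_fourSinSq hk hr)
    simp only [ofReal_mul_lintegral_ofReal hpos, ofReal_mul_lintegral_lintegral_ofReal hpos] at h
    refine Eq.trans ?_ (h.trans ?_)
    · refine lintegral_congr fun w ↦ lintegral_congr fun z ↦ congrArg ofReal ?_
      ring
    · refine lintegral_congr fun w ↦ congrArg ofReal ?_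
      field_simp
  rw [hkr, ← lintegral₃_rotate (by fun_prop)]

theorem setLIntegral_Ioi_eq_Ioo {c : ℝ} (hc : 0 < c) (g : ℝ → ENNReal) :
    ∫⁻ r in Ioi 0, g r = ∫⁻ q in Ioo 0 1, ofReal (c / q ^ 2) * g (c * (1 - q) / q) := by
  rw [setLIntegral_eq_of_invOn (φ := fun q ↦ c * (1 - q) / q) (φ' := fun q ↦ -(c / q ^ 2))
    (ψ := fun r ↦ c / (r + c)) (s := Ioo 0 1)]
  · simp_rw [abs_neg, abs_div, abs_of_pos hc, abs_sq]
  · exact measurableSet_Ioo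
  · exact fun q hq ↦ div_pos (mul_pos hc (sub_pos.2 hq.2)) hq.1
  · intro r (hr : 0 < r)
    exact ⟨by positivity, (div_lt_one (by positivity)).2 (by linarith)⟩
  · refine ⟨fun q hq ↦ ?_, fun r (hr : 0 < r) ↦ ?_⟩
    · have := hq.1
      field_simp
      ring
    · field_simp
      ring
  · intro q hq
    have hd := (((hasDerivAt_id q).const_sub 1).const_mul c).div (hasDerivAt_id q) hq.1.ne'
    refine hd.congr_deriv ?_
    simp only [id]
    ring

theorem setLIntegral_Ioi_ofReal_eq_Ioo {c : ℝ} (hc : 0 < c) (g : ℝ → ℝ) :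
    ∫⁻ r in Ioi 0, ofReal (g r) = ∫⁻ q in Ioo 0 1, ofReal (c / q ^ 2 * g (c * (1 - q) / q)) := by
  rw [setLIntegral_Ioi_eq_Ioo hc]
  refine lintegral_congr fun q ↦ ?_
  rw [← ENNReal.ofReal_mul (by positivity)]

theorem lintegral_lintegral_Ioi_eq_Ioi_Ioo {F : ℝ → ℝ → ℝ}
    (hF : Measurable fun p : ℝ × ℝ ↦ F p.1 p.2) :
    ∫⁻ k in Ioi 0, ∫⁻ r in Ioi 0, ofReal (F k r) =
      ∫⁻ κ in Ioi 0, ∫⁻ ρ in Ioo 0 1, ofReal (κ * F (κ * ρ) (κ * (1 - ρ))) := by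
  have hmeas {f g h : ℝ × ℝ → ℝ} {ξ : Measure (ℝ × ℝ)} (hf : Measurable f) (hg : Measurable g)
      (hh : Measurable h) : AEMeasurable (fun p ↦ ofReal (f p * F (g p) (h p))) ξ :=
    (hf.mul (hF.comp (hg.prodMk hh))).ennreal_ofReal.aemeasurable
  rw [setLIntegral_congr_fun measurableSet_Ioi fun k hk ↦ setLIntegral_Ioi_ofReal_eq_Ioo hk (F k),
    lintegral_lintegral_swap (hmeas (by fun_prop) (by fun_prop) (by fun_prop)),
    lintegral_lintegral_swap (f := fun κ ρ ↦ ofReal (κ * F (κ * ρ) (κ * (1 - ρ))))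
      (hmeas (by fun_prop) (by fun_prop) (by fun_prop))]
  refine setLIntegral_congr_fun measurableSet_Ioo fun ρ hρ ↦ ?_
  have := hρ.1
  rw [setLIntegral_Ioi_ofReal_eq_mul_left hρ.1]
  refine setLIntegral_congr_fun measurableSet_Ioi fun κ _ ↦ ?_
  rw [← mul_assoc, mul_comm ρ κ]
  congr 2
  · field_simp
  · field_simp

theorem one_sub_mul_pos {x y : ℝ} (hx : x ∈ Ioo (0 : ℝ) 1) (hy : y ∈ Ioo (0 : ℝ) 1) :
    0 < 1 - x * y :=
  sub_pos.2 (mul_lt_one_of_nonneg_of_lt_one_left hx.1.le hx.2 hy.2.le)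

theorem one_sub_moebius {x y : ℝ} (h : 1 - x * y ≠ 0) :
    1 - (1 - x) / (1 - x * y) = x * (1 - y) / (1 - x * y) := by
  rw [one_sub_div h]
  ring

theorem one_sub_moebius_mul {x y : ℝ} (h : 1 - x * y ≠ 0) :
    1 - (1 - x) / (1 - x * y) * y = (1 - y) / (1 - x * y) := by
  rw [div_mul_eq_mul_div, one_sub_div h]
  ring

theorem setLIntegral_Ioo_ofReal_eq_moebius {y : ℝ} (hy : y ∈ Ioo (0 : ℝ) 1) (g : ℝ → ℝ) :
    ∫⁻ x in Ioo 0 1, ofReal (g x) =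
      ∫⁻ x in Ioo 0 1, ofReal ((1 - y) / (1 - x * y) ^ 2 * g ((1 - x) / (1 - x * y))) := by
  have hden {x : ℝ} (hx : x ∈ Ioo (0 : ℝ) 1) : 0 < 1 - x * y := one_sub_mul_pos hx hy
  have hy' : 0 < 1 - y := sub_pos.2 hy.2
  have hmaps : MapsTo (fun x ↦ (1 - x) / (1 - x * y)) (Ioo 0 1) (Ioo 0 1) := fun x hx ↦
    ⟨div_pos (sub_pos.2 hx.2) (hden hx),
      (div_lt_one (hden hx)).2 (by nlinarith [mul_pos hx.1 hy'])⟩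
  have hinv : LeftInvOn (fun x ↦ (1 - x) / (1 - x * y))
      (fun x ↦ (1 - x) / (1 - x * y)) (Ioo 0 1) := fun x hx ↦ by
    have hne := (hden hx).ne'
    simp only [one_sub_moebius hne, one_sub_moebius_mul hne]
    rw [div_div_div_cancel_right₀ hne, mul_div_cancel_right₀ _ hy'.ne']
  rw [setLIntegral_ofReal_eq_of_invOn (φ' := fun x ↦ -((1 - y) / (1 - x * y) ^ 2))
    measurableSet_Ioo hmaps hmaps ⟨hinv, hinv⟩]
  · simp_rw [abs_neg, abs_div, abs_of_pos hy', abs_sq]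
  · intro x hx
    refine (((hasDerivAt_id x).const_sub 1).div
      (((hasDerivAt_id x).mul_const y).const_sub 1) (hden hx).ne').congr_deriv ?_
    simp only [id]
    ring

theorem moebius_integrand_eq {q x s : ℝ} (hq : q ∈ Ioo (0 : ℝ) 1) (hx : x ∈ Ioo (0 : ℝ) 1)
    (hs : 0 ≤ s) {κ ρ b : ℝ} (hκ : κ = 4 * (1 - q) / q) (hb : b = 1 - x * (1 - q))
    (hρ : ρ = (1 - x) / b) :
    4 / q ^ 2 * (q / b ^ 2 * (κ * (1 / √(κ * (1 - ρ) * (κ * (1 - ρ) + 4)) *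
      (1 / (κ * ρ + κ * (1 - ρ) + 4)) *
        (1 / √(κ * ρ * (κ * ρ + 16 * (κ * (1 - ρ)) * s / (κ * ρ + κ * (1 - ρ) + 4) ^ 2)))))) =
      1 / 4 * (1 / √(1 - q) * (1 / √x) * (1 / √(1 - x)) * (1 / √(1 - x * (1 - q ^ 3 * s)))) := by
  obtain ⟨hq0, hq1⟩ := hq
  obtain ⟨hx0, hx1⟩ := hx
  rw [← sub_pos] at hq1 hx1
  have hb_pos : 0 < b := by
    rw [hb]
    nlinarith
  have hr : κ * (1 - ρ) = 4 * (1 - q) * x / b := by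
    rw [hκ, hρ]
    field_simp
    rw [hb]
    ring
  have hk : κ * ρ = 4 * (1 - q) * (1 - x) / (q * b) := by
    rw [hκ, hρ]
    field_simp
  have hr4 : 4 * (1 - q) * x / b + 4 = 4 / b := by
    field_simp
    rw [hb]
    ring
  have hkr4 : 4 * (1 - q) * (1 - x) / (q * b) + 4 * (1 - q) * x / b + 4 = 4 / q := by
    field_simp
    rw [hb]
    ring
  have hsq₁ : 4 * (1 - q) * x / b * (4 / b) = (4 / b) ^ 2 * ((1 - q) * x) := by
    field_simp
  have hsq₂ : 4 * (1 - q) * (1 - x) / (q * b) * (4 * (1 - q) * (1 - x) / (q * b) +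
      16 * (4 * (1 - q) * x / b) * s / (4 / q) ^ 2) =
      (4 * (1 - q) / (q * b)) ^ 2 * ((1 - x) * (1 - x * (1 - q ^ 3 * s))) := by
    field_simp
    ring
  have hlast : 0 < 1 - x * (1 - q ^ 3 * s) := by
    have : 0 ≤ x * (q ^ 3 * s) := by positivity
    linarith
  rw [hr, hk, hr4, hkr4, hsq₁, hsq₂, sqrt_mul (sq_nonneg (4 / b)), sqrt_sq (by positivity),
    sqrt_mul (sq_nonneg (4 * (1 - q) / (q * b))), sqrt_sq (by positivity), sqrt_mul hq1.le,
    sqrt_mul hx1.le, hκ]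
  field_simp

theorem lintegral_lintegral_Ioi_eq_unit_square {s : ℝ} (hs : 0 ≤ s) :
    ∫⁻ k in Ioi 0, ∫⁻ r in Ioi 0, ofReal (1 / √(r * (r + 4)) * (1 / (k + r + 4)) *
        (1 / √(k * (k + 16 * r * s / (k + r + 4) ^ 2)))) =
      ∫⁻ q in Ioo 0 1, ∫⁻ x in Ioo 0 1, ofReal (1 / 4 * (1 / √(1 - q) * (1 / √x) *
        (1 / √(1 - x)) * (1 / √(1 - x * (1 - q ^ 3 * s))))) := by
  rw [lintegral_lintegral_Ioi_eq_Ioi_Ioo (by fun_prop),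
    setLIntegral_Ioi_eq_Ioo four_pos]
  refine setLIntegral_congr_fun measurableSet_Ioo fun q hq ↦ ?_
  rw [setLIntegral_Ioo_ofReal_eq_moebius ⟨sub_pos.2 hq.2, sub_lt_self 1 hq.1⟩, sub_sub_cancel,
    ofReal_mul_lintegral_ofReal (by positivity)]
  refine setLIntegral_congr_fun measurableSet_Ioo fun x hx ↦ ?_
  rw [moebius_integrand_eq hq hx hs rfl rfl rfl]

theorem lintegral_I0_mul_K0_pow_three_eq_unit_square :
    ∫⁻ t in Ioi 0, ofReal ((I0 t * K0 t) ^ 3 * t) =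
      ofReal (1 / (8 * π)) * ∫⁻ w in Ioi 0, ∫⁻ q in Ioo 0 1, ∫⁻ x in Ioo 0 1,
        ofReal (1 / (1 + w ^ 2) * (1 / √(1 - q) * (1 / √x) * (1 / √(1 - x)) *
          (1 / √(1 - x * (1 - q ^ 3 * (w ^ 2 / (1 + w ^ 2))))))) := by
  rw [lintegral_I0_mul_K0_pow_three_eq_lintegral₃,
    ← lintegral_const_mul' _ _ ENNReal.ofReal_ne_top]
  refine setLIntegral_congr_fun measurableSet_Ioi fun w _ ↦ ?_
  rw [← ofReal_mul_lintegral_lintegral_ofReal (by positivity),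
    lintegral_lintegral_Ioi_eq_unit_square (by positivity),
    ofReal_mul_lintegral_lintegral_ofReal (by positivity),
    ofReal_mul_lintegral_lintegral_ofReal (by positivity)]
  congr! 5 with q x
  ring

/-! ### Rising factorials and Euler's integral -/

theorem ris_zero (a : ℝ) : ris a 0 = 1 := by
  simp [ris]

theorem ris_succ (a : ℝ) (n : ℕ) : ris a (n + 1) = ris a n * (a + n) :=
  Finset.prod_range_succ _ _

theorem ris_add (a : ℝ) (m n : ℕ) : ris a (m + n) = ris a m * ris (a + m) n := by
  simp [ris, Finset.prod_range_add, add_assoc]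

theorem ris_pos {a : ℝ} (ha : 0 < a) (n : ℕ) : 0 < ris a n :=
  Finset.prod_pos fun k _ ↦ by positivity

theorem ris_le_ris {a b : ℝ} (ha : 0 < a) (hab : a ≤ b) (n : ℕ) : ris a n ≤ ris b n :=
  Finset.prod_le_prod (fun k _ ↦ by positivity) fun k _ ↦ by gcongr

theorem ris_eq_eval_ascPochhammer (a : ℝ) (n : ℕ) : ris a n = (ascPochhammer ℝ n).eval a := by
  induction n with
  | zero => simp [ris_zero]
  | succ n ih => rw [ascPochhammer_succ_eval, ris_succ, ih]

theorem ris_one (n : ℕ) : ris 1 n = n.factorial := by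
  rw [ris_eq_eval_ascPochhammer, ascPochhammer_eval_one]

theorem Gamma_add_natCast {a : ℝ} (ha : 0 < a) (n : ℕ) :
    Gamma (a + n) = ris a n * Gamma a := by
  induction n with
  | zero => simp [ris_zero]
  | succ n ih =>
    push_cast
    rw [← add_assoc, Gamma_add_one (by positivity), ih, ris_succ]
    ring

theorem beta_comm (a b : ℝ) : beta a b = beta b a := by
  rw [beta, beta, mul_comm, add_comm]

theorem beta_add_natCast_add_natCast {a b : ℝ} (ha : 0 < a) (hb : 0 < b) (m n : ℕ) :
    beta (a + m) (b + n) = ris a m * ris b n / ris (a + b) (m + n) * beta a b := by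
  have hsum : a + m + (b + n) = a + b + (m + n : ℕ) := by
    push_cast
    ring
  rw [beta, beta, hsum, Gamma_add_natCast ha, Gamma_add_natCast hb,
    Gamma_add_natCast (add_pos ha hb)]
  have := ris_pos (add_pos ha hb) (m + n)
  field_simp

theorem beta_add_natCast {a b : ℝ} (ha : 0 < a) (hb : 0 < b) (n : ℕ) :
    beta (a + n) b = ris a n / ris (a + b) n * beta a b := by
  simpa [ris_zero] using beta_add_natCast_add_natCast ha hb n 0

/-- The unnormalised density `x ^ (a - 1) * (1 - x) ^ (b - 1)` of the Beta distribution. -/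
noncomputable def betaWeight (a b x : ℝ) : ℝ := x ^ (a - 1) * (1 - x) ^ (b - 1)

@[fun_prop]
theorem measurable_betaWeight (a b : ℝ) : Measurable (betaWeight a b) := by
  unfold betaWeight
  fun_prop

theorem betaWeight_pos {x : ℝ} (a b : ℝ) (hx : x ∈ Ioo (0 : ℝ) 1) : 0 < betaWeight a b x :=
  mul_pos (rpow_pos_of_pos hx.1 _) (rpow_pos_of_pos (sub_pos.2 hx.2) _)

theorem betaWeight_add_natCast {x : ℝ} (a b : ℝ) (n : ℕ) (hx : x ∈ Ioo (0 : ℝ) 1) :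
    betaWeight (a + n) b x = betaWeight a b x * x ^ n := by
  rw [betaWeight, betaWeight, add_sub_right_comm, rpow_add_natCast hx.1.ne']
  ring

theorem betaWeight_half_half {x : ℝ} (hx : x ∈ Ioo (0 : ℝ) 1) :
    betaWeight (1 / 2) (1 / 2) x = 1 / √x * (1 / √(1 - x)) := by
  rw [betaWeight, show (1 : ℝ) / 2 - 1 = -(1 / 2) by norm_num, rpow_neg hx.1.le,
    rpow_neg (sub_nonneg.2 hx.2.le), ← sqrt_eq_rpow, ← sqrt_eq_rpow, one_div, one_div]

theorem lintegral_betaWeight {a b : ℝ} (ha : 0 < a) (hb : 0 < b) :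
    ∫⁻ x in Ioo 0 1, ofReal (betaWeight a b x) = ofReal (beta a b) := by
  have hpos := beta_pos ha hb
  calc ∫⁻ x in Ioo 0 1, ofReal (betaWeight a b x)
      = ofReal (beta a b) *
          ∫⁻ x in Ioo 0 1, ofReal (1 / beta a b * x ^ (a - 1) * (1 - x) ^ (b - 1)) := by
        rw [ofReal_mul_lintegral_ofReal hpos.le]
        congr! 3 with x
        rw [betaWeight]
        field_simp
    _ = ofReal (beta a b) := by
        rw [← lintegral_betaPDF, lintegral_betaPDF_eq_one ha hb, mul_one]

theorem hasSum_ris_div_factorial_mul_pow (a : ℝ) {u : ℝ} (hu : u ∈ Ico (0 : ℝ) 1) :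
    HasSum (fun n : ℕ ↦ ris a n / n.factorial * u ^ n) ((1 - u) ^ (-a)) := by
  have hchoose (n : ℕ) : Ring.choose (a + n - 1) n = ris a n / n.factorial := by
    rw [ris_eq_eval_ascPochhammer, ← Polynomial.ascPochhammer_smeval_eq_eval,
      ← Ring.factorial_nsmul_multichoose_eq_ascPochhammer, nsmul_eq_mul, Ring.choose,
      mul_div_cancel_left₀ _ (by positivity)]
    congr 1
    ring
  have h := (one_div_one_sub_rpow_hasFPowerSeriesOnBall_zero a).hasSum (y := u) <| by
    rw [Metric.mem_eball, edist_zero_right, ← ofReal_norm, norm_of_nonneg hu.1]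
    exact ENNReal.ofReal_lt_one.2 hu.2
  simp only [zero_add, FormalMultilinearSeries.ofScalars_apply_eq, hchoose, smul_eq_mul] at h
  rwa [rpow_neg (sub_nonneg.2 hu.2.le), ← one_div]

theorem ofReal_one_sub_rpow_neg {a u : ℝ} (ha : 0 < a) (hu : u ∈ Ico (0 : ℝ) 1) :
    ofReal ((1 - u) ^ (-a)) = ∑' n : ℕ, ofReal (ris a n / n.factorial * u ^ n) := by
  have h := hasSum_ris_div_factorial_mul_pow a hu
  have hpos := ris_pos ha
  rw [← h.tsum_eq, ENNReal.ofReal_tsum_of_nonneg (fun n ↦ ?_) h.summable]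
  exact mul_nonneg (div_nonneg (hpos n).le (by positivity)) (pow_nonneg hu.1 n)

/-- The coefficient of `x ^ n` in Gauss' hypergeometric series `₂F₁(a, b; c | x)`. -/
noncomputable def gaussCoeff (a b c : ℝ) (n : ℕ) : ℝ :=
  ris a n * ris b n / (ris c n * n.factorial)

theorem pFq_two_one (a b c x : ℝ) : pFq [a, b] [c] x = ∑' n, gaussCoeff a b c n * x ^ n := by
  simp only [pFq, gaussCoeff, List.map_cons, List.map_nil, List.prod_cons, List.prod_nil, mul_one]
  congr! 2 with n
  ring

theorem gaussCoeff_nonneg {a b c : ℝ} (ha : 0 < a) (hb : 0 < b) (hc : 0 < c) (n : ℕ) :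
    0 ≤ gaussCoeff a b c n := by
  have := ris_pos ha n
  have := ris_pos hb n
  have := ris_pos hc n
  unfold gaussCoeff
  positivity

/-- Euler's integral representation of `₂F₁(a, b; b + c | y)`. -/
theorem lintegral_betaWeight_mul_one_sub_mul_rpow {a b c y : ℝ} (ha : 0 < a) (hb : 0 < b)
    (hc : 0 < c) (hy : y ∈ Icc (0 : ℝ) 1) :
    ∫⁻ x in Ioo 0 1, ofReal (betaWeight b c x * (1 - x * y) ^ (-a)) =
      ∑' n, ofReal (beta b c * (gaussCoeff a b (b + c) n * y ^ n)) := by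
  have hcoeff (n : ℕ) : 0 ≤ ris a n / n.factorial * y ^ n :=
    mul_nonneg (div_nonneg (ris_pos ha n).le (by positivity)) (pow_nonneg hy.1 n)
  have hexpand : ∀ x ∈ Ioo (0 : ℝ) 1, ofReal (betaWeight b c x * (1 - x * y) ^ (-a)) =
      ∑' n : ℕ, ofReal (ris a n / n.factorial * y ^ n * betaWeight (b + n) c x) := fun x hx ↦ by
    have hxy : x * y ∈ Ico (0 : ℝ) 1 :=
      ⟨mul_nonneg hx.1.le hy.1, mul_lt_one_of_nonneg_of_lt_one_left hx.1.le hx.2 hy.2⟩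
    rw [ENNReal.ofReal_mul (betaWeight_pos b c hx).le, ofReal_one_sub_rpow_neg ha hxy,
      ← ENNReal.tsum_mul_left]
    refine tsum_congr fun n ↦ ?_
    rw [← ENNReal.ofReal_mul (betaWeight_pos b c hx).le, betaWeight_add_natCast b c n hx, mul_pow]
    congr 1
    ring
  rw [setLIntegral_congr_fun measurableSet_Ioo hexpand, lintegral_tsum fun n ↦ by fun_prop]
  refine tsum_congr fun n ↦ ?_
  rw [← ofReal_mul_lintegral_ofReal (hcoeff n), lintegral_betaWeight (by positivity) hc,
    ← ENNReal.ofReal_mul (hcoeff n), beta_add_natCast hb hc, gaussCoeff]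
  congr 1
  ring

/-! ### Mixed moments of products of Beta variables -/

/-- The mixed moment `∫ V ^ j * (1 - V) ^ n` of `V = X * Y ^ k`, where `X` and `Y` are independent
with unnormalised Beta densities of parameters `(a, b)` and `(c, d)`. -/
noncomputable def betaMoment (k : ℕ) (a b c d : ℝ) (j n : ℕ) : ENNReal :=
  ∫⁻ X in Ioo 0 1, ∫⁻ Y in Ioo 0 1, ofReal (betaWeight a b X * betaWeight c d Y *
    ((X * Y ^ k) ^ j * (1 - X * Y ^ k) ^ n))

theorem mul_pow_mem_Icc {x y : ℝ} (k : ℕ) (hx : x ∈ Ioo (0 : ℝ) 1) (hy : y ∈ Ioo (0 : ℝ) 1) :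
    x * y ^ k ∈ Icc (0 : ℝ) 1 :=
  unitInterval.mul_mem ⟨hx.1.le, hx.2.le⟩ ⟨pow_nonneg hy.1.le k, pow_le_one₀ hy.1.le hy.2.le⟩

theorem betaMoment_eq_add (k : ℕ) (a b c d : ℝ) (j n : ℕ) :
    betaMoment k a b c d j n =
      betaMoment k a b c d j (n + 1) + betaMoment k a b c d (j + 1) n := by
  simp only [betaMoment]
  rw [← lintegral_lintegral_add_left (by fun_prop)]
  refine setLIntegral_setLIntegral_congr_fun measurableSet_Ioo measurableSet_Ioo
    fun X hX Y hY ↦ ?_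
  have hV := mul_pow_mem_Icc k hX hY
  have := hV.1
  have := sub_nonneg.2 hV.2
  have := betaWeight_pos a b hX
  have := betaWeight_pos c d hY
  rw [← ENNReal.ofReal_add (by positivity) (by positivity)]
  congr 1
  ring

theorem betaMoment_zero_right (k : ℕ) {a b c d : ℝ} (ha : 0 < a) (hb : 0 < b) (hc : 0 < c)
    (hd : 0 < d) (j : ℕ) :
    betaMoment k a b c d j 0 = ofReal (beta (a + j) b * beta (c + (k * j : ℕ)) d) := by
  rw [ENNReal.ofReal_mul (beta_pos (by positivity) hb).le,
    ← lintegral_betaWeight (by positivity) hb, ← lintegral_betaWeight (by positivity) hd,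
    ← lintegral_mul_const _ (by fun_prop)]
  refine setLIntegral_congr_fun measurableSet_Ioo fun X hX ↦ ?_
  rw [ofReal_mul_lintegral_ofReal (betaWeight_pos _ _ hX).le]
  refine setLIntegral_congr_fun measurableSet_Ioo fun Y hY ↦ ?_
  rw [betaWeight_add_natCast a b j hX, betaWeight_add_natCast c d _ hY, pow_mul]
  congr 1
  ring

/-- The powers of `V` determine all its mixed moments, as `1 - V` is reached by subtraction. -/
theorem betaMoment_eq_mul_of_pow {k k' : ℕ} {a b c d a' b' c' d' : ℝ} {C : ENNReal}
    (hfin : ∀ j, betaMoment k a b c d j 0 ≠ ⊤)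
    (h : ∀ j, betaMoment k a b c d j 0 = C * betaMoment k' a' b' c' d' j 0) (j n : ℕ) :
    betaMoment k a b c d j n = C * betaMoment k' a' b' c' d' j n := by
  have hle (j n : ℕ) : betaMoment k a b c d j n ≤ betaMoment k a b c d j 0 := by
    induction n with
    | zero => rfl
    | succ n ih => exact (betaMoment_eq_add k a b c d j n ▸ le_self_add).trans ih
  induction n generalizing j with
  | zero => exact h j
  | succ n ih =>
    rw [← ENNReal.add_left_inj (ne_top_of_le_ne_top (hfin (j + 1)) (hle (j + 1) n)),
      ← betaMoment_eq_add, ih, ih, betaMoment_eq_add, mul_add]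

theorem betaWeight_moebius_mul_one_sub_mul_pow (a b : ℝ) (n : ℕ) {x y : ℝ}
    (hx : x ∈ Ioo (0 : ℝ) 1) (hy : y ∈ Ioo (0 : ℝ) 1) :
    (1 - y) / (1 - x * y) ^ 2 * (betaWeight a b ((1 - x) / (1 - x * y)) *
        (1 - (1 - x) / (1 - x * y) * y) ^ n) =
      (1 - y) ^ (b + n) * (betaWeight b a x * (1 - x * y) ^ (-(a + b + n))) := by
  have hx' := sub_pos.2 hx.2
  have hy' := sub_pos.2 hy.2
  have hxy := one_sub_mul_pos hx hy
  have hneg : -(a + b + n) = -(a - 1 + (b - 1) + (n + 2 : ℕ)) := by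
    push_cast
    ring
  rw [betaWeight, betaWeight, one_sub_moebius hxy.ne', one_sub_moebius_mul hxy.ne',
    div_rpow hx'.le hxy.le, div_rpow (mul_pos hx.1 hy').le hxy.le, mul_rpow hx.1.le hy'.le,
    show b + n = b - 1 + n + 1 by ring, rpow_add_one hy'.ne', rpow_add_natCast hy'.ne', hneg,
    rpow_neg hxy.le, rpow_add_natCast hxy.ne', rpow_add hxy, div_pow, pow_add _ n 2]
  field_simp

theorem betaMoment_one_zero_left {a b c d : ℝ} (ha : 0 < a) (hb : 0 < b) (hc : 0 < c) (hd : 0 < d)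
    (n : ℕ) :
    betaMoment 1 a b c d 0 n =
      ∑' m : ℕ, ofReal (beta b a * gaussCoeff (a + b + n) b (b + a) m *
        beta (c + m) (d + b + n)) := by
  have hmoebius : ∀ Y ∈ Ioo (0 : ℝ) 1, ∫⁻ X in Ioo 0 1, ofReal (betaWeight a b X *
        betaWeight c d Y * ((X * Y ^ 1) ^ 0 * (1 - X * Y ^ 1) ^ n)) =
      ∑' m : ℕ, ofReal (beta b a * gaussCoeff (a + b + n) b (b + a) m *
        betaWeight (c + m) (d + b + n) Y) := fun Y hY ↦ by
    have hy' := sub_pos.2 hY.2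
    have hweight : 0 ≤ betaWeight c d Y * (1 - Y) ^ (b + n) :=
      mul_nonneg (betaWeight_pos c d hY).le (by positivity)
    calc ∫⁻ X in Ioo 0 1, ofReal (betaWeight a b X * betaWeight c d Y *
          ((X * Y ^ 1) ^ 0 * (1 - X * Y ^ 1) ^ n))
        = ∫⁻ X in Ioo 0 1, ofReal (betaWeight c d Y * (1 - Y) ^ (b + n) *
            (betaWeight b a X * (1 - X * Y) ^ (-(a + b + n)))) := by
          rw [setLIntegral_Ioo_ofReal_eq_moebius hY]
          refine setLIntegral_congr_fun measurableSet_Ioo fun X hX ↦ ?_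
          simp only [pow_one, pow_zero, one_mul, mul_assoc,
            ← betaWeight_moebius_mul_one_sub_mul_pow a b n hX hY]
          congr 1
          ring
      _ = ∑' m : ℕ, ofReal (beta b a * gaussCoeff (a + b + n) b (b + a) m *
            betaWeight (c + m) (d + b + n) Y) := by
          rw [← ofReal_mul_lintegral_ofReal hweight,
            lintegral_betaWeight_mul_one_sub_mul_rpow (by positivity) hb ha ⟨hY.1.le, hY.2.le⟩,
            ← ENNReal.tsum_mul_left]
          refine tsum_congr fun m ↦ ?_
          rw [← ENNReal.ofReal_mul hweight, betaWeight_add_natCast _ _ _ hY, betaWeight, betaWeight,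
            show d + b + n - 1 = d - 1 + (b + n) by ring, rpow_add hy' (d - 1)]
          congr 1
          ring
  rw [betaMoment, lintegral_lintegral_swap (by fun_prop),
    setLIntegral_congr_fun measurableSet_Ioo hmoebius, lintegral_tsum fun m ↦ by fun_prop]
  refine tsum_congr fun m ↦ ?_
  have hpos : 0 ≤ beta b a * gaussCoeff (a + b + n) b (b + a) m :=
    mul_nonneg (beta_pos hb ha).le (gaussCoeff_nonneg (by positivity) hb (by positivity) m)
  rw [← ofReal_mul_lintegral_ofReal hpos, lintegral_betaWeight (by positivity) (by positivity),
    ← ENNReal.ofReal_mul hpos]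

theorem beta_one_half : beta 1 (1 / 2) = 2 := by
  have hGamma := Gamma_add_one (s := 1 / 2) (by norm_num)
  have := Gamma_pos_of_pos (by norm_num : (0 : ℝ) < 1 / 2)
  rw [beta, add_comm (1 : ℝ) (1 / 2), hGamma, Gamma_one]
  field_simp

theorem beta_half_half : beta (1 / 2) (1 / 2) = π := by
  rw [beta, add_halves, Gamma_one, Gamma_one_half_eq, mul_self_sqrt pi_pos.le, div_one]

theorem ris_half_mul_ris_one_three_mul (j : ℕ) :
    ris (1 / 2) j / ris (1 / 2 + 1 / 2) j * (ris 1 (3 * j) / ris (1 + 1 / 2) (3 * j)) =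
      ris (2 / 3) j / ris (2 / 3 + 1 / 6) j * (ris (1 / 3) j / ris (1 / 3 + 5 / 6) j) := by
  induction j with
  | zero => simp [ris_zero]
  | succ j ih =>
    have := ris_pos (by norm_num : (0 : ℝ) < 1 + 1 / 2) (3 * j)
    have := ris_pos (by norm_num : (0 : ℝ) < 1 / 2 + 1 / 2) j
    have := ris_pos (by norm_num : (0 : ℝ) < 2 / 3 + 1 / 6) j
    have := ris_pos (by norm_num : (0 : ℝ) < 1 / 3 + 5 / 6) j
    rw [show 3 * (j + 1) = 3 * j + 1 + 1 + 1 by ring]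
    simp only [ris_succ]
    calc _ = ris (1 / 2) j / ris (1 / 2 + 1 / 2) j * (ris 1 (3 * j) / ris (1 + 1 / 2) (3 * j)) *
          ((2 / 3 + j) / (2 / 3 + 1 / 6 + j) * ((1 / 3 + j) / (1 / 3 + 5 / 6 + j))) := by
          push_cast
          field_simp
          ring
      _ = _ := by
          rw [ih]
          field_simp

theorem betaMoment_three_eq_mul_betaMoment_one (j n : ℕ) :
    betaMoment 3 (1 / 2) (1 / 2) 1 (1 / 2) j n =
      ofReal (2 * π / (beta (2 / 3) (1 / 6) * beta (1 / 3) (5 / 6))) *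
        betaMoment 1 (2 / 3) (1 / 6) (1 / 3) (5 / 6) j n := by
  have hpow (j : ℕ) := betaMoment_zero_right (a := 1 / 2) (b := 1 / 2) (c := 1) (d := 1 / 2) 3
    (by norm_num) (by norm_num) (by norm_num) (by norm_num) j
  refine betaMoment_eq_mul_of_pow (fun j ↦ hpow j ▸ ENNReal.ofReal_ne_top) (fun j ↦ ?_) j n
  have hbeta₁ := beta_pos (by norm_num : (0 : ℝ) < 2 / 3) (by norm_num : (0 : ℝ) < 1 / 6)
  have hbeta₂ := beta_pos (by norm_num : (0 : ℝ) < 1 / 3) (by norm_num : (0 : ℝ) < 5 / 6)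
  rw [hpow, betaMoment_zero_right _ (by norm_num) (by norm_num) (by norm_num) (by norm_num),
    ← ENNReal.ofReal_mul (by positivity), one_mul]
  congr 1
  simp only [beta_add_natCast (by norm_num : (0 : ℝ) < 1 / 2) (by norm_num : (0 : ℝ) < 1 / 2),
    beta_add_natCast (by norm_num : (0 : ℝ) < 1) (by norm_num : (0 : ℝ) < 1 / 2),
    beta_add_natCast (by norm_num : (0 : ℝ) < 2 / 3) (by norm_num : (0 : ℝ) < 1 / 6),
    beta_add_natCast (by norm_num : (0 : ℝ) < 1 / 3) (by norm_num : (0 : ℝ) < 5 / 6),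
    beta_one_half, beta_half_half]
  calc _ = 2 * π * (ris (1 / 2) j / ris (1 / 2 + 1 / 2) j *
        (ris 1 (3 * j) / ris (1 + 1 / 2) (3 * j))) := by ring
    _ = _ := by
        rw [ris_half_mul_ris_one_three_mul]
        field_simp

theorem tsum_ofReal_mul_betaMoment (k : ℕ) (a b c d : ℝ) {u : ℕ → ℝ} (hu : ∀ n, 0 ≤ u n)
    (j m : ℕ → ℕ) :
    ∑' n, ofReal (u n) * betaMoment k a b c d (j n) (m n) =
      ∫⁻ X in Ioo 0 1, ∫⁻ Y in Ioo 0 1, ofReal (betaWeight a b X * betaWeight c d Y) *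
        ∑' n, ofReal (u n * ((X * Y ^ k) ^ j n * (1 - X * Y ^ k) ^ m n)) := by
  have hterm (n : ℕ) : ofReal (u n) * betaMoment k a b c d (j n) (m n) =
      ∫⁻ X in Ioo 0 1, ∫⁻ Y in Ioo 0 1, ofReal (betaWeight a b X * betaWeight c d Y) *
        ofReal (u n * ((X * Y ^ k) ^ j n * (1 - X * Y ^ k) ^ m n)) := by
    rw [betaMoment, ofReal_mul_lintegral_lintegral_ofReal (hu n)]
    refine setLIntegral_setLIntegral_congr_fun measurableSet_Ioo measurableSet_Ioo
      fun X hX Y hY ↦ ?_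
    rw [← ENNReal.ofReal_mul (mul_pos (betaWeight_pos a b hX) (betaWeight_pos c d hY)).le]
    congr 1
    ring
  simp_rw [hterm, ← ENNReal.tsum_mul_left]
  rw [← lintegral_tsum fun n ↦ (Measurable.lintegral_prod_right (by fun_prop)).aemeasurable]
  exact lintegral_congr fun X ↦ (lintegral_tsum fun n ↦ by fun_prop).symm

/-! ### Reduction to a series of Beta moments -/

theorem setLIntegral_Ioo_betaWeight_half_half_mul (g : ℝ → ENNReal) :
    ∫⁻ σ in Ioo 0 1, ofReal (betaWeight (1 / 2) (1 / 2) σ) * g σ =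
      ∫⁻ w in Ioi 0, ofReal (2 / (1 + w ^ 2)) * g (w ^ 2 / (1 + w ^ 2)) := by
  have hone_sub (w : ℝ) : 1 - w ^ 2 / (1 + w ^ 2) = 1 / (1 + w ^ 2) := by
    field_simp
    ring
  have hmaps : MapsTo (fun w : ℝ ↦ w ^ 2 / (1 + w ^ 2)) (Ioi 0) (Ioo 0 1) := fun w hw ↦ by
    have hw : 0 < w := hw
    exact ⟨by positivity, by rw [div_lt_one (by positivity)]; linarith⟩
  have hinv : InvOn (fun σ : ℝ ↦ √(σ / (1 - σ))) (fun w : ℝ ↦ w ^ 2 / (1 + w ^ 2))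
      (Ioi 0) (Ioo 0 1) := by
    refine ⟨fun w hw ↦ ?_, fun σ hσ ↦ ?_⟩
    · simp only [hone_sub]
      rw [div_div_div_cancel_right₀ (by positivity), div_one, sqrt_sq (mem_Ioi.1 hw).le]
    · have hσ' := sub_pos.2 hσ.2
      simp only [sq_sqrt (div_pos hσ.1 hσ').le]
      field_simp
      ring
  rw [setLIntegral_eq_of_invOn measurableSet_Ioi hmaps
    (fun σ hσ ↦ sqrt_pos.2 (div_pos hσ.1 (sub_pos.2 hσ.2))) hinv fun w _ ↦
      (hasDerivAt_pow 2 w).div ((hasDerivAt_pow 2 w).const_add 1) (by positivity)]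
  refine setLIntegral_congr_fun measurableSet_Ioi fun w hw ↦ ?_
  have hw₀ : 0 < w := hw
  have hderiv : (2 : ℕ) * w ^ (2 - 1) * (1 + w ^ 2) - w ^ 2 * ((2 : ℕ) * w ^ (2 - 1)) = 2 * w := by
    push_cast
    ring
  have hsqrt := sq_sqrt (by positivity : 0 ≤ 1 + w ^ 2)
  have := sqrt_pos.2 (by positivity : 0 < 1 + w ^ 2)
  simp only [hderiv]
  rw [← mul_assoc, ← ENNReal.ofReal_mul (abs_nonneg _), abs_of_pos (by positivity),
    betaWeight_half_half (hmaps hw), hone_sub, sqrt_div (sq_nonneg w), sqrt_sq hw₀.le,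
    sqrt_div zero_le_one, sqrt_one]
  congr 2
  field_simp
  rw [hsqrt]

theorem betaWeight_one_half {x : ℝ} (hx : x ∈ Ioo (0 : ℝ) 1) :
    betaWeight 1 (1 / 2) x = 1 / √(1 - x) := by
  rw [betaWeight, sub_self, rpow_zero, one_mul, show (1 : ℝ) / 2 - 1 = -(1 / 2) by norm_num,
    rpow_neg (sub_nonneg.2 hx.2.le), ← sqrt_eq_rpow, one_div]

theorem lintegral_inv_sqrt_mul_eq_tsum_gaussCoeff {y q : ℝ} (hy : y ∈ Icc (0 : ℝ) 1)
    (hq : q ∈ Ioo (0 : ℝ) 1) :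
    ∫⁻ x in Ioo 0 1, ofReal (1 / √(1 - q) * (1 / √x) * (1 / √(1 - x)) * (1 / √(1 - x * y))) =
      ofReal π * (ofReal (betaWeight 1 (1 / 2) q) *
        ∑' n, ofReal (gaussCoeff (1 / 2) (1 / 2) 1 n * y ^ n)) := by
  calc ∫⁻ x in Ioo 0 1, ofReal (1 / √(1 - q) * (1 / √x) * (1 / √(1 - x)) * (1 / √(1 - x * y)))
      = ofReal (betaWeight 1 (1 / 2) q) * ∫⁻ x in Ioo 0 1,
          ofReal (betaWeight (1 / 2) (1 / 2) x * (1 - x * y) ^ (-(1 / 2) : ℝ)) := by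
        rw [ofReal_mul_lintegral_ofReal (betaWeight_pos _ _ hq).le]
        refine setLIntegral_congr_fun measurableSet_Ioo fun x hx ↦ ?_
        have hxy : 0 ≤ 1 - x * y := sub_nonneg.2 (mul_le_one₀ hx.2.le hy.1 hy.2)
        rw [betaWeight_one_half hq, betaWeight_half_half hx, rpow_neg hxy, ← sqrt_eq_rpow, one_div]
        congr 1
        ring
    _ = _ := by
        rw [lintegral_betaWeight_mul_one_sub_mul_rpow (by norm_num) (by norm_num) (by norm_num) hy,
          add_halves, beta_half_half]
        simp_rw [ENNReal.ofReal_mul pi_pos.le, ENNReal.tsum_mul_left]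
        rw [mul_left_comm]

theorem lintegral_I0_mul_K0_pow_three_eq_unit_cube :
    ∫⁻ t in Ioi 0, ofReal ((I0 t * K0 t) ^ 3 * t) =
      ofReal (1 / (16 * π)) * ∫⁻ σ in Ioo 0 1, ofReal (betaWeight (1 / 2) (1 / 2) σ) *
        ∫⁻ q in Ioo 0 1, ∫⁻ x in Ioo 0 1, ofReal (1 / √(1 - q) * (1 / √x) * (1 / √(1 - x)) *
          (1 / √(1 - x * (1 - q ^ 3 * σ)))) := by
  rw [lintegral_I0_mul_K0_pow_three_eq_unit_square,
    setLIntegral_Ioo_betaWeight_half_half_mul,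
    show 1 / (8 * π) = 1 / (16 * π) * 2 by ring, ENNReal.ofReal_mul (by positivity), mul_assoc,
    ← lintegral_const_mul' _ _ ENNReal.ofReal_ne_top]
  congr 1
  refine lintegral_congr fun w ↦ ?_
  rw [ofReal_mul_lintegral_lintegral_ofReal zero_le_two,
    ofReal_mul_lintegral_lintegral_ofReal (by positivity)]
  simp_rw [← mul_assoc, mul_one_div]

theorem lintegral_I0_mul_K0_pow_three_eq_tsum_betaMoment_three :
    ∫⁻ t in Ioi 0, ofReal ((I0 t * K0 t) ^ 3 * t) = ofReal (1 / 16) *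
      ∑' n, ofReal (gaussCoeff (1 / 2) (1 / 2) 1 n) *
        betaMoment 3 (1 / 2) (1 / 2) 1 (1 / 2) 0 n := by
  rw [lintegral_I0_mul_K0_pow_three_eq_unit_cube, tsum_ofReal_mul_betaMoment 3 _ _ _ _
      (gaussCoeff_nonneg (by norm_num) (by norm_num) (by norm_num)) (fun _ ↦ 0) (fun n ↦ n),
    show 1 / 16 = 1 / (16 * π) * π by field_simp, ENNReal.ofReal_mul (by positivity), mul_assoc,
    ← lintegral_const_mul' (ofReal π) _ ENNReal.ofReal_ne_top]
  congr 1
  refine setLIntegral_congr_fun measurableSet_Ioo fun σ hσ ↦ ?_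
  rw [← lintegral_const_mul' _ _ ENNReal.ofReal_ne_top,
    ← lintegral_const_mul' _ _ ENNReal.ofReal_ne_top]
  refine setLIntegral_congr_fun measurableSet_Ioo fun q hq ↦ ?_
  have hV := mul_pow_mem_Icc 3 hσ hq
  rw [mul_comm] at hV
  simp only [pow_zero, one_mul, mul_comm σ]
  rw [lintegral_inv_sqrt_mul_eq_tsum_gaussCoeff ⟨sub_nonneg.2 hV.2, sub_le_self _ hV.1⟩ hq,
    mul_left_comm, ENNReal.ofReal_mul (betaWeight_pos _ _ hσ).le, mul_assoc]

theorem gaussCoeff_add_natCast {c : ℝ} (hc : 0 < c) (b : ℝ) (m n : ℕ) :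
    gaussCoeff (c + n) b c m = ris c (n + m) * ris b m / (ris c n * ris c m * m.factorial) := by
  have := ris_pos hc n
  rw [gaussCoeff, ris_add]
  field_simp

theorem pi_mul_beta_third_one :
    π * beta (1 / 3) 1 = beta (1 / 2) (1 / 3) * beta (1 / 2) (5 / 6) := by
  have := Gamma_pos_of_pos (by norm_num : (0 : ℝ) < 5 / 6)
  rw [beta, beta, beta, Gamma_one, Gamma_one_half_eq, show (1 : ℝ) / 2 + 1 / 3 = 5 / 6 by norm_num,
    show (1 : ℝ) / 2 + 5 / 6 = 1 / 3 + 1 by norm_num, ← mul_self_sqrt pi_pos.le,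
    sqrt_mul_self (sqrt_nonneg π)]
  field_simp

theorem gaussCoeff_mul_beta_third_eq_gaussCoeff_mul_beta_half (m n : ℕ) :
    gaussCoeff (1 / 2) (1 / 2) 1 n *
        (π * (gaussCoeff (5 / 6 + n) (1 / 6) (5 / 6) m * beta (1 / 3 + m) (1 + n))) =
      gaussCoeff (1 / 6) (1 / 3) (5 / 6) m * (beta (1 / 2) (1 / 3) *
        gaussCoeff (5 / 6 + m) (1 / 2) (5 / 6) n * beta (1 / 2 + n) (5 / 6 + m)) := by
  have := ris_pos (by norm_num : (0 : ℝ) < 4 / 3) (m + n)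
  have := ris_pos (by norm_num : (0 : ℝ) < 5 / 6) m
  have := ris_pos (by norm_num : (0 : ℝ) < 5 / 6) n
  have := ris_pos (by norm_num : (0 : ℝ) < 1) n
  rw [gaussCoeff_add_natCast (by norm_num), gaussCoeff_add_natCast (by norm_num),
    beta_add_natCast_add_natCast (by norm_num) (by norm_num),
    beta_add_natCast_add_natCast (by norm_num) (by norm_num), gaussCoeff, gaussCoeff,
    show (1 : ℝ) / 3 + 1 = 4 / 3 by norm_num, show (1 : ℝ) / 2 + 5 / 6 = 4 / 3 by norm_num,
    add_comm n m]
  field_simp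
  linear_combination ris (1 / 2) n ^ 2 * ris (5 / 6) (m + n) * ris (1 / 6) m * ris (1 / 3) m *
    pi_mul_beta_third_one

/-- Summing over `n` first, the Gauss series in `n` is again a Beta moment. -/
theorem lintegral_I0_mul_K0_pow_three_eq_tsum_betaMoment_one :
    ∫⁻ t in Ioi 0, ofReal ((I0 t * K0 t) ^ 3 * t) = ofReal (1 / (8 * beta (1 / 3) (5 / 6))) *
      ∑' m, ofReal (gaussCoeff (1 / 6) (1 / 3) (5 / 6) m) *
        betaMoment 1 (1 / 3) (1 / 2) (1 / 2) (1 / 3) 0 m := by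
  have hbeta₁ := beta_pos (by norm_num : (0 : ℝ) < 2 / 3) (by norm_num : (0 : ℝ) < 1 / 6)
  have hbeta₂ := beta_pos (by norm_num : (0 : ℝ) < 1 / 3) (by norm_num : (0 : ℝ) < 5 / 6)
  rw [lintegral_I0_mul_K0_pow_three_eq_tsum_betaMoment_three]
  simp_rw [betaMoment_three_eq_mul_betaMoment_one,
    betaMoment_one_zero_left (by norm_num : (0 : ℝ) < 2 / 3) (by norm_num : (0 : ℝ) < 1 / 6)
      (by norm_num : (0 : ℝ) < 1 / 3) (by norm_num : (0 : ℝ) < 5 / 6),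
    betaMoment_one_zero_left (by norm_num : (0 : ℝ) < 1 / 3) (by norm_num : (0 : ℝ) < 1 / 2)
      (by norm_num : (0 : ℝ) < 1 / 2) (by norm_num : (0 : ℝ) < 1 / 3), ← ENNReal.tsum_mul_left]
  rw [ENNReal.tsum_comm]
  refine tsum_congr fun m ↦ tsum_congr fun n ↦ ?_
  have hhalf := gaussCoeff_nonneg (by norm_num : (0 : ℝ) < 1 / 2)
    (by norm_num : (0 : ℝ) < 1 / 2) one_pos n
  have hsixth := gaussCoeff_nonneg (by norm_num : (0 : ℝ) < 1 / 6)
    (by norm_num : (0 : ℝ) < 1 / 3) (by norm_num : (0 : ℝ) < 5 / 6) m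
  rw [← ENNReal.ofReal_mul (by positivity), ← ENNReal.ofReal_mul hhalf,
    ← ENNReal.ofReal_mul (by norm_num), ← ENNReal.ofReal_mul hsixth,
    ← ENNReal.ofReal_mul (by positivity), beta_comm (1 / 6),
    show (2 : ℝ) / 3 + 1 / 6 = 5 / 6 by norm_num, show (1 : ℝ) / 6 + 2 / 3 = 5 / 6 by norm_num,
    show (5 : ℝ) / 6 + 1 / 6 = 1 by norm_num, show (1 : ℝ) / 3 + 1 / 2 = 5 / 6 by norm_num,
    show (1 : ℝ) / 2 + 1 / 3 = 5 / 6 by norm_num,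
    ← gaussCoeff_mul_beta_third_eq_gaussCoeff_mul_beta_half]
  congr 1
  field_simp
  ring

/-! ### Gauss' hypergeometric equation -/

section PowerSeries

open Asymptotics

variable {c : ℕ → ℝ} {k : ℕ}

theorem summable_mul_pow_of_isBigO (hc : c =O[atTop] fun n ↦ ((n ^ k : ℕ) : ℝ)) {y : ℝ}
    (hy : |y| < 1) : Summable fun n ↦ c n * y ^ n :=
  (summable_norm_mul_geometric_of_norm_lt_one' hy hc).of_norm

theorem isBigO_succ_mul_succ (hc : c =O[atTop] fun n ↦ ((n ^ k : ℕ) : ℝ)) :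
    (fun n : ℕ ↦ ((n : ℝ) + 1) * c (n + 1)) =O[atTop] fun n ↦ ((n ^ (k + 1) : ℕ) : ℝ) := by
  have hsucc : (fun n : ℕ ↦ (n : ℝ) + 1) =O[atTop] fun n : ℕ ↦ (n : ℝ) :=
    .of_bound 2 <| (eventually_ge_atTop 1).mono fun n hn ↦ by
      have : (1 : ℝ) ≤ n := by exact_mod_cast hn
      rw [norm_of_nonneg (by positivity), norm_of_nonneg (by positivity)]
      linarith
  have hshift : (fun n ↦ c (n + 1)) =O[atTop] fun n : ℕ ↦ (n : ℝ) ^ k := by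
    refine (hc.comp_tendsto (tendsto_add_atTop_nat 1)).trans ?_
    simpa [Function.comp_def] using hsucc.pow k
  simpa [pow_succ'] using hsucc.mul hshift

theorem hasDerivAt_tsum_mul_pow (hc : c =O[atTop] fun n ↦ ((n ^ k : ℕ) : ℝ)) {y : ℝ}
    (hy : |y| < 1) :
    HasDerivAt (fun y ↦ ∑' n, c n * y ^ n) (∑' n : ℕ, ((n : ℝ) + 1) * c (n + 1) * y ^ n) y := by
  obtain ⟨r, hyr, hr⟩ := exists_between hy
  have hr₀ : 0 < r := (abs_nonneg y).trans_lt hyr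
  have hterm {z : ℝ} (hz : |z| ≤ r) (n : ℕ) :
      ‖c n * (n * z ^ (n - 1))‖ ≤ ‖c n * (n * r ^ (n - 1))‖ := by
    simp only [norm_mul, norm_pow]
    gcongr
    simpa [abs_of_pos hr₀] using hz
  have hsum : Summable fun n : ℕ ↦ ‖c n * (n * r ^ (n - 1))‖ := by
    refine (summable_nat_add_iff 1).1 <| (summable_norm_mul_geometric_of_norm_lt_one'
      (by rwa [norm_of_nonneg hr₀.le]) (isBigO_succ_mul_succ hc)).congr fun n ↦ ?_
    push_cast
    congr 1
    ring
  refine (hasDerivAt_tsum_of_isPreconnected hsum isOpen_Ioo isPreconnected_Ioo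
    (fun n z _ ↦ (hasDerivAt_pow n z).const_mul (c n))
    (fun n z hz ↦ hterm (abs_lt.2 hz).le n) (y₀ := y) (abs_lt.1 hyr)
    (summable_mul_pow_of_isBigO hc hy) (abs_lt.1 hyr)).congr_deriv ?_
  rw [(Summable.of_norm_bounded hsum fun n ↦ hterm hyr.le n).tsum_eq_zero_add]
  simp only [Nat.cast_zero, zero_mul, mul_zero, zero_add, Nat.cast_add, Nat.cast_one,
    add_tsub_cancel_right]
  exact tsum_congr fun n ↦ by ring

theorem continuousOn_tsum_mul_pow (hc₀ : ∀ n, 0 ≤ c n) (hc : Summable c) :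
    ContinuousOn (fun y ↦ ∑' n, c n * y ^ n) (Icc 0 1) := by
  refine continuousOn_tsum (fun n ↦ by fun_prop) hc fun n y hy ↦ ?_
  rw [norm_of_nonneg (mul_nonneg (hc₀ n) (pow_nonneg hy.1 n))]
  exact mul_le_of_le_one_right (hc₀ n) (pow_le_one₀ hy.1 hy.2)

theorem hasSum_mul_pow_of_succ {S y : ℝ} (hc₀ : c 0 = 0)
    (h : HasSum (fun n ↦ c (n + 1) * y ^ n) S) : HasSum (fun n ↦ c n * y ^ n) (y * S) := by
  rw [← hasSum_nat_add_iff' 1]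
  simpa [hc₀, pow_succ', mul_left_comm] using h.mul_left y

end PowerSeries

theorem gaussCoeff_zero (a b c : ℝ) : gaussCoeff a b c 0 = 1 := by
  simp [gaussCoeff, ris_zero]

theorem gaussCoeff_succ {c : ℝ} (hc : 0 < c) (a b : ℝ) (n : ℕ) :
    (n + 1) * (c + n) * gaussCoeff a b c (n + 1) = (a + n) * (b + n) * gaussCoeff a b c n := by
  have := ris_pos hc n
  rw [gaussCoeff, gaussCoeff, ris_succ, ris_succ, ris_succ, Nat.factorial_succ]
  push_cast
  field_simp

section GaussSeries

variable {a b c : ℝ}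

theorem gaussCoeff_le_one (ha : 0 < a) (hb : 0 < b) (hac : a ≤ c) (hb' : b ≤ 1) (n : ℕ) :
    gaussCoeff a b c n ≤ 1 := by
  have hc := ris_pos (ha.trans_le hac) n
  rw [gaussCoeff, div_le_one (by positivity), ← ris_one]
  exact mul_le_mul (ris_le_ris ha hac n) (ris_le_ris hb hb' n) (ris_pos hb n).le hc.le

theorem gaussCoeff_isBigO (ha : 0 < a) (hb : 0 < b) (hac : a ≤ c) (hb' : b ≤ 1) :
    gaussCoeff a b c =O[atTop] fun n ↦ ((n ^ 0 : ℕ) : ℝ) :=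
  .of_bound 1 <| .of_forall fun n ↦ by
    rw [norm_of_nonneg (gaussCoeff_nonneg ha hb (ha.trans_le hac) n)]
    simpa using gaussCoeff_le_one ha hb hac hb' n

theorem hasSum_pFq_two_one (ha : 0 < a) (hb : 0 < b) (hac : a ≤ c) (hb' : b ≤ 1) {y : ℝ}
    (hy : |y| < 1) : HasSum (fun n ↦ gaussCoeff a b c n * y ^ n) (pFq [a, b] [c] y) :=
  pFq_two_one a b c y ▸
    (summable_mul_pow_of_isBigO (gaussCoeff_isBigO ha hb hac hb') hy).hasSum

theorem pFq_two_one_zero (a b c : ℝ) : pFq [a, b] [c] 0 = 1 := by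
  rw [pFq_two_one, tsum_eq_single 0 fun n hn ↦ by simp [hn], gaussCoeff_zero, pow_zero, one_mul]

theorem hasSum_gaussCoeff (ha : 0 < a) (hb : 0 < b) (habc : a + b < c) :
    HasSum (gaussCoeff a b c) (beta b (c - b - a) / beta b (c - b)) := by
  have hcb : 0 < c - b := by linarith
  have hcba : 0 < c - b - a := by linarith
  have hbeta := beta_pos hb hcb
  have hcoeff := gaussCoeff_nonneg ha hb (by linarith : 0 < c)
  have hEuler : ofReal (beta b (c - b - a)) =
      ∑' n, ofReal (beta b (c - b) * gaussCoeff a b c n) := by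
    have h := lintegral_betaWeight_mul_one_sub_mul_rpow ha hb hcb (right_mem_Icc.2 zero_le_one)
    simp only [add_sub_cancel, one_pow, mul_one] at h
    rw [← h, ← lintegral_betaWeight hb hcba]
    refine setLIntegral_congr_fun measurableSet_Ioo fun x hx ↦ ?_
    rw [betaWeight, betaWeight, mul_assoc, ← rpow_add (sub_pos.2 hx.2)]
    ring_nf
  have hfin : ∑' n, ofReal (beta b (c - b) * gaussCoeff a b c n) ≠ ⊤ :=
    hEuler ▸ ENNReal.ofReal_ne_top
  have hsum := ENNReal.hasSum_toReal hfin
  rw [← ENNReal.tsum_toReal_eq fun n ↦ ENNReal.ofReal_ne_top, ← hEuler,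
    ENNReal.toReal_ofReal (beta_pos hb hcba).le] at hsum
  simp only [ENNReal.toReal_ofReal (mul_nonneg hbeta.le (hcoeff _))] at hsum
  simpa [hbeta.ne', div_eq_inv_mul] using hsum.mul_left (beta b (c - b))⁻¹

theorem pFq_two_one_one (ha : 0 < a) (hb : 0 < b) (habc : a + b < c) :
    pFq [a, b] [c] 1 = beta b (c - b - a) / beta b (c - b) := by
  simpa [pFq_two_one] using (hasSum_gaussCoeff ha hb habc).tsum_eq

theorem continuousOn_pFq_two_one (ha : 0 < a) (hb : 0 < b) (habc : a + b < c) :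
    ContinuousOn (fun y ↦ pFq [a, b] [c] y) (Icc 0 1) := by
  simpa only [pFq_two_one] using continuousOn_tsum_mul_pow
    (gaussCoeff_nonneg ha hb (by linarith)) (hasSum_gaussCoeff ha hb habc).summable

end GaussSeries

/-- `f`, with first and second derivatives `f'` and `f''`, solves Gauss' hypergeometric equation
with parameters `a`, `b`, `c` on `(0, 1)`. -/
structure SolvesGaussEquation (a b c : ℝ) (f f' f'' : ℝ → ℝ) : Prop where
  hasDerivAt : ∀ y ∈ Ioo (0 : ℝ) 1, HasDerivAt f (f' y) y
  hasDerivAt_deriv : ∀ y ∈ Ioo (0 : ℝ) 1, HasDerivAt f' (f'' y) y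
  equation : ∀ y ∈ Ioo (0 : ℝ) 1,
    y * (1 - y) * f'' y + (c - (a + b + 1) * y) * f' y = a * b * f y

theorem exists_solvesGaussEquation_pFq {a b c : ℝ} (ha : 0 < a) (hb : 0 < b) (hac : a ≤ c)
    (hb' : b ≤ 1) : ∃ f' f'', SolvesGaussEquation a b c (fun y ↦ pFq [a, b] [c] y) f' f'' := by
  have hcoeff := gaussCoeff_isBigO ha hb hac hb'
  have hcoeff' := isBigO_succ_mul_succ hcoeff
  have hcoeff'' := isBigO_succ_mul_succ hcoeff'
  have habs {y : ℝ} (hy : y ∈ Ioo (0 : ℝ) 1) : |y| < 1 := (abs_of_pos hy.1).trans_lt hy.2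
  set g := gaussCoeff a b c
  refine ⟨_, _, fun y hy ↦ ?_, fun y hy ↦ hasDerivAt_tsum_mul_pow hcoeff' (habs hy),
    fun y hy ↦ ?_⟩
  · simp_rw [pFq_two_one]
    exact hasDerivAt_tsum_mul_pow hcoeff (habs hy)
  have hsum := hasSum_pFq_two_one ha hb hac hb' (habs hy)
  have hsum' := (summable_mul_pow_of_isBigO hcoeff' (habs hy)).hasSum
  have hsum'' := (summable_mul_pow_of_isBigO hcoeff'' (habs hy)).hasSum
  push_cast at hsum'' ⊢
  set S' := ∑' n : ℕ, ((n : ℝ) + 1) * g (n + 1) * y ^ n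
  set S'' := ∑' n : ℕ, ((n : ℝ) + 1) * ((n + 1 + 1) * g (n + 1 + 1)) * y ^ n
  have hy_mul : HasSum (fun n : ℕ ↦ n * g n * y ^ n) (y * S') :=
    hasSum_mul_pow_of_succ (by simp) (by simpa using hsum')
  have hy_mul'' : HasSum (fun n : ℕ ↦ n * ((n + 1) * g (n + 1)) * y ^ n) (y * S'') :=
    hasSum_mul_pow_of_succ (by simp) (by simpa using hsum'')
  have hy_sq_mul'' : HasSum (fun n : ℕ ↦ n * ((n - 1) * g n) * y ^ n) (y * (y * S'')) := by
    refine hasSum_mul_pow_of_succ (by simp) (hy_mul''.congr_fun fun n ↦ ?_)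
    push_cast
    ring
  have hzero := ((((hy_mul''.sub hy_sq_mul'').add (hsum'.mul_left c)).sub
    (hy_mul.mul_left (a + b + 1))).sub (hsum.mul_left (a * b))).unique
      (hasSum_zero.congr_fun fun n ↦ ?_)
  · linear_combination hzero
  · linear_combination y ^ n * gaussCoeff_succ (ha.trans_le hac) a b n

namespace SolvesGaussEquation

variable {a b c : ℝ} {f f' f'' g g' g'' : ℝ → ℝ}

theorem reflect (h : SolvesGaussEquation a b c f f' f'') :
    SolvesGaussEquation a b (a + b + 1 - c) (fun y ↦ f (1 - y)) (fun y ↦ -f' (1 - y))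
      (fun y ↦ f'' (1 - y)) where
  hasDerivAt y hy :=
    ((h.hasDerivAt _ (Ioo.one_sub_mem hy)).comp y
      ((hasDerivAt_id y).const_sub 1)).congr_deriv (by ring)
  hasDerivAt_deriv y hy :=
    ((h.hasDerivAt_deriv _ (Ioo.one_sub_mem hy)).comp y
      ((hasDerivAt_id y).const_sub 1)).neg.congr_deriv (by ring)
  equation y hy := by linear_combination h.equation _ (Ioo.one_sub_mem hy)

theorem add_const_mul (hf : SolvesGaussEquation a b c f f' f'')
    (hg : SolvesGaussEquation a b c g g' g'') (k : ℝ) :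
    SolvesGaussEquation a b c (fun y ↦ f y + k * g y) (fun y ↦ f' y + k * g' y)
      (fun y ↦ f'' y + k * g'' y) where
  hasDerivAt y hy := (hf.hasDerivAt y hy).add ((hg.hasDerivAt y hy).const_mul k)
  hasDerivAt_deriv y hy := (hf.hasDerivAt_deriv y hy).add ((hg.hasDerivAt_deriv y hy).const_mul k)
  equation y hy := by linear_combination hf.equation y hy + k * hg.equation y hy

theorem neg (h : SolvesGaussEquation a b c f f' f'') :
    SolvesGaussEquation a b c (-f) (-f') (-f'') where
  hasDerivAt y hy := (h.hasDerivAt y hy).neg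
  hasDerivAt_deriv y hy := (h.hasDerivAt_deriv y hy).neg
  equation y hy := by
    simp only [Pi.neg_apply]
    linear_combination -h.equation y hy

theorem rpow_mul {s : ℝ} (h : SolvesGaussEquation (a + s) (b + s) (1 + s) f f' f'') :
    SolvesGaussEquation a b (1 - s) (fun y ↦ y ^ s * f y)
      (fun y ↦ s * y ^ (s - 1) * f y + y ^ s * f' y)
      (fun y ↦ s * (s - 1) * y ^ (s - 1 - 1) * f y + 2 * s * y ^ (s - 1) * f' y +
        y ^ s * f'' y) where
  hasDerivAt y hy := (hasDerivAt_rpow_const (.inl hy.1.ne')).mul (h.hasDerivAt y hy)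
  hasDerivAt_deriv y hy :=
    ((((hasDerivAt_rpow_const (.inl hy.1.ne')).const_mul s).mul (h.hasDerivAt y hy)).add
      ((hasDerivAt_rpow_const (.inl hy.1.ne')).mul (h.hasDerivAt_deriv y hy))).congr_deriv
        (by ring)
  equation y hy := by
    have hy₀ := hy.1
    rw [rpow_sub_one hy₀.ne', rpow_sub_one hy₀.ne']
    field_simp
    linear_combination y * h.equation y hy

theorem deriv_deriv_eq (h : SolvesGaussEquation a b c f f' f'') {y : ℝ}
    (hy : y ∈ Ioo (0 : ℝ) 1) : deriv (deriv f) y = f'' y := by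
  have hderiv : deriv f =ᶠ[𝓝 y] f' := by
    filter_upwards [Ioo_mem_nhds hy.1 hy.2] with x hx using (h.hasDerivAt x hx).deriv
  rw [hderiv.deriv_eq, (h.hasDerivAt_deriv y hy).deriv]

/-- At a positive interior maximum the equation would force `f'' > 0`. -/
theorem nonpos (h : SolvesGaussEquation a b c f f' f'') (hab : 0 < a * b)
    (hf : ContinuousOn f (Icc 0 1)) (hf₀ : f 0 ≤ 0) (hf₁ : f 1 ≤ 0) {y : ℝ}
    (hy : y ∈ Icc (0 : ℝ) 1) : f y ≤ 0 := by
  obtain ⟨m, hm, hmax⟩ := isCompact_Icc.exists_isMaxOn (nonempty_Icc.2 zero_le_one) hf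
  refine (hmax hy).trans (le_of_not_gt fun hpos ↦ ?_)
  have hm' : m ∈ Ioo (0 : ℝ) 1 :=
    ⟨hm.1.lt_of_ne fun hm₀ ↦ hpos.not_ge (hm₀ ▸ hf₀),
      hm.2.lt_of_ne fun hm₁ ↦ hpos.not_ge (hm₁ ▸ hf₁)⟩
  have hlocmax : IsLocalMax f m := hmax.isLocalMax (Icc_mem_nhds hm'.1 hm'.2)
  have hderiv : f' m = 0 := hlocmax.hasDerivAt_eq_zero (h.hasDerivAt m hm')
  have hsecond : 0 < f'' m := by
    have hequation := h.equation m hm'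
    rw [hderiv, mul_zero, add_zero] at hequation
    exact pos_of_mul_pos_right (hequation ▸ mul_pos hab hpos)
      (mul_pos hm'.1 (sub_pos.2 hm'.2)).le
  have hlocmin : IsLocalMin f m := isLocalMin_of_deriv_deriv_pos
    (by rwa [h.deriv_deriv_eq hm']) (by rw [(h.hasDerivAt m hm').deriv, hderiv])
    (h.hasDerivAt m hm').continuousAt
  have hconst : f =ᶠ[𝓝 m] fun _ ↦ f m := by
    filter_upwards [hlocmin, hlocmax] with x hx hx' using le_antisymm hx' hx
  refine hsecond.ne' ?_
  rw [← h.deriv_deriv_eq hm', hconst.deriv.deriv_eq]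
  simp

theorem eq_zero (h : SolvesGaussEquation a b c f f' f'') (hab : 0 < a * b)
    (hf : ContinuousOn f (Icc 0 1)) (hf₀ : f 0 = 0) (hf₁ : f 1 = 0) {y : ℝ}
    (hy : y ∈ Icc (0 : ℝ) 1) : f y = 0 :=
  le_antisymm (h.nonpos hab hf hf₀.le hf₁.le hy) <| neg_nonpos.1 <|
    h.neg.nonpos hab hf.neg (by simp [hf₀]) (by simp [hf₁]) hy

end SolvesGaussEquation

/-- Both sides solve the same hypergeometric equation and agree at `y = 0`; the hypothesis on `k`
is their agreement at `y = 1`. -/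
theorem pFq_two_one_one_sub_add {a b s k y : ℝ} (ha : 0 < a) (hb : 0 < b) (hs : 0 < s)
    (habs : a + b + s < 1)
    (hk : 1 + k * pFq [a + s, b + s] [1 + s] 1
      = pFq [a, b] [a + b + s] 1 * pFq [a, b] [1 - s] 1)
    (hy : y ∈ Icc (0 : ℝ) 1) :
    pFq [a, b] [a + b + s] (1 - y) + k * (y ^ s * pFq [a + s, b + s] [1 + s] y)
      = pFq [a, b] [a + b + s] 1 * pFq [a, b] [1 - s] y := by
  obtain ⟨f', f'', hf⟩ := exists_solvesGaussEquation_pFq (c := a + b + s) ha hb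
    (by linarith) (by linarith)
  obtain ⟨g', g'', hg⟩ := exists_solvesGaussEquation_pFq (a := a + s) (b := b + s) (c := 1 + s)
    (by linarith) (by linarith) (by linarith) (by linarith)
  obtain ⟨h', h'', hh⟩ := exists_solvesGaussEquation_pFq (c := 1 - s) ha hb
    (by linarith) (by linarith)
  have hf_reflect := hf.reflect
  rw [show a + b + 1 - (a + b + s) = 1 - s by ring] at hf_reflect
  have hf_cont : ContinuousOn (fun y ↦ pFq [a, b] [a + b + s] (1 - y)) (Icc 0 1) :=
    (continuousOn_pFq_two_one ha hb (by linarith)).comp (by fun_prop) fun y ↦ Icc.one_sub_mem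
  have hg_cont : ContinuousOn (fun y ↦ pFq [a + s, b + s] [1 + s] y) (Icc 0 1) :=
    continuousOn_pFq_two_one (by linarith) (by linarith) (by linarith)
  have hh_cont : ContinuousOn (fun y ↦ pFq [a, b] [1 - s] y) (Icc 0 1) :=
    continuousOn_pFq_two_one ha hb (by linarith)
  have hpow_cont : ContinuousOn (fun y : ℝ ↦ y ^ s) (Icc 0 1) :=
    (Real.continuous_rpow_const hs.le).continuousOn
  have hzero := ((hf_reflect.add_const_mul hg.rpow_mul k).add_const_mul hh
    (-pFq [a, b] [a + b + s] 1)).eq_zero (mul_pos ha hb)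
    ((hf_cont.add ((hpow_cont.mul hg_cont).const_mul k)).add (hh_cont.const_mul _))
    (by simp [zero_rpow hs.ne', pFq_two_one_zero]) (by
      simp only [sub_self, pFq_two_one_zero, one_rpow]
      linear_combination hk) hy
  linear_combination hzero

/-! ### Integrated connection formula -/

theorem pFq_nonneg {a b : List ℝ} {x : ℝ} (ha : ∀ p ∈ a, 0 < p) (hb : ∀ q ∈ b, 0 < q)
    (hx : 0 ≤ x) : 0 ≤ pFq a b x := by
  have hprod {l : List ℝ} (hl : ∀ p ∈ l, 0 < p) (n : ℕ) : 0 ≤ (l.map fun p ↦ ris p n).prod :=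
    List.prod_nonneg fun y hy ↦ by
      obtain ⟨p, hp, rfl⟩ := List.mem_map.1 hy
      exact (ris_pos (hl p hp) n).le
  exact tsum_nonneg fun n ↦ div_nonneg
    (mul_nonneg (div_nonneg (hprod ha n) (hprod hb n)) (pow_nonneg hx n)) (Nat.cast_nonneg _)

theorem pFq_two_one_nonneg {a b c y : ℝ} (ha : 0 < a) (hb : 0 < b) (hc : 0 < c) (hy : 0 ≤ y) :
    0 ≤ pFq [a, b] [c] y :=
  pFq_nonneg (by simp [ha, hb]) (by simp [hc]) hy

theorem tsum_ofReal_gaussCoeff_mul_pow {a b c y : ℝ} (ha : 0 < a) (hb : 0 < b) (habc : a + b < c)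
    (hy : y ∈ Icc (0 : ℝ) 1) :
    ∑' n, ofReal (gaussCoeff a b c n * y ^ n) = ofReal (pFq [a, b] [c] y) := by
  have hcoeff := gaussCoeff_nonneg ha hb (by linarith : 0 < c)
  have hterm (n : ℕ) : 0 ≤ gaussCoeff a b c n * y ^ n := mul_nonneg (hcoeff n) (pow_nonneg hy.1 n)
  rw [pFq_two_one, ENNReal.ofReal_tsum_of_nonneg hterm]
  exact .of_nonneg_of_le hterm
    (fun n ↦ mul_le_of_le_one_right (hcoeff n) (pow_le_one₀ hy.1 hy.2))
    (hasSum_gaussCoeff ha hb habc).summable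

theorem betaWeight_add {x : ℝ} (a b s : ℝ) (hx : 0 < x) :
    betaWeight (a + s) b x = x ^ s * betaWeight a b x := by
  rw [betaWeight, betaWeight, add_sub_right_comm, rpow_add hx]
  ring

theorem tsum_gaussCoeff_mul_betaMoment_add {a b s κ : ℝ} (k : ℕ) (p q r t : ℝ) (ha : 0 < a)
    (hb : 0 < b) (hs : 0 < s) (habs : a + b + s < 1) (hκ₀ : 0 ≤ κ)
    (hκ : 1 + κ * pFq [a + s, b + s] [1 + s] 1
      = pFq [a, b] [a + b + s] 1 * pFq [a, b] [1 - s] 1) :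
    ∑' n, ofReal (gaussCoeff a b (a + b + s) n) * betaMoment k p q r t 0 n +
        ofReal κ * ∑' n, ofReal (gaussCoeff (a + s) (b + s) (1 + s) n) *
          betaMoment k (p + s) q (r + k * s) t n 0 =
      ofReal (pFq [a, b] [a + b + s] 1) *
        ∑' n, ofReal (gaussCoeff a b (1 - s) n) * betaMoment k p q r t n 0 := by
  have hF₁ := pFq_two_one_nonneg ha hb (by positivity : 0 < a + b + s) zero_le_one
  rw [tsum_ofReal_mul_betaMoment _ _ _ _ _
      (gaussCoeff_nonneg ha hb (by positivity)) (fun _ ↦ 0) (fun n ↦ n),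
    tsum_ofReal_mul_betaMoment _ _ _ _ _
      (gaussCoeff_nonneg (by positivity) (by positivity) (by positivity)) (fun n ↦ n) (fun _ ↦ 0),
    tsum_ofReal_mul_betaMoment _ _ _ _ _
      (gaussCoeff_nonneg ha hb (by linarith)) (fun n ↦ n) (fun _ ↦ 0)]
  simp_rw [← lintegral_const_mul' _ _ ENNReal.ofReal_ne_top, pow_zero, one_mul, mul_one]
  rw [← lintegral_lintegral_add_left (by fun_prop)]
  refine setLIntegral_setLIntegral_congr_fun measurableSet_Ioo measurableSet_Ioo
    fun X hX Y hY ↦ ?_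
  have hXY := mul_pow_mem_Icc k hX hY
  have hF := pFq_two_one_nonneg ha hb (by positivity : 0 < a + b + s) (sub_nonneg.2 hXY.2)
  have hG := pFq_two_one_nonneg (by positivity : 0 < a + s) (by positivity : 0 < b + s)
    (by positivity : 0 < 1 + s) hXY.1
  have hweight := (mul_pos (betaWeight_pos p q hX) (betaWeight_pos r t hY)).le
  have hweight' := (mul_pos (betaWeight_pos (p + s) q hX) (betaWeight_pos (r + k * s) t hY)).le
  rw [tsum_ofReal_gaussCoeff_mul_pow ha hb (by linarith) (Icc.one_sub_mem hXY),
    tsum_ofReal_gaussCoeff_mul_pow (by positivity) (by positivity) (by linarith) hXY,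
    tsum_ofReal_gaussCoeff_mul_pow ha hb (by linarith) hXY,
    ← ENNReal.ofReal_mul hweight, ← ENNReal.ofReal_mul hweight', ← ENNReal.ofReal_mul hweight,
    ← ENNReal.ofReal_mul hκ₀, ← ENNReal.ofReal_mul hF₁,
    ← ENNReal.ofReal_add (mul_nonneg hweight hF)
      (mul_nonneg hκ₀ (mul_nonneg hweight' hG)),
    betaWeight_add p q s hX.1, betaWeight_add r t _ hY.1, rpow_natCast_mul hY.1.le]
  have hconnection := pFq_two_one_one_sub_add ha hb hs habs hκ hXY
  rw [mul_rpow hX.1.le (pow_nonneg hY.1.le k)] at hconnection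
  congr 1
  linear_combination betaWeight p q X * betaWeight r t Y * hconnection

theorem tsum_ofReal_gaussCoeff_mul_betaMoment_one {a b c p q r t : ℝ} (ha : 0 < a) (hb : 0 < b)
    (habc : a + b < c) (hp : 0 < p) (hq : 0 < q) (hr : 0 < r) (ht : 0 < t) :
    ∑' n, ofReal (gaussCoeff a b c n) * betaMoment 1 p q r t n 0 =
      ofReal (beta p q * beta r t * pFq [a, b, p, r] [c, p + q, r + t] 1) := by
  have hcoeff := gaussCoeff_nonneg ha hb (by linarith : 0 < c)
  have hratio {x y : ℝ} (hx : 0 < x) (hy : 0 < y) (n : ℕ) :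
      ris x n / ris (x + y) n ∈ Icc (0 : ℝ) 1 :=
    ⟨(div_pos (ris_pos hx n) (ris_pos (add_pos hx hy) n)).le,
      div_le_one_of_le₀ (ris_le_ris hx (by linarith) n) (ris_pos (add_pos hx hy) n).le⟩
  have hratios (n : ℕ) := unitInterval.mul_mem (hratio hp hq n) (hratio hr ht n)
  have hterm (n : ℕ) := mul_nonneg (hcoeff n) (hratios n).1
  have hpFq : pFq [a, b, p, r] [c, p + q, r + t] 1 =
      ∑' n, gaussCoeff a b c n * (ris p n / ris (p + q) n * (ris r n / ris (r + t) n)) := by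
    refine tsum_congr fun n ↦ ?_
    simp only [gaussCoeff, List.map_cons, List.map_nil, List.prod_cons, List.prod_nil, one_pow]
    ring
  have hsummable : Summable fun n ↦
      gaussCoeff a b c n * (ris p n / ris (p + q) n * (ris r n / ris (r + t) n)) :=
    .of_nonneg_of_le hterm (fun n ↦ mul_le_of_le_one_right (hcoeff n) (hratios n).2)
      (hasSum_gaussCoeff ha hb habc).summable
  rw [hpFq, ENNReal.ofReal_mul (mul_pos (beta_pos hp hq) (beta_pos hr ht)).le,
    ENNReal.ofReal_tsum_of_nonneg hterm hsummable, ← ENNReal.tsum_mul_left]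
  refine tsum_congr fun n ↦ ?_
  rw [betaMoment_zero_right 1 hp hq hr ht, ← ENNReal.ofReal_mul (hcoeff n),
    ← ENNReal.ofReal_mul (mul_pos (beta_pos hp hq) (beta_pos hr ht)).le, one_mul,
    beta_add_natCast hp hq, beta_add_natCast hr ht]
  congr 1
  ring

/-! ### Gamma values and the final evaluation -/

theorem Gamma_sixth_mul_Gamma_five_sixths : Gamma (1 / 6) * Gamma (5 / 6) = 2 * π := by
  have h := Gamma_mul_Gamma_one_sub (1 / 6)
  rw [mul_one_div, sin_pi_div_six] at h
  norm_num only at h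
  rw [h]
  ring

theorem Gamma_two_thirds : Gamma (2 / 3) = 2 * √π ^ 2 / (√3 * Gamma (1 / 3)) := by
  have := Gamma_pos_of_pos (by norm_num : (0 : ℝ) < 1 / 3)
  have h := Gamma_mul_Gamma_one_sub (1 / 3)
  rw [mul_one_div, sin_pi_div_three, show (1 : ℝ) - 1 / 3 = 2 / 3 by norm_num] at h
  rw [sq_sqrt pi_pos.le]
  field_simp at h ⊢
  linear_combination h

theorem Gamma_sixth :
    Gamma (1 / 6) = Gamma (1 / 3) ^ 2 * 2 ^ (2 / 3 : ℝ) * √3 / (2 * √π) := by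
  have := Gamma_pos_of_pos (by norm_num : (0 : ℝ) < 1 / 3)
  have h := Gamma_mul_Gamma_add_half (1 / 6)
  rw [show (1 : ℝ) / 6 + 1 / 2 = 2 / 3 by norm_num, show 2 * ((1 : ℝ) / 6) = 1 / 3 by norm_num,
    show (1 : ℝ) - 1 / 3 = 2 / 3 by norm_num, Gamma_two_thirds] at h
  field_simp at h ⊢
  linear_combination h

theorem Gamma_five_sixths :
    Gamma (5 / 6) = 4 * √π ^ 3 / (Gamma (1 / 3) ^ 2 * 2 ^ (2 / 3 : ℝ) * √3) := by
  have := Gamma_pos_of_pos (by norm_num : (0 : ℝ) < 1 / 3)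
  have h := Gamma_sixth_mul_Gamma_five_sixths
  rw [Gamma_sixth, ← sq_sqrt pi_pos.le] at h
  rw [sqrt_sq (sqrt_nonneg π)] at h
  field_simp at h ⊢
  linear_combination h

theorem Gamma_seven_sixths : Gamma (7 / 6) = Gamma (1 / 6) / 6 := by
  rw [show (7 : ℝ) / 6 = 1 / 6 + 1 by norm_num, Gamma_add_one (by norm_num)]
  ring

theorem Gamma_four_thirds : Gamma (4 / 3) = Gamma (1 / 3) / 3 := by
  rw [show (4 : ℝ) / 3 = 1 / 3 + 1 by norm_num, Gamma_add_one (by norm_num)]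
  ring

theorem pFq_sixth_third_five_sixths_one :
    pFq [1 / 6, 1 / 3] [5 / 6] 1 = beta (1 / 3) (1 / 3) / beta (1 / 3) (1 / 2) := by
  rw [pFq_two_one_one (by norm_num) (by norm_num) (by norm_num)]
  norm_num only

theorem pFq_sixth_third_two_thirds_one :
    pFq [1 / 6, 1 / 3] [2 / 3] 1 = beta (1 / 3) (1 / 6) / beta (1 / 3) (1 / 3) := by
  rw [pFq_two_one_one (by norm_num) (by norm_num) (by norm_num)]
  norm_num only

theorem pFq_half_two_thirds_four_thirds_one :
    pFq [1 / 2, 2 / 3] [4 / 3] 1 = beta (2 / 3) (1 / 6) / beta (2 / 3) (2 / 3) := by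
  rw [pFq_two_one_one (by norm_num) (by norm_num) (by norm_num)]
  norm_num only

theorem pFq_five_sixths_one_mul_pFq_two_thirds_one :
    pFq [1 / 6, 1 / 3] [5 / 6] 1 * pFq [1 / 6, 1 / 3] [2 / 3] 1 = 2 := by
  have := beta_pos (by norm_num : (0 : ℝ) < 1 / 3) (by norm_num : (0 : ℝ) < 1 / 3)
  have := Gamma_pos_of_pos (by norm_num : (0 : ℝ) < 1 / 3)
  have := Gamma_pos_of_pos (by norm_num : (0 : ℝ) < 5 / 6)
  calc pFq [1 / 6, 1 / 3] [5 / 6] 1 * pFq [1 / 6, 1 / 3] [2 / 3] 1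
      = beta (1 / 3) (1 / 6) / beta (1 / 3) (1 / 2) := by
        rw [pFq_sixth_third_five_sixths_one, pFq_sixth_third_two_thirds_one]
        field_simp
    _ = Gamma (1 / 6) * Gamma (5 / 6) / √π ^ 2 := by
        rw [beta, beta, show (1 : ℝ) / 3 + 1 / 6 = 1 / 2 by norm_num,
          show (1 : ℝ) / 3 + 1 / 2 = 5 / 6 by norm_num, Gamma_one_half_eq]
        field_simp
    _ = 2 := by
        rw [Gamma_sixth_mul_Gamma_five_sixths, sq_sqrt pi_pos.le]
        field_simp

theorem pFq_perm_right (a : List ℝ) {b b' : List ℝ} (h : b.Perm b') (x : ℝ) :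
    pFq a b x = pFq a b' x := by
  simp only [pFq, (h.map _).prod_eq]

theorem toReal_eq_sub_of_add_ofReal_eq {x : ENNReal} {a b : ℝ} (ha : 0 ≤ a) (hb : 0 ≤ b)
    (h : x + ofReal a = ofReal b) : x.toReal = b - a := by
  have hx : x ≠ ⊤ := ne_top_of_le_ne_top ENNReal.ofReal_ne_top (h ▸ le_self_add)
  rw [eq_sub_iff_add_eq, ← ENNReal.toReal_ofReal hb, ← h,
    ENNReal.toReal_add hx ENNReal.ofReal_ne_top, ENNReal.toReal_ofReal ha]

theorem tsum_gaussCoeff_mul_betaMoment_zero_left_add :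
    ∑' n, ofReal (gaussCoeff (1 / 6) (1 / 3) (5 / 6) n) *
          betaMoment 1 (1 / 3) (1 / 2) (1 / 2) (1 / 3) 0 n +
        ofReal (beta (2 / 3) (2 / 3) / beta (2 / 3) (1 / 6)) *
          ofReal (beta (2 / 3) (1 / 2) * beta (5 / 6) (1 / 3) *
            pFq [1 / 2, 2 / 3, 2 / 3, 5 / 6] [7 / 6, 7 / 6, 4 / 3] 1) =
      ofReal (beta (1 / 3) (1 / 3) / beta (1 / 3) (1 / 2)) *
        ofReal (beta (1 / 3) (1 / 2) * beta (1 / 2) (1 / 3) *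
          pFq [1 / 6, 1 / 3, 1 / 3, 1 / 2] [2 / 3, 5 / 6, 5 / 6] 1) := by
  have hbeta₁ := beta_pos (by norm_num : (0 : ℝ) < 2 / 3) (by norm_num : (0 : ℝ) < 2 / 3)
  have hbeta₂ := beta_pos (by norm_num : (0 : ℝ) < 2 / 3) (by norm_num : (0 : ℝ) < 1 / 6)
  have h := tsum_gaussCoeff_mul_betaMoment_add (a := 1 / 6) (b := 1 / 3) (s := 1 / 3)
    (κ := beta (2 / 3) (2 / 3) / beta (2 / 3) (1 / 6)) 1 (1 / 3) (1 / 2) (1 / 2) (1 / 3)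
    (by norm_num) (by norm_num) (by norm_num) (by norm_num) (by positivity) (by
      norm_num only
      rw [pFq_five_sixths_one_mul_pFq_two_thirds_one, pFq_half_two_thirds_four_thirds_one]
      field_simp
      norm_num)
  rw [tsum_ofReal_gaussCoeff_mul_betaMoment_one (by norm_num) (by norm_num) (by norm_num)
      (by norm_num) (by norm_num) (by norm_num) (by norm_num),
    tsum_ofReal_gaussCoeff_mul_betaMoment_one (by norm_num) (by norm_num) (by norm_num)
      (by norm_num) (by norm_num) (by norm_num) (by norm_num)] at h
  norm_num only at h
  have hperm : [(4 : ℝ) / 3, 7 / 6, 7 / 6].Perm [7 / 6, 7 / 6, 4 / 3] :=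
    List.perm_append_comm (l₁ := [4 / 3])
  rwa [pFq_sixth_third_five_sixths_one, pFq_perm_right _ hperm] at h

theorem toReal_tsum_gaussCoeff_mul_betaMoment_zero_left :
    (∑' n, ofReal (gaussCoeff (1 / 6) (1 / 3) (5 / 6) n) *
        betaMoment 1 (1 / 3) (1 / 2) (1 / 2) (1 / 3) 0 n).toReal =
      beta (1 / 3) (1 / 3) * beta (1 / 2) (1 / 3) *
          pFq [1 / 6, 1 / 3, 1 / 3, 1 / 2] [2 / 3, 5 / 6, 5 / 6] 1 -
        beta (2 / 3) (2 / 3) / beta (2 / 3) (1 / 6) *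
            (beta (2 / 3) (1 / 2) * beta (5 / 6) (1 / 3)) *
          pFq [1 / 2, 2 / 3, 2 / 3, 5 / 6] [7 / 6, 7 / 6, 4 / 3] 1 := by
  have h := tsum_gaussCoeff_mul_betaMoment_zero_left_add
  have hF₁ : 0 ≤ pFq [1 / 6, 1 / 3, 1 / 3, 1 / 2] [2 / 3, 5 / 6, 5 / 6] 1 :=
    pFq_nonneg (by norm_num) (by norm_num) zero_le_one
  have hF₂ : 0 ≤ pFq [1 / 2, 2 / 3, 2 / 3, 5 / 6] [7 / 6, 7 / 6, 4 / 3] 1 :=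
    pFq_nonneg (by norm_num) (by norm_num) zero_le_one
  have hsixth : (0 : ℝ) < 1 / 6 := by norm_num
  have hthird : (0 : ℝ) < 1 / 3 := by norm_num
  have hhalf : (0 : ℝ) < 1 / 2 := by norm_num
  have htwo_thirds : (0 : ℝ) < 2 / 3 := by norm_num
  have hfive_sixths : (0 : ℝ) < 5 / 6 := by norm_num
  have := beta_pos hthird hthird
  have := beta_pos hthird hhalf
  have := beta_pos hhalf hthird
  have := beta_pos htwo_thirds htwo_thirds
  have := beta_pos htwo_thirds hsixth
  have := beta_pos htwo_thirds hhalf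
  have := beta_pos hfive_sixths hthird
  rw [← ENNReal.ofReal_mul (by positivity), ← ENNReal.ofReal_mul (by positivity)] at h
  rw [toReal_eq_sub_of_add_ofReal_eq (by positivity) (by positivity) h]
  field_simp

theorem two_rpow_two_thirds_pow_three : ((2 : ℝ) ^ (2 / 3 : ℝ)) ^ 3 = 4 := by
  rw [← rpow_mul_natCast zero_le_two]
  norm_num

theorem pi_rpow_five_halves : π ^ ((5 : ℝ) / 2) = √π ^ 5 := by
  rw [sqrt_eq_rpow, ← rpow_mul_natCast pi_pos.le]
  norm_num

theorem sqrt_three_pow_four : √(3 : ℝ) ^ 4 = 9 := by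
  rw [pow_mul √3 2 2, sq_sqrt zero_le_three]
  norm_num

theorem pi_sq_mul_beta_eq_Gamma_third_div_sqrt_pi_pow_nine :
    2 * π ^ 2 / (3 * beta (1 / 3) (5 / 6)) * (beta (1 / 3) (1 / 3) * beta (1 / 2) (1 / 3)) =
      4 * π ^ ((5 : ℝ) / 2) / √3 * (√3 / 64 * (Gamma (1 / 3) / √π) ^ 9) := by
  have := Gamma_pos_of_pos (by norm_num : (0 : ℝ) < 1 / 3)
  have hpi : π ^ 2 = √π ^ 4 := by rw [pow_mul √π 2 2, sq_sqrt pi_pos.le]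
  rw [beta, beta, beta, pi_rpow_five_halves, hpi]
  norm_num only
  rw [Gamma_seven_sixths, Gamma_five_sixths, Gamma_two_thirds, Gamma_sixth, Gamma_one_half_eq]
  field_simp
  rw [two_rpow_two_thirds_pow_three, sqrt_three_pow_four]
  norm_num

theorem pi_sq_mul_beta_eq_sqrt_pi_div_Gamma_third_pow_nine :
    2 * π ^ 2 / (3 * beta (1 / 3) (5 / 6)) * (beta (2 / 3) (2 / 3) / beta (2 / 3) (1 / 6) *
        (beta (2 / 3) (1 / 2) * beta (5 / 6) (1 / 3))) =
      4 * π ^ ((5 : ℝ) / 2) / √3 * (16 / 3 * (√π / Gamma (1 / 3)) ^ 9) := by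
  have := Gamma_pos_of_pos (by norm_num : (0 : ℝ) < 1 / 3)
  have hpi : π ^ 2 = √π ^ 4 := by rw [pow_mul √π 2 2, sq_sqrt pi_pos.le]
  rw [beta, beta, beta, beta, beta, pi_rpow_five_halves, hpi]
  norm_num only
  rw [Gamma_seven_sixths, Gamma_four_thirds, Gamma_five_sixths, Gamma_two_thirds, Gamma_sixth,
    Gamma_one_half_eq]
  field_simp
  rw [two_rpow_two_thirds_pow_three, sqrt_three_pow_four]
  norm_num

theorem sixteen_mul_integral_I0_mul_K0_pow_five_mul :
    16 * (∫ t in Ioi 0, I0 t * K0 t ^ 5 * t) = 2 * π ^ 2 / (3 * beta (1 / 3) (5 / 6)) *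
      (∑' n, ofReal (gaussCoeff (1 / 6) (1 / 3) (5 / 6) n) *
        betaMoment 1 (1 / 3) (1 / 2) (1 / 2) (1 / 3) 0 n).toReal := by
  have hbeta := beta_pos (by norm_num : (0 : ℝ) < 1 / 3) (by norm_num : (0 : ℝ) < 5 / 6)
  have hnonneg : 0 ≤ᵐ[volume.restrict (Ioi 0)] fun t ↦ (I0 t * K0 t) ^ 3 * t := by
    filter_upwards [ae_restrict_mem measurableSet_Ioi] with t ht
    exact mul_nonneg (pow_nonneg (mul_nonneg (I0_nonneg t) (K0_nonneg t)) 3) (le_of_lt ht)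
  have h := three_mul_integral_I0_mul_K0_pow_five_mul
  rw [integral_eq_lintegral_of_nonneg_ae hnonneg
      integrableOn_I0_mul_K0_pow_three_mul.aestronglyMeasurable,
    lintegral_I0_mul_K0_pow_three_eq_tsum_betaMoment_one, ENNReal.toReal_mul,
    ENNReal.toReal_ofReal (by positivity)] at h
  field_simp at h ⊢
  linear_combination 2 * h

theorem sunrise_hypergeometric :
    16 * (∫ t in Ioi (0:ℝ), I0 t * (K0 t)^5 * t)
    = (4 * π ^ ((5:ℝ)/2) / Real.sqrt 3) *
        ((Real.sqrt 3 / 64) * (Gamma (1/3) / Real.sqrt π)^9 *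
            pFq [1/6, 1/3, 1/3, 1/2] [2/3, 5/6, 5/6] 1
          - (16/3) * (Real.sqrt π / Gamma (1/3))^9 *
            pFq [1/2, 2/3, 2/3, 5/6] [7/6, 7/6, 4/3] 1) := by
  rw [sixteen_mul_integral_I0_mul_K0_pow_five_mul,
    toReal_tsum_gaussCoeff_mul_betaMoment_zero_left]
  linear_combination
    pFq [1 / 6, 1 / 3, 1 / 3, 1 / 2] [2 / 3, 5 / 6, 5 / 6] 1 *
        pi_sq_mul_beta_eq_Gamma_third_div_sqrt_pi_pow_nine -
      pFq [1 / 2, 2 / 3, 2 / 3, 5 / 6] [7 / 6, 7 / 6, 4 / 3] 1 *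
        pi_sq_mul_beta_eq_sqrt_pi_div_Gamma_third_pow_nine
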